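/- arXiv:2602.10671 — 16 statements merged into one kernel-verified Lean document; each statement's English description precedes it below -/
import Mathlib

section
/- Let ((A,∘),P) be an averaging pre-Lie algebra over a field k of characteristic 0. Define a bilinear bracket on A by [x,y]_P := P(x)∘y − y∘P(x). Then (A,[·,·]_P) is a (left) Leibniz algebra, i.e. [[x,y]_P,z]_P + [y,[x,z]_P]_P = [x,[y,z]_P]_P for all x,y,z ∈ A. -/
/-- The bracket `[x,y]_P := P(x)∘y − y∘P(x)` induced by an averaging operator `P`
on a pre-Lie algebra `(A,∘)`. -/
def bracketP {k A : Type*} [Field k] [AddCommGroup A] [Module k A]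
    (mul : A →ₗ[k] A →ₗ[k] A) (P : A →ₗ[k] A) (x y : A) : A :=
  mul (P x) y - mul y (P x)

/-!
The induced bracket is `[x,y]_P = ⁅P x, y⁆` for the commutator `⁅x, y⁆ = x∘y - y∘x`, which is a
Lie bracket on a pre-Lie algebra. Averaging gives `P ⁅P x, y⁆ = ⁅P x, P y⁆`, so the Leibniz
identity for `x`, `y`, `z` is the Jacobi identity for `P x`, `P y`, `z`.
-/

/-- An averaging operator for a product, as a bare map; additivity is imposed separately. -/
structure IsAveragingOperator {A : Type*} [Mul A] (P : A → A) : Prop where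
  mul_eq_map_mul_left (x y : A) : P x * P y = P (P x * y)
  mul_eq_map_mul_right (x y : A) : P x * P y = P (x * P y)

/-- An embedding tensor (relative averaging operator) from a representation `M` of a Lie ring `L`
to `L`. It makes `⁅T m, n⁆` a Leibniz bracket on `M`. Linearity is not imposed. -/
def IsEmbeddingTensor {L M : Type*} [Bracket L L] [Bracket L M] (T : M → L) : Prop :=
  ∀ m n : M, T ⁅T m, n⁆ = ⁅T m, T n⁆

theorem IsEmbeddingTensor.leibniz {L M : Type*} [LieRing L] [AddCommGroup M] [LieRingModule L M]
    {T : M → L} (hT : IsEmbeddingTensor T) (x y z : M) :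
    ⁅T ⁅T x, y⁆, z⁆ + ⁅T y, ⁅T x, z⁆⁆ = ⁅T x, ⁅T y, z⁆⁆ := by
  rw [hT x y, ← leibniz_lie]

theorem IsAveragingOperator.isEmbeddingTensor {A : Type*} [NonUnitalNonAssocRing A] {P : A →+ A}
    (hP : IsAveragingOperator P) : IsEmbeddingTensor P := fun x y ↦
  calc P ⁅P x, y⁆ = P (P x * y) - P (y * P x) := map_sub P _ _
    _ = P x * P y - P y * P x := by rw [hP.mul_eq_map_mul_left x y, hP.mul_eq_map_mul_right y x]
    _ = ⁅P x, P y⁆ := (Ring.lie_def _ _).symm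

theorem induced_Leibniz_general {A : Type*} [LieAdmissibleRing A] {P : A →+ A}
    (hP : IsAveragingOperator P) (x y z : A) :
    ⁅P ⁅P x, y⁆, z⁆ + ⁅P y, ⁅P x, z⁆⁆ = ⁅P x, ⁅P y, z⁆⁆ :=
  hP.isEmbeddingTensor.leibniz x y z

/-- The left pre-Lie ring whose product is a given bilinear map, so that results about the
`LeftPreLieRing` class apply to unbundled products. -/
abbrev leftPreLieRingOfBilinear {R A : Type*} [CommSemiring R] [AddCommGroup A] [Module R A]
    (mul : A →ₗ[R] A →ₗ[R] A)
    (hpre : ∀ x y z : A,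
      mul (mul x y) z - mul x (mul y z) = mul (mul y x) z - mul y (mul x z)) :
    LeftPreLieRing A where
  mul x y := mul x y
  left_distrib x := map_add (mul x)
  right_distrib := mul.map_add₂
  zero_mul := mul.map_zero₂
  mul_zero x := map_zero (mul x)
  assoc_symm' := hpre

/-- Let `((A,∘),P)` be an averaging pre-Lie algebra over a field `k` of characteristic 0.
Then `(A,[·,·]_P)` is a (left) Leibniz algebra. -/
theorem induced_Leibniz {k A : Type*} [Field k] [CharZero k] [AddCommGroup A] [Module k A]
    (mul : A →ₗ[k] A →ₗ[k] A) (P : A →ₗ[k] A)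
    (hpre : ∀ x y z : A,
      mul (mul x y) z - mul x (mul y z) = mul (mul y x) z - mul y (mul x z))
    (havg1 : ∀ x y : A, mul (P x) (P y) = P (mul (P x) y))
    (havg2 : ∀ x y : A, mul (P x) (P y) = P (mul x (P y))) :
    ∀ x y z : A,
      bracketP mul P (bracketP mul P x y) z + bracketP mul P y (bracketP mul P x z)
        = bracketP mul P x (bracketP mul P y z) := by
  let := leftPreLieRingOfBilinear mul hpre
  exact induced_Leibniz_general (P := P.toAddMonoidHom) ⟨havg1, havg2⟩
end

section
/- Let ((A,∘),P) be an averaging pre-Lie algebra, (V,ρ,φ) a representation of the pre-Lie algebra (A,∘), and α : V → V a linear map. Define on A ⊕ V the product (x+u)∘♥(y+v) := x∘y + ρ(x)v + φ(y)u and the linear map P_{A⊕V}(x+v) := P(x) + α(v). Then (A ⊕ V, ∘♥, P_{A⊕V}) is an averaging pre-Lie algebra if and only if ((V,ρ,φ),α) is a representation of the averaging pre-Lie algebra ((A,∘),P). -/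
/-!
Each identity on `A ⊕ V` is additive in every argument. Its `A`-component is the same identity on
`A`, and its `V`-component is a sum of terms each depending on the `V`-part of exactly one argument.
Setting all `V`-parts but one to zero isolates these terms, and they are precisely the axioms of a
representation.
-/

namespace Stmt1

variable {k A V : Type*} [Field k] [CharZero k]
  [AddCommGroup A] [Module k A] [AddCommGroup V] [Module k V]

/-- The semidirect product multiplication `(x+u) ∘♥ (y+v) = x∘y + ρ(x)v + φ(y)u` on `A ⊕ V`. -/
def circH (mul : A →ₗ[k] A →ₗ[k] A) (ρ φ : A →ₗ[k] Module.End k V)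
    (p q : A × V) : A × V :=
  (mul p.1 q.1, ρ p.1 q.2 + φ q.1 p.2)

/-- The map `P_{A⊕V}(x+v) = P(x) + α(v)` on `A ⊕ V`. -/
def PH (P : A →ₗ[k] A) (α : V →ₗ[k] V) (p : A × V) : A × V := (P p.1, α p.2)

section SemidirectProduct

variable {R L M : Type*} [CommSemiring R] [AddCommMonoid L] [Module R L]
  [AddCommMonoid M] [Module R M]

/-- The bilinear product `(x+u) ∘♥ (y+v) = x∘y + ρ(x)v + φ(y)u` on `L ⊕ M`, over any
commutative semiring; over a field its values are those of `circH`. -/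
def semidirectMul (mul : L →ₗ[R] L →ₗ[R] L) (ρ φ : L →ₗ[R] Module.End R M) :
    L × M →ₗ[R] L × M →ₗ[R] L × M :=
  LinearMap.mk₂ R (fun p q => (mul p.1 q.1, ρ p.1 q.2 + φ q.1 p.2))
    (fun p p' q => by ext <;> simp [add_add_add_comm])
    (fun c p q => by ext <;> simp)
    (fun p q q' => by ext <;> simp [add_add_add_comm])
    (fun c p q => by ext <;> simp)

theorem semidirectMul_apply (mul : L →ₗ[R] L →ₗ[R] L) (ρ φ : L →ₗ[R] Module.End R M)
    (p q : L × M) :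
    semidirectMul mul ρ φ p q = (mul p.1 q.1, ρ p.1 q.2 + φ q.1 p.2) :=
  rfl

/-- The averaging identities `f(P x)(α v) = α(f(P x) v) = α(f(x)(α v))` for a bilinear action `f`.
An averaging operator `P` on `(L, ∘)` is the case where `f` is the product and `α = P`; the
conditions on `ρ` and `φ` in a representation of an averaging algebra are the cases `f = ρ, φ`. -/
def IsAveraging (f : L →ₗ[R] Module.End R M) (P : L →ₗ[R] L) (α : M →ₗ[R] M) : Prop :=
  ∀ x v, f (P x) (α v) = α (f (P x) v) ∧ f (P x) (α v) = α (f x (α v))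

theorem isAveraging_iff_chain {f : L →ₗ[R] Module.End R M} {P : L →ₗ[R] L} {α : M →ₗ[R] M} :
    IsAveraging f P α ↔
      ∀ x v, f (P x) (α v) = α (f (P x) v) ∧ α (f (P x) v) = α (f x (α v)) :=
  forall₂_congr fun _ _ => and_congr_right fun h => by rw [h]

theorem isAveraging_semidirectMul_iff {mul : L →ₗ[R] L →ₗ[R] L} {ρ φ : L →ₗ[R] Module.End R M}
    {P : L →ₗ[R] L} {α : M →ₗ[R] M} :
    IsAveraging (semidirectMul mul ρ φ) (P.prodMap α) (P.prodMap α) ↔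
      IsAveraging mul P P ∧ IsAveraging ρ P α ∧ IsAveraging φ P α := by
  constructor
  · intro h
    refine ⟨fun x y => ?_, fun x v => ?_, fun x v => ?_⟩
    · simpa [semidirectMul_apply] using h (x, 0) (y, 0)
    · simpa [semidirectMul_apply] using h (x, 0) (0, v)
    · simpa [semidirectMul_apply] using (h (0, v) (x, 0)).symm
  · rintro ⟨hmul, hρ, hφ⟩ ⟨x, u⟩ ⟨y, v⟩
    -- `φ` acts through the right factor, so its two identities trade places.
    constructor
    · simp only [semidirectMul_apply, LinearMap.prodMap_apply, map_add,
        (hmul x y).1, (hρ x v).1, (hφ y u).2]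
    · simp only [semidirectMul_apply, LinearMap.prodMap_apply, map_add,
        (hmul x y).2, (hρ x v).2, (hφ y u).1]

end SemidirectProduct

section PreLie

variable {R L M : Type*} [CommSemiring R] [AddCommGroup L] [Module R L]
  [AddCommGroup M] [Module R M]

/-- A bilinear product is (left) pre-Lie: its associator is symmetric in the first two arguments. -/
def IsPreLie (mul : L →ₗ[R] L →ₗ[R] L) : Prop :=
  ∀ x y z, mul (mul x y) z - mul x (mul y z) = mul (mul y x) z - mul y (mul x z)

/-- `(M, ρ, φ)` satisfies the axioms of a representation of the pre-Lie algebra `(L, mul)`, with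
`ρ` the left and `φ` the right action. That `mul` is pre-Lie is not part of the definition. -/
structure IsPreLieRep (mul : L →ₗ[R] L →ₗ[R] L) (ρ φ : L →ₗ[R] Module.End R M) : Prop where
  left_commutator : ∀ x y v, ρ (mul x y - mul y x) v = ρ x (ρ y v) - ρ y (ρ x v)
  right_mul : ∀ x y v, φ (mul x y) v = ρ x (φ y v) - φ y (ρ x v) + φ y (φ x v)

theorem isPreLie_semidirectMul_iff {mul : L →ₗ[R] L →ₗ[R] L}
    {ρ φ : L →ₗ[R] Module.End R M} :
    IsPreLie (semidirectMul mul ρ φ) ↔ IsPreLie mul ∧ IsPreLieRep mul ρ φ := by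
  constructor
  · intro h
    refine ⟨fun x y z => ?_, fun x y w => ?_, fun x z v => ?_⟩
    · simpa [semidirectMul_apply] using h (x, 0) (y, 0) (z, 0)
    · have hw : ρ (mul x y) w - ρ x (ρ y w) = ρ (mul y x) w - ρ y (ρ x w) := by
        simpa [semidirectMul_apply] using h (x, 0) (y, 0) (0, w)
      simpa only [map_sub, LinearMap.sub_apply] using sub_eq_sub_iff_sub_eq_sub.mp hw
    · have hv : φ z (ρ x v) - ρ x (φ z v) = φ z (φ x v) - φ (mul x z) v := by
        simpa [semidirectMul_apply] using h (x, 0) (0, v) (z, 0)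
      linear_combination (norm := abel) hv
  · rintro ⟨hmul, hrep⟩ ⟨x, u⟩ ⟨y, v⟩ ⟨z, w⟩
    have hw : ρ (mul x y) w - ρ (mul y x) w = ρ x (ρ y w) - ρ y (ρ x w) := by
      simpa only [map_sub, LinearMap.sub_apply] using hrep.left_commutator x y w
    refine Prod.ext (hmul x y z) ?_
    simp only [semidirectMul_apply, Prod.snd_sub, map_add, hrep.right_mul,
      sub_eq_iff_eq_add.mp hw]
    abel

theorem semidirect_iff_rep_general (mul : L →ₗ[R] L →ₗ[R] L) (P : L →ₗ[R] L)
    (ρ φ : L →ₗ[R] Module.End R M) (α : M →ₗ[R] M) :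
    IsPreLie (semidirectMul mul ρ φ) ∧
        IsAveraging (semidirectMul mul ρ φ) (P.prodMap α) (P.prodMap α) ↔
      (IsPreLie mul ∧ IsAveraging mul P P) ∧
        IsPreLieRep mul ρ φ ∧ IsAveraging ρ P α ∧ IsAveraging φ P α := by
  rw [isPreLie_semidirectMul_iff, isAveraging_semidirectMul_iff, and_and_and_comm]

end PreLie

/-- Let `((A,∘),P)` be an averaging pre-Lie algebra, `(V,ρ,φ)` a representation of the pre-Lie
algebra `(A,∘)` and `α : V → V` a linear map.  Then `(A ⊕ V, ∘♥, P_{A⊕V})` is an averaging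
pre-Lie algebra if and only if `((V,ρ,φ),α)` is a representation of `((A,∘),P)`. -/
theorem semidirect_iff_rep (mul : A →ₗ[k] A →ₗ[k] A) (P : A →ₗ[k] A)
    (ρ φ : A →ₗ[k] Module.End k V) (α : V →ₗ[k] V)
    (hpre : ∀ x y z : A,
      mul (mul x y) z - mul x (mul y z) = mul (mul y x) z - mul y (mul x z))
    (havg1 : ∀ x y : A, mul (P x) (P y) = P (mul (P x) y))
    (havg2 : ∀ x y : A, mul (P x) (P y) = P (mul x (P y)))
    (hrep1 : ∀ (x y : A) (v : V), ρ (mul x y - mul y x) v = ρ x (ρ y v) - ρ y (ρ x v))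
    (hrep2 : ∀ (x y : A) (v : V),
      φ (mul x y) v = ρ x (φ y v) - φ y (ρ x v) + φ y (φ x v)) :
    ((∀ p q r : A × V,
        circH mul ρ φ (circH mul ρ φ p q) r - circH mul ρ φ p (circH mul ρ φ q r)
          = circH mul ρ φ (circH mul ρ φ q p) r - circH mul ρ φ q (circH mul ρ φ p r)) ∧
      (∀ p q : A × V,
        circH mul ρ φ (PH P α p) (PH P α q) = PH P α (circH mul ρ φ (PH P α p) q) ∧
        circH mul ρ φ (PH P α p) (PH P α q) = PH P α (circH mul ρ φ p (PH P α q))))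
      ↔
    ((∀ (x : A) (v : V), ρ (P x) (α v) = α (ρ (P x) v) ∧ α (ρ (P x) v) = α (ρ x (α v))) ∧
      (∀ (x : A) (v : V), φ (P x) (α v) = α (φ (P x) v) ∧ α (φ (P x) v) = α (φ x (α v)))) := by
  have hL : IsPreLie mul ∧ IsAveraging mul P P := ⟨hpre, fun x y => ⟨havg1 x y, havg2 x y⟩⟩
  -- `circH` and `PH` unfold to `semidirectMul` and `LinearMap.prodMap`.
  refine (semidirect_iff_rep_general mul P ρ φ α).trans ?_
  rw [and_iff_right hL, and_iff_right ⟨hrep1, hrep2⟩, isAveraging_iff_chain, isAveraging_iff_chain]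

end Stmt1
end

section
/- Let ((A,∘),P) be an averaging pre-Lie algebra, (V,ρ,φ) a finite-dimensional representation of the pre-Lie algebra (A,∘), and β : V → V a linear map. Then ((V*, ρ*−φ*, −φ*), β*) is a representation of the averaging pre-Lie algebra ((A,∘),P) if and only if for all x ∈ A and v ∈ V one has ρ(P(x))β(v) = β(ρ(P(x))v) = β(ρ(x)β(v)) and φ(P(x))β(v) = β(φ(P(x))v) = β(φ(x)β(v)). -/
namespace Stmt2

variable {k A V : Type*} [Field k] [CharZero k]
  [AddCommGroup A] [Module k A] [AddCommGroup V] [Module k V]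

/-- `(V,ρ,φ)` is a representation of the pre-Lie algebra `(A,∘)`. -/
def IsRep (mul : A →ₗ[k] A →ₗ[k] A) (ρ φ : A →ₗ[k] Module.End k V) : Prop :=
  (∀ (x y : A) (v : V), ρ (mul x y - mul y x) v = ρ x (ρ y v) - ρ y (ρ x v)) ∧
  (∀ (x y : A) (v : V), φ (mul x y) v = ρ x (φ y v) - φ y (ρ x v) + φ y (φ x v))

/-- `((V,ρ,φ),α)` is a representation of the averaging pre-Lie algebra `((A,∘),P)`. -/
def IsAvgRep (mul : A →ₗ[k] A →ₗ[k] A) (P : A →ₗ[k] A)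
    (ρ φ : A →ₗ[k] Module.End k V) (α : V →ₗ[k] V) : Prop :=
  IsRep mul ρ φ ∧
  (∀ (x : A) (v : V), ρ (P x) (α v) = α (ρ (P x) v) ∧ α (ρ (P x) v) = α (ρ x (α v))) ∧
  (∀ (x : A) (v : V), φ (P x) (α v) = α (φ (P x) v) ∧ α (φ (P x) v) = α (φ x (α v)))

/-- Transpose a family of endomorphisms of `V` to a family of endomorphisms of `V*`:
`(dualTr f) x = (f x)ᵗ`, i.e. `⟨(dualTr f)(x) ξ, v⟩ = ⟨ξ, f(x) v⟩`.  In particular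
`ρ* = dualTr (−ρ)`, `ρ* − φ* = dualTr (φ − ρ)` and `−φ* = dualTr φ`. -/
noncomputable def dualTr (f : A →ₗ[k] Module.End k V) :
    A →ₗ[k] Module.End k (Module.Dual k V) :=
  (Module.Dual.transpose (R := k)).comp f

/-!
Transposition `f ↦ fᵗ` is an injective anti-homomorphism `End V → End V*`, so each axiom of the
dual structure `(ρ* − φ*, −φ*) = ((φ − ρ)ᵗ, φᵗ)` is an identity between endomorphisms of `V`. The
axiom for `φᵗ` turns into the axiom for `φ`; given that one, the axiom for `(φ − ρ)ᵗ` turns into the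
axiom for `ρ`. The averaging identities are self-dual and linear in the family of endomorphisms, so
once they hold for `φ` they hold for `φ − ρ` exactly when they hold for `ρ`.
-/

open Module.Dual (transpose)

section Transpose

variable {R M N : Type*} [CommSemiring R] [AddCommMonoid M] [Module R M]
  [AddCommMonoid N] [Module R N]

theorem transpose_injective [Module.Projective R N] :
    Function.Injective (transpose : (M →ₗ[R] N) → Module.Dual R N →ₗ[R] Module.Dual R M) := by
  intro f g h
  ext v
  exact Module.eval_apply_injective R <|
    LinearMap.ext fun ξ ↦ LinearMap.congr_fun (LinearMap.congr_fun h ξ) v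

theorem transpose_mul (f g : Module.End R M) :
    (transpose (f * g) : Module.End R (Module.Dual R M)) = transpose g * transpose f :=
  Module.Dual.transpose_comp f g

end Transpose

theorem lie_transpose {R M : Type*} [CommRing R] [AddCommGroup M] [Module R M]
    (f g : Module.End R M) :
    ⁅(transpose f : Module.End R (Module.Dual R M)), transpose g⁆ = transpose ⁅g, f⁆ := by
  simp only [Ring.lie_def, map_sub, transpose_mul]

section Averaging

variable {R L M : Type*} [CommSemiring R] [AddCommMonoid L] [Module R L]
  [AddCommMonoid M] [Module R M]

/-- The families `f` of endomorphisms of `M` satisfying the averaging identities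
`f(P(x))α(v) = α(f(P(x))v) = α(f(x)α(v))`, which both components of a representation of an averaging
pre-Lie algebra must satisfy. Being linear in `f`, they cut out a submodule. -/
def averagingFamilies (P : L →ₗ[R] L) (α : Module.End R M) :
    Submodule R (L →ₗ[R] Module.End R M) where
  carrier := {f | ∀ (x : L) (v : M),
    f (P x) (α v) = α (f (P x) v) ∧ α (f (P x) v) = α (f x (α v))}
  zero_mem' x v := by simp
  add_mem' hf hg x v := by
    simp only [LinearMap.add_apply, map_add, hf x v, hg x v, and_self]
  smul_mem' c f hf x v := by
    simp only [LinearMap.smul_apply, map_smul, hf x v, and_self]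

variable {P : L →ₗ[R] L} {α : Module.End R M} {f : L →ₗ[R] Module.End R M}

theorem mem_averagingFamilies_iff :
    f ∈ averagingFamilies P α ↔
      ∀ x, f (P x) * α = α * f (P x) ∧ α * f (P x) = α * f x * α := by
  simp only [LinearMap.ext_iff, ← forall_and]
  rfl

theorem transpose_comp_mem_averagingFamilies_iff [Module.Projective R M] :
    transpose ∘ₗ f ∈ averagingFamilies P (transpose α) ↔ f ∈ averagingFamilies P α := by
  simp only [mem_averagingFamilies_iff, LinearMap.comp_apply, ← transpose_mul,
    transpose_injective.eq_iff, ← mul_assoc]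
  refine forall_congr' fun x ↦ ?_
  rw [eq_comm (a := α * f (P x))]
  exact and_congr_right fun h ↦ by rw [h]

end Averaging

section Representation

omit [CharZero k]

variable {mul : A →ₗ[k] A →ₗ[k] A} {P : A →ₗ[k] A} {ρ φ : A →ₗ[k] Module.End k V}

theorem isRep_iff_lie :
    IsRep mul ρ φ ↔
      (∀ x y, ρ (mul x y - mul y x) = ⁅ρ x, ρ y⁆) ∧
      (∀ x y, φ (mul x y) = ⁅ρ x, φ y⁆ + φ y * φ x) := by
  simp only [LinearMap.ext_iff]
  rfl

theorem isAvgRep_iff_mem_averagingFamilies {α : Module.End k V} :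
    IsAvgRep mul P ρ φ α ↔
      IsRep mul ρ φ ∧ ρ ∈ averagingFamilies P α ∧ φ ∈ averagingFamilies P α :=
  Iff.rfl

theorem dualTr_apply (f : A →ₗ[k] Module.End k V) (x : A) : dualTr f x = transpose (f x) :=
  rfl

theorem dualTr_mem_averagingFamilies_iff {f : A →ₗ[k] Module.End k V} {α : Module.End k V} :
    dualTr f ∈ averagingFamilies P α.dualMap ↔ f ∈ averagingFamilies P α :=
  transpose_comp_mem_averagingFamilies_iff

theorem dualTr_map_mul_iff (x y : A) :
    dualTr φ (mul x y) = ⁅dualTr (φ - ρ) x, dualTr φ y⁆ + dualTr φ y * dualTr φ x ↔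
      φ (mul x y) = ⁅ρ x, φ y⁆ + φ y * φ x := by
  have lie_sub_add_mul : ⁅φ y, φ x - ρ x⁆ + φ x * φ y = ⁅ρ x, φ y⁆ + φ y * φ x := by
    simp only [Ring.lie_def]
    noncomm_ring
  simp only [dualTr_apply, lie_transpose, ← transpose_mul, ← map_add, LinearMap.sub_apply,
    lie_sub_add_mul, transpose_injective.eq_iff]

theorem map_commutator_eq_lie_add_lie
    (hφ : ∀ x y, φ (mul x y) = ⁅ρ x, φ y⁆ + φ y * φ x) (x y : A) :
    φ (mul x y - mul y x) = ⁅φ y - ρ y, φ x - ρ x⁆ + ⁅ρ x, ρ y⁆ := by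
  simp only [map_sub, hφ, Ring.lie_def]
  noncomm_ring

theorem dualTr_map_commutator_iff
    (hφ : ∀ x y, φ (mul x y) = ⁅ρ x, φ y⁆ + φ y * φ x) (x y : A) :
    dualTr (φ - ρ) (mul x y - mul y x) = ⁅dualTr (φ - ρ) x, dualTr (φ - ρ) y⁆ ↔
      ρ (mul x y - mul y x) = ⁅ρ x, ρ y⁆ := by
  simp only [dualTr_apply, lie_transpose, transpose_injective.eq_iff, LinearMap.sub_apply]
  rw [map_commutator_eq_lie_add_lie hφ, sub_eq_iff_eq_add, add_right_inj, eq_comm]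

theorem isRep_dualTr_iff : IsRep mul (dualTr (φ - ρ)) (dualTr φ) ↔ IsRep mul ρ φ := by
  simp only [isRep_iff_lie, dualTr_map_mul_iff]
  exact and_congr_left fun hφ ↦ forall₂_congr (dualTr_map_commutator_iff hφ)

theorem dual_rep_iff_general {β : Module.End k V} :
    IsAvgRep mul P (dualTr (φ - ρ)) (dualTr φ) β.dualMap ↔ IsAvgRep mul P ρ φ β := by
  simp only [isAvgRep_iff_mem_averagingFamilies, isRep_dualTr_iff,
    dualTr_mem_averagingFamilies_iff]
  exact and_congr_right' (and_congr_left fun hφ ↦ Submodule.sub_mem_iff_right _ hφ)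

end Representation

/-- Let `((A,∘),P)` be an averaging pre-Lie algebra, `(V,ρ,φ)` a finite-dimensional
representation of `(A,∘)`, and `β : V → V` linear.  Then `((V*, ρ*−φ*, −φ*), β*)` is a
representation of `((A,∘),P)` iff `ρ(P(x))β(v) = β(ρ(P(x))v) = β(ρ(x)β(v))` and
`φ(P(x))β(v) = β(φ(P(x))v) = β(φ(x)β(v))` for all `x ∈ A`, `v ∈ V`. -/
theorem dual_rep_iff [FiniteDimensional k V]
    (mul : A →ₗ[k] A →ₗ[k] A) (P : A →ₗ[k] A)
    (ρ φ : A →ₗ[k] Module.End k V) (β : V →ₗ[k] V)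
    (hpre : ∀ x y z : A,
      mul (mul x y) z - mul x (mul y z) = mul (mul y x) z - mul y (mul x z))
    (havg1 : ∀ x y : A, mul (P x) (P y) = P (mul (P x) y))
    (havg2 : ∀ x y : A, mul (P x) (P y) = P (mul x (P y)))
    (hrep : IsRep mul ρ φ) :
    IsAvgRep mul P (dualTr (φ - ρ)) (dualTr φ) β.dualMap
      ↔
    ((∀ (x : A) (v : V), ρ (P x) (β v) = β (ρ (P x) v) ∧ β (ρ (P x) v) = β (ρ x (β v))) ∧
     (∀ (x : A) (v : V), φ (P x) (β v) = β (φ (P x) v) ∧ β (φ (P x) v) = β (φ x (β v)))) :=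
  dual_rep_iff_general.trans (and_iff_right hrep)

end Stmt2
end

section
/- Let ((A,∘),P) be a finite-dimensional averaging pre-Lie algebra and S : A → A a linear map. Then ((A*, L*−R*, −R*), S*) is a representation of the averaging pre-Lie algebra ((A,∘),P) if and only if for all x,y ∈ A one has P(x)∘S(y) = S(P(x)∘y) = S(x∘S(y)) and S(x)∘P(y) = S(x∘P(y)) = S(S(x)∘y). -/
/-!
For endomorphisms, transposition is injective and reverses products. The averaging conditions
`f(Px) α = α f(Px) = α f(x) α` are symmetric under reversing products, and the equations of a
representation `(V, ρ, φ)` are carried to those of `(V*, ρ* - φ*, -φ*)`. Hence the dual is an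
averaging representation exactly when the original is. Applied to the regular representation
`(A, L, R)` with the endomorphism `S`, whose representation equations are the pre-Lie identity,
this leaves the averaging conditions on `L` and `R`, which are the identities for `S`.
-/

namespace Stmt3

variable {k A V : Type*} [Field k] [CharZero k]
  [AddCommGroup A] [Module k A] [AddCommGroup V] [Module k V]

/-- `(V,ρ,φ)` is a representation of the pre-Lie algebra `(A,∘)`. -/
def IsRep (mul : A →ₗ[k] A →ₗ[k] A) (ρ φ : A →ₗ[k] Module.End k V) : Prop :=
  (∀ (x y : A) (v : V), ρ (mul x y - mul y x) v = ρ x (ρ y v) - ρ y (ρ x v)) ∧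
  (∀ (x y : A) (v : V), φ (mul x y) v = ρ x (φ y v) - φ y (ρ x v) + φ y (φ x v))

/-- `((V,ρ,φ),α)` is a representation of the averaging pre-Lie algebra `((A,∘),P)`. -/
def IsAvgRep (mul : A →ₗ[k] A →ₗ[k] A) (P : A →ₗ[k] A)
    (ρ φ : A →ₗ[k] Module.End k V) (α : V →ₗ[k] V) : Prop :=
  IsRep mul ρ φ ∧
  (∀ (x : A) (v : V), ρ (P x) (α v) = α (ρ (P x) v) ∧ α (ρ (P x) v) = α (ρ x (α v))) ∧
  (∀ (x : A) (v : V), φ (P x) (α v) = α (φ (P x) v) ∧ α (φ (P x) v) = α (φ x (α v)))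

/-- Transpose a family of endomorphisms of `V` to a family of endomorphisms of `V*`.
With `L = mul` and `R = mul.flip`, one has `L* − R* = dualTr (R − L)` and `−R* = dualTr R`,
where `⟨L*_x ξ, y⟩ = −⟨ξ, x∘y⟩` and `⟨R*_x ξ, y⟩ = −⟨ξ, y∘x⟩`. -/
noncomputable def dualTr (f : A →ₗ[k] Module.End k V) :
    A →ₗ[k] Module.End k (Module.Dual k V) :=
  (Module.Dual.transpose (R := k)).comp f

section Transpose

variable {R M : Type*} [CommRing R] [AddCommGroup M] [Module R M]

/-- Transposition of endomorphisms, with `Module.End` as source and target so that the ring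
structures on both sides are available. -/
def transposeEnd : Module.End R M →ₗ[R] Module.End R (Module.Dual R M) :=
  Module.Dual.transpose

theorem transposeEnd_injective [Module.Projective R M] :
    Function.Injective (transposeEnd (R := R) (M := M)) := fun _ _ h =>
  LinearMap.ext fun v => Module.eval_apply_injective R <|
    LinearMap.ext fun ξ => LinearMap.congr_fun (LinearMap.congr_fun h ξ) v

theorem transposeEnd_mul (f g : Module.End R M) :
    transposeEnd (f * g) = transposeEnd g * transposeEnd f :=
  Module.Dual.transpose_comp f g

end Transpose

section Representation

omit [CharZero k]

variable {mul : A →ₗ[k] A →ₗ[k] A} {P : A →ₗ[k] A} {ρ φ f g : A →ₗ[k] Module.End k V}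
  {α : Module.End k V}

theorem dualTr_apply (f : A →ₗ[k] Module.End k V) (x : A) :
    dualTr f x = transposeEnd (f x) :=
  rfl

theorem dualMap_eq_transposeEnd (α : Module.End k V) : α.dualMap = transposeEnd α :=
  rfl

theorem isRep_iff_end :
    IsRep mul ρ φ ↔
      (∀ x y, ρ (mul x y - mul y x) = ρ x * ρ y - ρ y * ρ x) ∧
      ∀ x y, φ (mul x y) = ρ x * φ y - φ y * ρ x + φ y * φ x := by
  simp only [IsRep, LinearMap.ext_iff, LinearMap.add_apply, LinearMap.sub_apply,
    Module.End.mul_apply]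

theorem isRep_dualTr_iff :
    IsRep mul (dualTr f) (dualTr g) ↔
      (∀ x y, f (mul x y - mul y x) = f y * f x - f x * f y) ∧
      ∀ x y, g (mul x y) = g y * f x - f x * g y + g x * g y := by
  rw [isRep_iff_end]
  refine and_congr (forall₂_congr fun x y => ?_) (forall₂_congr fun x y => ?_) <;>
  · refine Iff.trans ?_ transposeEnd_injective.eq_iff
    simp only [dualTr_apply, map_sub, map_add, transposeEnd_mul]

theorem isRep_dualTr_sub_iff : IsRep mul (dualTr (φ - ρ)) (dualTr φ) ↔ IsRep mul ρ φ := by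
  have right_action_iff :
      (∀ x y, φ (mul x y) = φ y * (φ - ρ) x - (φ - ρ) x * φ y + φ x * φ y) ↔
        ∀ x y, φ (mul x y) = ρ x * φ y - φ y * ρ x + φ y * φ x :=
    forall₂_congr fun x y => Eq.congr_right <| by
      simp only [LinearMap.sub_apply]
      noncomm_ring
  rw [isRep_dualTr_iff, isRep_iff_end, right_action_iff]
  refine and_congr_left fun hφ => forall₂_congr fun x y => ?_
  have φ_commutator : φ (mul x y - mul y x) =
      (φ - ρ) y * (φ - ρ) x - (φ - ρ) x * (φ - ρ) y + (ρ x * ρ y - ρ y * ρ x) := by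
    rw [map_sub, hφ, hφ]
    simp only [LinearMap.sub_apply]
    noncomm_ring
  rw [LinearMap.sub_apply, φ_commutator, add_sub_assoc, add_eq_left, sub_eq_zero, eq_comm]

/-- The averaging condition relating `P : A → A` and `α : V → V` through a single family `f` of
endomorphisms of `V`. It is stated in the algebra `End(V)` so that it can be transposed. -/
def IsAveragingFamily (P : A →ₗ[k] A) (f : A →ₗ[k] Module.End k V) (α : Module.End k V) : Prop :=
  ∀ x, f (P x) * α = α * f (P x) ∧ α * f (P x) = α * f x * α

theorem isAvgRep_iff_isAveragingFamily :
    IsAvgRep mul P ρ φ α ↔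
      IsRep mul ρ φ ∧ IsAveragingFamily P ρ α ∧ IsAveragingFamily P φ α := by
  simp only [IsAvgRep, IsAveragingFamily, LinearMap.ext_iff, Module.End.mul_apply, forall_and]

theorem isAveragingFamily_dualTr_iff :
    IsAveragingFamily P (dualTr f) α.dualMap ↔ IsAveragingFamily P f α := by
  refine forall_congr' fun x => ?_
  simp only [dualMap_eq_transposeEnd, dualTr_apply, ← transposeEnd_mul,
    transposeEnd_injective.eq_iff, ← mul_assoc]
  constructor <;> rintro ⟨comm, avg⟩ <;> exact ⟨comm.symm, comm.trans avg⟩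

theorem IsAveragingFamily.sub (hf : IsAveragingFamily P f α) (hg : IsAveragingFamily P g α) :
    IsAveragingFamily P (f - g) α := fun x => by
  simp only [LinearMap.sub_apply, mul_sub, sub_mul, (hf x).1, (hg x).1, (hf x).2, (hg x).2,
    and_self]

theorem IsAveragingFamily.sub_iff_right (hf : IsAveragingFamily P f α) :
    IsAveragingFamily P (f - g) α ↔ IsAveragingFamily P g α :=
  ⟨fun h => sub_sub_cancel f g ▸ hf.sub h, hf.sub⟩

theorem isAvgRep_dualTr_sub_iff :
    IsAvgRep mul P (dualTr (φ - ρ)) (dualTr φ) α.dualMap ↔ IsAvgRep mul P ρ φ α := by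
  simp only [isAvgRep_iff_isAveragingFamily, isRep_dualTr_sub_iff, isAveragingFamily_dualTr_iff]
  exact and_congr_right' (and_congr_left IsAveragingFamily.sub_iff_right)

theorem isRep_regular
    (hpre : ∀ x y z : A,
      mul (mul x y) z - mul x (mul y z) = mul (mul y x) z - mul y (mul x z)) :
    IsRep mul mul mul.flip := by
  refine ⟨fun x y z => ?_, fun x y z => ?_⟩
  · rw [map_sub, LinearMap.sub_apply]
    linear_combination (norm := module) hpre x y z
  · simp only [LinearMap.flip_apply]
    linear_combination (norm := module) hpre x z y

theorem isAvgRep_regular_iff {S : A →ₗ[k] A}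
    (hpre : ∀ x y z : A,
      mul (mul x y) z - mul x (mul y z) = mul (mul y x) z - mul y (mul x z)) :
    IsAvgRep mul P mul mul.flip S ↔
    ((∀ x y : A, mul (P x) (S y) = S (mul (P x) y) ∧ S (mul (P x) y) = S (mul x (S y))) ∧
     (∀ x y : A, mul (S x) (P y) = S (mul x (P y)) ∧ S (mul x (P y)) = S (mul (S x) y))) :=
  (and_iff_right (isRep_regular hpre)).trans (and_congr_right' forall_comm)

theorem coregular_S_iff_general {S : A →ₗ[k] A}
    (hpre : ∀ x y z : A,
      mul (mul x y) z - mul x (mul y z) = mul (mul y x) z - mul y (mul x z)) :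
    IsAvgRep mul P (dualTr (mul.flip - mul)) (dualTr mul.flip) S.dualMap
      ↔
    ((∀ x y : A, mul (P x) (S y) = S (mul (P x) y) ∧ S (mul (P x) y) = S (mul x (S y))) ∧
     (∀ x y : A, mul (S x) (P y) = S (mul x (P y)) ∧ S (mul x (P y)) = S (mul (S x) y))) :=
  isAvgRep_dualTr_sub_iff.trans (isAvgRep_regular_iff hpre)

end Representation

/-- Let `((A,∘),P)` be a finite-dimensional averaging pre-Lie algebra and `S : A → A`
linear.  Then `((A*, L*−R*, −R*), S*)` is a representation of `((A,∘),P)` iff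
`P(x)∘S(y) = S(P(x)∘y) = S(x∘S(y))` and `S(x)∘P(y) = S(x∘P(y)) = S(S(x)∘y)`
for all `x,y ∈ A`. -/
theorem coregular_S_iff [FiniteDimensional k A]
    (mul : A →ₗ[k] A →ₗ[k] A) (P : A →ₗ[k] A) (S : A →ₗ[k] A)
    (hpre : ∀ x y z : A,
      mul (mul x y) z - mul x (mul y z) = mul (mul y x) z - mul y (mul x z))
    (havg1 : ∀ x y : A, mul (P x) (P y) = P (mul (P x) y))
    (havg2 : ∀ x y : A, mul (P x) (P y) = P (mul x (P y))) :
    IsAvgRep mul P (dualTr (mul.flip - mul)) (dualTr mul.flip) S.dualMap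
      ↔
    ((∀ x y : A, mul (P x) (S y) = S (mul (P x) y) ∧ S (mul (P x) y) = S (mul x (S y))) ∧
     (∀ x y : A, mul (S x) (P y) = S (mul x (P y)) ∧ S (mul x (P y)) = S (mul (S x) y))) :=
  coregular_S_iff_general hpre

end Stmt3
end

section
/- Let ((A,∘),P) be a finite-dimensional averaging pre-Lie algebra. Then ((A*, L*−R*, −R*), P*) is a representation of ((A,∘),P) (the coregular representation). -/
namespace Stmt4

variable {k A V : Type*} [Field k] [CharZero k]
  [AddCommGroup A] [Module k A] [AddCommGroup V] [Module k V]

/-- `(V,ρ,φ)` is a representation of the pre-Lie algebra `(A,∘)`. -/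
def IsRep (mul : A →ₗ[k] A →ₗ[k] A) (ρ φ : A →ₗ[k] Module.End k V) : Prop :=
  (∀ (x y : A) (v : V), ρ (mul x y - mul y x) v = ρ x (ρ y v) - ρ y (ρ x v)) ∧
  (∀ (x y : A) (v : V), φ (mul x y) v = ρ x (φ y v) - φ y (ρ x v) + φ y (φ x v))

/-- `((V,ρ,φ),α)` is a representation of the averaging pre-Lie algebra `((A,∘),P)`. -/
def IsAvgRep (mul : A →ₗ[k] A →ₗ[k] A) (P : A →ₗ[k] A)
    (ρ φ : A →ₗ[k] Module.End k V) (α : V →ₗ[k] V) : Prop :=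
  IsRep mul ρ φ ∧
  (∀ (x : A) (v : V), ρ (P x) (α v) = α (ρ (P x) v) ∧ α (ρ (P x) v) = α (ρ x (α v))) ∧
  (∀ (x : A) (v : V), φ (P x) (α v) = α (φ (P x) v) ∧ α (φ (P x) v) = α (φ x (α v)))

/-- Transpose a family of endomorphisms of `V` to a family of endomorphisms of `V*`.
With `L = mul` and `R = mul.flip`, one has `L* − R* = dualTr (R − L)` and `−R* = dualTr R`,
where `⟨L*_x ξ, y⟩ = −⟨ξ, x∘y⟩` and `⟨R*_x ξ, y⟩ = −⟨ξ, y∘x⟩`. -/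
noncomputable def dualTr (f : A →ₗ[k] Module.End k V) :
    A →ₗ[k] Module.End k (Module.Dual k V) :=
  (Module.Dual.transpose (R := k)).comp f

/- Transposition reverses products, so it negates commutators, and the dual of a representation
`(V, ρ, φ)` is `(V*, ρ* - φ*, -φ*)`: the Lie identity for `ρ* - φ*` holds because `ρ - φ` is again a
representation of the commutator Lie algebra. Reversing products preserves the averaging identities
for `ρ` and `φ`, so these dualize as well. The coregular representation is the dual of the regular
one `((A, L, R), P)`. -/

section

omit [CharZero k]

/-- A bilinear product is (left) pre-Lie when its associator is symmetric in the first two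
arguments. The product is a bilinear map, as in `IsRep`, rather than an instance. -/
def IsPreLie (mul : A →ₗ[k] A →ₗ[k] A) : Prop :=
  ∀ x y z : A, mul (mul x y) z - mul x (mul y z) = mul (mul y x) z - mul y (mul x z)

/-- `P` is an averaging operator for the product `mul`. The two equalities express the two-sided
condition `P x ∘ P y = P (P x ∘ y) = P (x ∘ P y)`. -/
def IsAveraging (mul : A →ₗ[k] A →ₗ[k] A) (P : A →ₗ[k] A) : Prop :=
  ∀ x y : A, mul (P x) (P y) = P (mul (P x) y) ∧ mul (P x) (P y) = P (mul x (P y))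

variable {mul : A →ₗ[k] A →ₗ[k] A} {P : A →ₗ[k] A} {ρ φ : A →ₗ[k] Module.End k V}

theorem dualTr_apply_apply (f : A →ₗ[k] Module.End k V) (x : A) (ξ : Module.Dual k V) (v : V) :
    dualTr f x ξ v = ξ (f x v) :=
  rfl

theorem IsRep.sub_apply_commutator (h : IsRep mul ρ φ) (x y : A) :
    (φ - ρ) (mul x y - mul y x) = ⁅(φ - ρ) y, (φ - ρ) x⁆ := by
  ext v
  have hρ := h.1 x y v
  have hφ : φ (mul x y - mul y x) v =
      ρ x (φ y v) - φ y (ρ x v) + φ y (φ x v) - (ρ y (φ x v) - φ x (ρ y v) + φ x (φ y v)) := by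
    rw [map_sub, LinearMap.sub_apply, h.2, h.2]
  rw [LinearMap.sub_apply, LinearMap.sub_apply, hρ, hφ]
  simp only [Ring.lie_def, LinearMap.sub_apply, Module.End.mul_apply, map_sub]
  abel

theorem IsRep.dual (h : IsRep mul ρ φ) : IsRep mul (dualTr (φ - ρ)) (dualTr φ) := by
  refine ⟨fun x y ξ => ?_, fun x y ξ => ?_⟩ <;> ext v
  · rw [dualTr_apply_apply, h.sub_apply_commutator, Ring.lie_def]
    exact map_sub ξ _ _
  · simp only [dualTr_apply_apply, LinearMap.add_apply, LinearMap.sub_apply, h.2, map_add, map_sub]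
    abel

theorem IsAvgRep.dual {α : V →ₗ[k] V} (h : IsAvgRep mul P ρ φ α) :
    IsAvgRep mul P (dualTr (φ - ρ)) (dualTr φ) α.dualMap := by
  obtain ⟨hrep, hρ, hφ⟩ := h
  refine ⟨hrep.dual, fun x ξ => ⟨?_, ?_⟩, fun x ξ => ⟨?_, ?_⟩⟩ <;> ext v <;>
    simp only [dualTr_apply_apply, LinearMap.dualMap_apply, LinearMap.sub_apply, map_sub,
      ← (hρ x v).1, ← (hρ x v).2, ← (hφ x v).1, ← (hφ x v).2]

theorem IsPreLie.isRep_regular (hmul : IsPreLie mul) : IsRep mul mul mul.flip := by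
  refine ⟨fun x y z => ?_, fun x y z => ?_⟩
  · rw [map_sub, LinearMap.sub_apply, sub_eq_sub_iff_sub_eq_sub]
    exact hmul x y z
  · calc mul.flip (mul x y) z
        = mul (mul z x) y - (mul (mul x z) y - mul x (mul z y)) := by
          rw [hmul x z y, sub_sub_cancel, LinearMap.flip_apply]
      _ = mul x (mul.flip y z) - mul.flip y (mul x z) + mul.flip y (mul.flip x z) := by
          simp only [LinearMap.flip_apply]
          abel

theorem IsAveraging.isAvgRep_regular (hP : IsAveraging mul P) (hmul : IsPreLie mul) :
    IsAvgRep mul P mul mul.flip P :=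
  ⟨hmul.isRep_regular,
    fun x y => ⟨(hP x y).1, (hP x y).1.symm.trans (hP x y).2⟩,
    fun x y => ⟨(hP y x).2, (hP y x).2.symm.trans (hP y x).1⟩⟩

theorem coregular_rep_general (hmul : IsPreLie mul) (hP : IsAveraging mul P) :
    IsAvgRep mul P (dualTr (mul.flip - mul)) (dualTr mul.flip) P.dualMap :=
  (hP.isAvgRep_regular hmul).dual

end

/-- Let `((A,∘),P)` be a finite-dimensional averaging pre-Lie algebra.  Then
`((A*, L*−R*, −R*), P*)` is a representation of `((A,∘),P)` (the coregular
representation). -/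
theorem coregular_rep [FiniteDimensional k A]
    (mul : A →ₗ[k] A →ₗ[k] A) (P : A →ₗ[k] A)
    (hpre : ∀ x y z : A,
      mul (mul x y) z - mul x (mul y z) = mul (mul y x) z - mul y (mul x z))
    (havg1 : ∀ x y : A, mul (P x) (P y) = P (mul (P x) y))
    (havg2 : ∀ x y : A, mul (P x) (P y) = P (mul x (P y))) :
    IsAvgRep mul P (dualTr (mul.flip - mul)) (dualTr mul.flip) P.dualMap :=
  coregular_rep_general hpre fun x y => ⟨havg1 x y, havg2 x y⟩

end Stmt4
end

section
/- Let ((A,∘),P) be an averaging pre-Lie algebra and let ((V,ρ,φ),β) be a finite-dimensional representation of ((A,∘),P). Then the following are equivalent: (1) ((V*, ρ*, φ*), β*) is a representation of ((A,∘),P); (2) ((V, ρ−φ, −φ), β) is a representation of ((A,∘),P); (3) φ(x)φ(y) = −φ(y)φ(x) for all x,y ∈ A. -/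
/-!
Call `(V*, ρ* - φ*, -φ*)` the dual of `(V, ρ, φ)`. Transposition is an injective antihomomorphism,
so `(V, ρ, φ)` satisfies the representation axioms if and only if its dual does. Since
`(V*, ρ*, φ*)` is the dual of `(V, ρ - φ, -φ)`, this gives `(1) ↔ (2)`.

For `(2) ↔ (3)`, write the axioms as `ρ (x ∘ y - y ∘ x) = ⁅ρ x, ρ y⁆` and
`φ (x ∘ y) = ⁅ρ x, φ y⁆ + φ y * φ x`, with commutators in `End V`. Given the second axiom, the first
one holds for `ρ` if and only if it holds for `ρ - φ`, and the two sides of the second axiom for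
`(ρ - φ, -φ)` differ by `φ x * φ y + φ y * φ x`.

The averaging identities are linear in the action and reversed by transposition into themselves,
so they carry over in both equivalences.
-/

namespace Stmt5

variable {k A V : Type*} [Field k] [CharZero k]
  [AddCommGroup A] [Module k A] [AddCommGroup V] [Module k V]

/-- `(V,ρ,φ)` is a representation of the pre-Lie algebra `(A,∘)`. -/
def IsRep (mul : A →ₗ[k] A →ₗ[k] A) (ρ φ : A →ₗ[k] Module.End k V) : Prop :=
  (∀ (x y : A) (v : V), ρ (mul x y - mul y x) v = ρ x (ρ y v) - ρ y (ρ x v)) ∧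
  (∀ (x y : A) (v : V), φ (mul x y) v = ρ x (φ y v) - φ y (ρ x v) + φ y (φ x v))

/-- `((V,ρ,φ),α)` is a representation of the averaging pre-Lie algebra `((A,∘),P)`. -/
def IsAvgRep (mul : A →ₗ[k] A →ₗ[k] A) (P : A →ₗ[k] A)
    (ρ φ : A →ₗ[k] Module.End k V) (α : V →ₗ[k] V) : Prop :=
  IsRep mul ρ φ ∧
  (∀ (x : A) (v : V), ρ (P x) (α v) = α (ρ (P x) v) ∧ α (ρ (P x) v) = α (ρ x (α v))) ∧
  (∀ (x : A) (v : V), φ (P x) (α v) = α (φ (P x) v) ∧ α (φ (P x) v) = α (φ x (α v)))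

/-- Transpose a family of endomorphisms of `V` to a family of endomorphisms of `V*`.
In particular `ρ* = dualTr (−ρ)` where `⟨ρ*(x) ξ, v⟩ = −⟨ξ, ρ(x) v⟩`. -/
noncomputable def dualTr (f : A →ₗ[k] Module.End k V) :
    A →ₗ[k] Module.End k (Module.Dual k V) :=
  (Module.Dual.transpose (R := k)).comp f

section AssociativeValued

variable {R M E : Type*} [CommRing R] [AddCommGroup M] [Module R M] [Ring E] [Module R E]
  {mul : M →ₗ[R] M →ₗ[R] M} {P : M →ₗ[R] M} {ρ φ f g : M →ₗ[R] E} {α : E}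

/-- The first representation axiom, `ρ` being a representation of the commutator bracket of `mul`,
for maps into an arbitrary associative ring in place of `End V`. -/
def IsLieRep (mul : M →ₗ[R] M →ₗ[R] M) (ρ : M →ₗ[R] E) : Prop :=
  ∀ x y, ρ (mul x y - mul y x) = ⁅ρ x, ρ y⁆

/-- The second representation axiom, relating the right action `φ` to the left action `ρ`,
for maps into an arbitrary associative ring in place of `End V`. -/
def IsRightAction (mul : M →ₗ[R] M →ₗ[R] M) (ρ φ : M →ₗ[R] E) : Prop :=
  ∀ x y, φ (mul x y) = ⁅ρ x, φ y⁆ + φ y * φ x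

/-- Compatibility of an action `f` with an operator `P` on the algebra and `α` on the module,
the latter being an element of the associative ring in which `f` takes its values. -/
def IsAveragingCompatible (P : M →ₗ[R] M) (f : M →ₗ[R] E) (α : E) : Prop :=
  ∀ x, f (P x) * α = α * f (P x) ∧ α * f (P x) = α * f x * α

theorem IsRightAction.isLieRep_sub_iff (h : IsRightAction mul ρ φ) :
    IsLieRep mul (ρ - φ) ↔ IsLieRep mul ρ := by
  have map_commutator (x y : M) :
      φ (mul x y - mul y x) = ⁅ρ x, ρ y⁆ - ⁅ρ x - φ x, ρ y - φ y⁆ := by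
    simp only [map_sub, h x y, h y x, Ring.lie_def]
    noncomm_ring
  simp only [IsLieRep, LinearMap.sub_apply, map_commutator, sub_eq_iff_eq_add, add_sub_cancel]

theorem IsRightAction.sub_neg_iff (h : IsRightAction mul ρ φ) :
    IsRightAction mul (ρ - φ) (-φ) ↔ ∀ x y, φ x * φ y = -(φ y * φ x) := by
  refine forall₂_congr fun x y => ?_
  have defect : ⁅(ρ - φ) x, (-φ) y⁆ + (-φ) y * (-φ) x - (-φ) (mul x y)
      = φ x * φ y + φ y * φ x := by
    simp only [LinearMap.sub_apply, LinearMap.neg_apply, h x y, Ring.lie_def]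
    noncomm_ring
  rw [eq_comm, ← sub_eq_zero, defect, add_eq_zero_iff_eq_neg]

theorem IsAveragingCompatible.neg (hf : IsAveragingCompatible P f α) :
    IsAveragingCompatible P (-f) α := fun x => by
  simp only [LinearMap.neg_apply, neg_mul, mul_neg, hf x, and_self]

theorem IsAveragingCompatible.sub (hf : IsAveragingCompatible P f α)
    (hg : IsAveragingCompatible P g α) : IsAveragingCompatible P (f - g) α := fun x => by
  simp only [LinearMap.sub_apply, sub_mul, mul_sub, hf x, hg x, and_self]

theorem IsAveragingCompatible.sub_iff_right (hf : IsAveragingCompatible P f α) :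
    IsAveragingCompatible P (f - g) α ↔ IsAveragingCompatible P g α :=
  ⟨fun h => by simpa only [sub_sub_cancel] using hf.sub h, hf.sub⟩

end AssociativeValued

section Antihomomorphism

variable {R M E F : Type*} [CommRing R] [AddCommGroup M] [Module R M]
  [Ring E] [Module R E] [Ring F] [Module R F]
  {mul : M →ₗ[R] M →ₗ[R] M} {P : M →ₗ[R] M} {ρ φ f : M →ₗ[R] E} {α : E} {T : E →ₗ[R] F}

theorem map_lie_of_map_mul_rev (map_mul_rev : ∀ a b, T (a * b) = T b * T a) (a b : E) :
    T ⁅a, b⁆ = ⁅T b, T a⁆ := by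
  rw [Ring.lie_def, Ring.lie_def, map_sub, map_mul_rev, map_mul_rev]

theorem isLieRep_antihom_comp_neg_iff (map_mul_rev : ∀ a b, T (a * b) = T b * T a)
    (hT : Function.Injective T) : IsLieRep mul (T ∘ₗ (-ρ)) ↔ IsLieRep mul ρ := by
  refine forall₂_congr fun x y => ?_
  rw [LinearMap.comp_apply, LinearMap.comp_apply, LinearMap.comp_apply,
    ← map_lie_of_map_mul_rev map_mul_rev, hT.eq_iff]
  have lie_neg_neg : ⁅-ρ y, -ρ x⁆ = -⁅ρ x, ρ y⁆ := by
    simp only [Ring.lie_def]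
    noncomm_ring
  rw [LinearMap.neg_apply, LinearMap.neg_apply, LinearMap.neg_apply, lie_neg_neg, neg_inj]

theorem isRightAction_antihom_comp_iff (map_mul_rev : ∀ a b, T (a * b) = T b * T a)
    (hT : Function.Injective T) :
    IsRightAction mul (T ∘ₗ (φ - ρ)) (T ∘ₗ φ) ↔ IsRightAction mul ρ φ := by
  refine forall₂_congr fun x y => ?_
  have lie_add_mul : ⁅φ y, φ x - ρ x⁆ + φ x * φ y = ⁅ρ x, φ y⁆ + φ y * φ x := by
    simp only [Ring.lie_def]
    noncomm_ring
  simp only [LinearMap.comp_apply, LinearMap.sub_apply]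
  rw [← map_lie_of_map_mul_rev map_mul_rev, ← map_mul_rev, ← map_add, hT.eq_iff, lie_add_mul]

theorem isAveragingCompatible_antihom_comp_iff (map_mul_rev : ∀ a b, T (a * b) = T b * T a)
    (hT : Function.Injective T) :
    IsAveragingCompatible P (T ∘ₗ f) (T α) ↔ IsAveragingCompatible P f α := by
  refine forall_congr' fun x => ?_
  simp only [LinearMap.comp_apply, ← map_mul_rev, hT.eq_iff, ← mul_assoc]
  constructor <;> rintro ⟨h₁, h₂⟩ <;> exact ⟨h₁.symm, h₁.trans h₂⟩

end Antihomomorphism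

theorem transpose_injective {R M N : Type*} [CommRing R] [AddCommGroup M] [Module R M]
    [AddCommGroup N] [Module R N] [Module.Projective R N] :
    Function.Injective (Module.Dual.transpose : (M →ₗ[R] N) →ₗ[R] _) := by
  refine (injective_iff_map_eq_zero _).mpr fun a ha => LinearMap.ext fun v => ?_
  exact (Module.forall_dual_apply_eq_zero_iff R (a v)).mp fun ξ =>
    LinearMap.congr_fun (LinearMap.congr_fun ha ξ) v

section Dual

variable {K A V : Type*} [Field K] [AddCommGroup A] [Module K A] [AddCommGroup V] [Module K V]
  {mul : A →ₗ[K] A →ₗ[K] A} {P : A →ₗ[K] A} {ρ φ : A →ₗ[K] Module.End K V}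
  {α : Module.End K V}

theorem isRep_iff : IsRep mul ρ φ ↔ IsLieRep mul ρ ∧ IsRightAction mul ρ φ := by
  simp only [IsRep, IsLieRep, IsRightAction, LinearMap.ext_iff, Ring.lie_def,
    LinearMap.sub_apply, LinearMap.add_apply, Module.End.mul_apply]

theorem isAvgRep_iff : IsAvgRep mul P ρ φ α ↔
    IsRep mul ρ φ ∧ IsAveragingCompatible P ρ α ∧ IsAveragingCompatible P φ α := by
  simp only [IsAvgRep, IsAveragingCompatible, LinearMap.ext_iff, Module.End.mul_apply,
    forall_and]

theorem isRep_dualTr_iff : IsRep mul (dualTr (φ - ρ)) (dualTr φ) ↔ IsRep mul ρ φ := by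
  have lie_iff : IsLieRep mul (E := Module.End K (Module.Dual K V)) (dualTr (φ - ρ)) ↔
      IsLieRep mul (ρ - φ) := by
    rw [← neg_sub ρ φ]
    exact isLieRep_antihom_comp_neg_iff Module.Dual.transpose_comp transpose_injective
  have right_iff : IsRightAction mul (E := Module.End K (Module.Dual K V)) (dualTr (φ - ρ))
      (dualTr φ) ↔ IsRightAction mul ρ φ :=
    isRightAction_antihom_comp_iff Module.Dual.transpose_comp transpose_injective
  rw [isRep_iff, isRep_iff, lie_iff, right_iff]
  exact and_congr_left IsRightAction.isLieRep_sub_iff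

theorem isAvgRep_dualTr_iff :
    IsAvgRep mul P (dualTr (φ - ρ)) (dualTr φ) (LinearMap.dualMap α) ↔ IsAvgRep mul P ρ φ α := by
  have compat_iff (f : A →ₗ[K] Module.End K V) :
      IsAveragingCompatible (E := Module.End K (Module.Dual K V)) P (dualTr f)
        (LinearMap.dualMap α) ↔ IsAveragingCompatible P f α :=
    isAveragingCompatible_antihom_comp_iff Module.Dual.transpose_comp transpose_injective
  rw [isAvgRep_iff, isAvgRep_iff, isRep_dualTr_iff, compat_iff, compat_iff]
  exact and_congr_right' (and_congr_left IsAveragingCompatible.sub_iff_right)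

theorem isRep_sub_neg_iff (h : IsRep mul ρ φ) :
    IsRep mul (ρ - φ) (-φ) ↔ ∀ x y, φ x * φ y = -(φ y * φ x) := by
  obtain ⟨lie, right⟩ := isRep_iff.mp h
  rw [isRep_iff, right.isLieRep_sub_iff, right.sub_neg_iff, and_iff_right lie]

theorem isAvgRep_sub_neg_iff (h : IsAvgRep mul P ρ φ α) :
    IsAvgRep mul P (ρ - φ) (-φ) α ↔ ∀ x y, φ x * φ y = -(φ y * φ x) := by
  obtain ⟨rep, compat_ρ, compat_φ⟩ := isAvgRep_iff.mp h
  rw [isAvgRep_iff, isRep_sub_neg_iff rep,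
    and_iff_left ⟨compat_ρ.sub compat_φ, compat_φ.neg⟩]

theorem dual_rep_tfae_general (mul : A →ₗ[K] A →ₗ[K] A) (P : A →ₗ[K] A)
    (ρ φ : A →ₗ[K] Module.End K V) (β : V →ₗ[K] V) (hrep : IsAvgRep mul P ρ φ β) :
    (IsAvgRep mul P (dualTr (-ρ)) (dualTr (-φ)) β.dualMap
        ↔ IsAvgRep mul P (ρ - φ) (-φ) β) ∧
    (IsAvgRep mul P (ρ - φ) (-φ) β
        ↔ ∀ (x y : A) (v : V), φ x (φ y v) = -(φ y (φ x v))) := by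
  have neg_eq_sub : -ρ = -φ - (ρ - φ) := by abel
  constructor
  · rw [neg_eq_sub, isAvgRep_dualTr_iff]
  · simpa only [LinearMap.ext_iff, LinearMap.neg_apply, Module.End.mul_apply]
      using isAvgRep_sub_neg_iff hrep

end Dual

/-- Let `((A,∘),P)` be an averaging pre-Lie algebra and `((V,ρ,φ),β)` a finite-dimensional
representation of `((A,∘),P)`.  Then the following are equivalent:
(1) `((V*, ρ*, φ*), β*)` is a representation of `((A,∘),P)`;
(2) `((V, ρ−φ, −φ), β)` is a representation of `((A,∘),P)`;
(3) `φ(x)φ(y) = −φ(y)φ(x)` for all `x,y ∈ A`. -/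
theorem dual_rep_tfae [FiniteDimensional k V]
    (mul : A →ₗ[k] A →ₗ[k] A) (P : A →ₗ[k] A)
    (ρ φ : A →ₗ[k] Module.End k V) (β : V →ₗ[k] V)
    (hpre : ∀ x y z : A,
      mul (mul x y) z - mul x (mul y z) = mul (mul y x) z - mul y (mul x z))
    (havg1 : ∀ x y : A, mul (P x) (P y) = P (mul (P x) y))
    (havg2 : ∀ x y : A, mul (P x) (P y) = P (mul x (P y)))
    (hrep : IsAvgRep mul P ρ φ β) :
    (IsAvgRep mul P (dualTr (-ρ)) (dualTr (-φ)) β.dualMap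
        ↔ IsAvgRep mul P (ρ - φ) (-φ) β) ∧
    (IsAvgRep mul P (ρ - φ) (-φ) β
        ↔ ∀ (x y : A) (v : V), φ x (φ y v) = -(φ y (φ x v))) :=
  dual_rep_tfae_general mul P ρ φ β hrep

end Stmt5
end

section
/- Let ((V,ρ,φ),α) be a representation of an averaging pre-Lie algebra ((A,∘),P). Define ρ^L, ρ^R : A → End(V) by ρ^L(x) := ρ(P(x)) − φ(P(x)) and ρ^R(x)(ξ) := −ρ(x)(α(ξ)) + φ(x)(α(ξ)). Then (V; ρ^L, ρ^R) is a representation of the induced Leibniz algebra (A, [·,·]_P) with [x,y]_P = P(x)∘y − y∘P(x); that is, for all x,y ∈ A: ρ^L([x,y]_P) = ρ^L(x)ρ^L(y) − ρ^L(y)ρ^L(x), ρ^R([x,y]_P) = ρ^L(x)ρ^R(y) − ρ^R(y)ρ^L(x), and ρ^R(y)∘ρ^L(x) = −ρ^R(y)∘ρ^R(x) (composition of endomorphisms). -/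
/-!
The difference `δ = ρ - φ` represents the commutator `x ∘ y - y ∘ x` by commutators in `End V`,
and `[x, y]_P` is the commutator of `P x` with `y`. In these terms `ρ^L = δ ∘ P` and
`ρ^R x = -δ x * α`. Since `P` is averaging for the commutator as well, the first identity is `δ`
applied to the commutator of `P x` and `P y`. The second follows because `δ (P x)` commutes with
`α`, and the third from `α * δ (P x) = α * δ x * α`.
-/

namespace Stmt6

variable {k A V : Type*} [Field k] [CharZero k]
  [AddCommGroup A] [Module k A] [AddCommGroup V] [Module k V]

/-- The bracket `[x,y]_P := P(x)∘y − y∘P(x)` of the induced Leibniz algebra. -/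
def bracketP (mul : A →ₗ[k] A →ₗ[k] A) (P : A →ₗ[k] A) (x y : A) : A :=
  mul (P x) y - mul y (P x)

/-- `ρ^L(x) := ρ(P(x)) − φ(P(x))`. -/
def rhoL (ρ φ : A →ₗ[k] Module.End k V) (P : A →ₗ[k] A) (x : A) (ξ : V) : V :=
  ρ (P x) ξ - φ (P x) ξ

/-- `ρ^R(x)(ξ) := −ρ(x)(α(ξ)) + φ(x)(α(ξ))`. -/
def rhoR (ρ φ : A →ₗ[k] Module.End k V) (α : V →ₗ[k] V) (x : A) (ξ : V) : V :=
  -(ρ x (α ξ)) + φ x (α ξ)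

section LeibnizRepresentation

variable {R A V : Type*} [CommSemiring R]
  [AddCommGroup A] [Module R A] [AddCommGroup V] [Module R V]

/-- Maps `l`, `r` that make `V` a representation of the left Leibniz algebra with bracket `br`.
The Leibniz identity for `br` itself is not part of the notion. -/
structure IsLeibnizRep (br : A →ₗ[R] A →ₗ[R] A) (l r : A →ₗ[R] Module.End R V) : Prop where
  map_left (x y : A) : l (br x y) = ⁅l x, l y⁆
  map_right (x y : A) : r (br x y) = ⁅l x, r y⁆
  right_mul_left (x y : A) : r y * l x = -(r y * r x)

theorem IsLeibnizRep.of_averaging {br : A →ₗ[R] A →ₗ[R] A} {δ : A →ₗ[R] Module.End R V}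
    {P : A →ₗ[R] A} {α : Module.End R V}
    (map_br : ∀ x y, δ (br x y) = ⁅δ x, δ y⁆)
    (map_averaging : ∀ x y, P (br (P x) y) = br (P x) (P y))
    (commute : ∀ x, Commute (δ (P x)) α)
    (averaging_action : ∀ x, α * δ (P x) = α * (δ x * α)) :
    IsLeibnizRep (br ∘ₗ P) (δ ∘ₗ P) (-(LinearMap.mulRight R α ∘ₗ δ)) where
  map_left x y := by
    simp only [LinearMap.comp_apply, map_averaging, map_br]
  map_right x y :=
    calc -(δ (br (P x) y) * α)
        = δ (P x) * -(δ y * α) + δ y * (δ (P x) * α) := by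
          rw [map_br, Ring.lie_def]
          noncomm_ring
      _ = δ (P x) * -(δ y * α) - -(δ y * α) * δ (P x) := by
          rw [(commute x).eq]
          noncomm_ring
  right_mul_left x y :=
    calc -(δ y * α) * δ (P x)
        = -(δ y * (α * δ (P x))) := by noncomm_ring
      _ = -(δ y * (α * (δ x * α))) := by rw [averaging_action]
      _ = -(-(δ y * α) * -(δ x * α)) := by noncomm_ring

theorem sub_map_commutator {E : Type*} [Ring E] [Module R E] {mul : A →ₗ[R] A →ₗ[R] A}
    {ρ φ : A →ₗ[R] E}
    (map_commutator : ∀ x y, ρ (mul x y - mul y x) = ⁅ρ x, ρ y⁆)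
    (map_mul : ∀ x y, φ (mul x y) = ρ x * φ y - φ y * ρ x + φ y * φ x) (x y : A) :
    (ρ - φ) (mul x y - mul y x) = ⁅(ρ - φ) x, (ρ - φ) y⁆ := by
  simp only [LinearMap.sub_apply, map_commutator, map_sub φ, map_mul, Ring.lie_def]
  noncomm_ring

theorem induced_Leibniz_rep_general (mul : A →ₗ[R] A →ₗ[R] A) (P : A →ₗ[R] A)
    (ρ φ : A →ₗ[R] Module.End R V) (α : Module.End R V)
    (havg1 : ∀ x y, mul (P x) (P y) = P (mul (P x) y))
    (havg2 : ∀ x y, mul (P x) (P y) = P (mul x (P y)))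
    (hrep1 : ∀ x y, ρ (mul x y - mul y x) = ⁅ρ x, ρ y⁆)
    (hrep2 : ∀ x y, φ (mul x y) = ρ x * φ y - φ y * ρ x + φ y * φ x)
    (halpha1 : ∀ x, ρ (P x) * α = α * ρ (P x) ∧ α * ρ (P x) = α * (ρ x * α))
    (halpha2 : ∀ x, φ (P x) * α = α * φ (P x) ∧ α * φ (P x) = α * (φ x * α)) :
    IsLeibnizRep ((mul - mul.flip) ∘ₗ P) ((ρ - φ) ∘ₗ P)
      (-(LinearMap.mulRight R α ∘ₗ (ρ - φ))) := by
  refine .of_averaging (sub_map_commutator hrep1 hrep2) (fun x y => ?map_averaging)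
    (fun x => Commute.sub_left (halpha1 x).1 (halpha2 x).1) (fun x => ?averaging_action)
  case map_averaging =>
    simp only [LinearMap.sub_apply, LinearMap.flip_apply, map_sub P, ← havg1, ← havg2]
  case averaging_action =>
    simp only [LinearMap.sub_apply, mul_sub, sub_mul, (halpha1 x).2, (halpha2 x).2]

end LeibnizRepresentation

omit [CharZero k] in
theorem rhoR_eq_neg_sub (ρ φ : A →ₗ[k] Module.End k V) (α : V →ₗ[k] V) (x : A) (ξ : V) :
    rhoR ρ φ α x ξ = -(ρ - φ) x (α ξ) := by
  rw [rhoR, LinearMap.sub_apply, LinearMap.sub_apply, neg_sub, neg_add_eq_sub]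

/-- Let `((V,ρ,φ),α)` be a representation of an averaging pre-Lie algebra `((A,∘),P)`.
Then `(V; ρ^L, ρ^R)` is a representation of the induced Leibniz algebra `(A,[·,·]_P)`. -/
theorem induced_Leibniz_rep
    (mul : A →ₗ[k] A →ₗ[k] A) (P : A →ₗ[k] A)
    (ρ φ : A →ₗ[k] Module.End k V) (α : V →ₗ[k] V)
    (hpre : ∀ x y z : A,
      mul (mul x y) z - mul x (mul y z) = mul (mul y x) z - mul y (mul x z))
    (havg1 : ∀ x y : A, mul (P x) (P y) = P (mul (P x) y))
    (havg2 : ∀ x y : A, mul (P x) (P y) = P (mul x (P y)))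
    (hrep1 : ∀ (x y : A) (v : V), ρ (mul x y - mul y x) v = ρ x (ρ y v) - ρ y (ρ x v))
    (hrep2 : ∀ (x y : A) (v : V),
      φ (mul x y) v = ρ x (φ y v) - φ y (ρ x v) + φ y (φ x v))
    (halpha1 : ∀ (x : A) (v : V),
      ρ (P x) (α v) = α (ρ (P x) v) ∧ α (ρ (P x) v) = α (ρ x (α v)))
    (halpha2 : ∀ (x : A) (v : V),
      φ (P x) (α v) = α (φ (P x) v) ∧ α (φ (P x) v) = α (φ x (α v))) :
    (∀ (x y : A) (ξ : V),
      rhoL ρ φ P (bracketP mul P x y) ξ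
        = rhoL ρ φ P x (rhoL ρ φ P y ξ) - rhoL ρ φ P y (rhoL ρ φ P x ξ)) ∧
    (∀ (x y : A) (ξ : V),
      rhoR ρ φ α (bracketP mul P x y) ξ
        = rhoL ρ φ P x (rhoR ρ φ α y ξ) - rhoR ρ φ α y (rhoL ρ φ P x ξ)) ∧
    (∀ (x y : A) (ξ : V),
      rhoR ρ φ α y (rhoL ρ φ P x ξ) = -(rhoR ρ φ α y (rhoR ρ φ α x ξ))) := by
  have h := induced_Leibniz_rep_general mul P ρ φ α havg1 havg2
    (fun x y => LinearMap.ext (hrep1 x y)) (fun x y => LinearMap.ext (hrep2 x y))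
    (fun x => (forall_and.mp (halpha1 x)).imp LinearMap.ext LinearMap.ext)
    (fun x => (forall_and.mp (halpha2 x)).imp LinearMap.ext LinearMap.ext)
  simp only [rhoR_eq_neg_sub]
  exact ⟨fun x y => LinearMap.congr_fun (h.map_left x y),
    fun x y => LinearMap.congr_fun (h.map_right x y),
    fun x y => LinearMap.congr_fun (h.right_mul_left x y)⟩

end Stmt6
end

section
/- Let ((A,∘_A),P_A) and ((b,∘_b),P_b) be averaging pre-Lie algebras, ((b,ρ_A,φ_A),P_b) a representation of ((A,∘_A),P_A), and ((A,ρ_b,φ_b),P_A) a representation of ((b,∘_b),P_b). Define on A ⊕ b the product (x+a)∘⋆(y+c) := x∘_A y + ρ_b(a)y + φ_b(c)x + a∘_b c + ρ_A(x)c + φ_A(y)a and the linear map P⋆(x+a) := P_A(x) + P_b(a). Then (A ⊕ b, ∘⋆, P⋆) is an averaging pre-Lie algebra if and only if for all x,y ∈ A and a,c ∈ b the following four identities hold: (i) ρ_A(x)(a∘_b c) = −ρ_A(ρ_b(a)x − φ_b(a)x)c + (ρ_A(x)a − φ_A(x)a)∘_b c + φ_A(φ_b(c)x)a + a∘_b(ρ_A(x)c);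 (ii) φ_A(x)(a∘_b c − c∘_b a) = φ_A(ρ_b(c)x)a − φ_A(ρ_b(a)x)c + a∘_b(φ_A(x)c) − c∘_b(φ_A(x)a); (iii) ρ_b(a)(x∘_A y) = −ρ_b(ρ_A(x)a − φ_A(x)a)y + (ρ_b(a)x − φ_b(a)x)∘_A y + φ_b(φ_A(y)a)x + x∘_A(ρ_b(a)y); (iv) φ_b(a)(x∘_A y − y∘_A x) = φ_b(ρ_A(y)a)x − φ_b(ρ_A(x)a)y + x∘_A(φ_b(a)y) − y∘_A(φ_b(a)x). -/
/-!
The averaging identities of `A ⊕ b` hold componentwise, so only the pre-Lie law is at stake. Its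
defect is the associator antisymmetrised in the first two arguments. Once `A` is pre-Lie and
carries a representation of `b`, the `A`-component of the defect at `(x+a, y+b, z+c)` collapses to
a signed sum of the defects of identity (iii) at `(b, x, z)` and `(a, y, z)` and of identity (iv)
at `(c, x, y)`; homogeneous arguments isolate each of them. Exchanging the roles of `A` and `b`
gives (i) and (ii) from the other component.
-/

namespace Stmt7

variable {k A B : Type*} [Field k] [CharZero k]
  [AddCommGroup A] [Module k A] [AddCommGroup B] [Module k B]

/-- The product `∘⋆` on `A ⊕ b`:
`(x+a) ∘⋆ (y+c) = x∘_A y + ρ_b(a)y + φ_b(c)x + a∘_b c + ρ_A(x)c + φ_A(y)a`. -/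
def circStar (mulA : A →ₗ[k] A →ₗ[k] A) (mulB : B →ₗ[k] B →ₗ[k] B)
    (ρA φA : A →ₗ[k] Module.End k B) (ρB φB : B →ₗ[k] Module.End k A)
    (p q : A × B) : A × B :=
  (mulA p.1 q.1 + ρB p.2 q.1 + φB q.2 p.1,
   mulB p.2 q.2 + ρA p.1 q.2 + φA q.1 p.2)

/-- The map `P⋆(x+a) := P_A(x) + P_b(a)` on `A ⊕ b`. -/
def Pstar (PA : A →ₗ[k] A) (PB : B →ₗ[k] B) (p : A × B) : A × B := (PA p.1, PB p.2)

section General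

variable {R M N : Type*} [CommRing R] [AddCommGroup M] [Module R M] [AddCommGroup N] [Module R N]

/-- The left-symmetry law making `(M, mul)` a pre-Lie algebra. The product is an unbundled bilinear
map because several products live on related modules. -/
def IsPreLie (mul : M →ₗ[R] M →ₗ[R] M) : Prop :=
  ∀ x y z, mul (mul x y) z - mul x (mul y z) = mul (mul y x) z - mul y (mul x z)

/-- The pair `(P, α)` averages the bilinear map `f : M × N → N`. With `f` the product of `M` and
`α = P` this says that `P` is an averaging operator; with `f` one of the two actions of a
representation it is the compatibility of that action with `P` and `α`. -/
def IsAveraging (P : M →ₗ[R] M) (α : N →ₗ[R] N) (f : M →ₗ[R] N →ₗ[R] N) : Prop :=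
  ∀ x v, f (P x) (α v) = α (f (P x) v) ∧ f (P x) (α v) = α (f x (α v))

/-- `(N, ρ, φ)` is a representation of the pre-Lie algebra `(M, mul)`, with `ρ` the left and `φ` the
right action. -/
structure IsRepresentation (mul : M →ₗ[R] M →ₗ[R] M) (ρ φ : M →ₗ[R] Module.End R N) : Prop where
  left_commutator : ∀ x y v, ρ (mul x y - mul y x) v = ρ x (ρ y v) - ρ y (ρ x v)
  right_mul : ∀ x y v, φ (mul x y) v = ρ x (φ y v) - φ y (ρ x v) + φ y (φ x v)

/-- The half of the matched-pair conditions that takes place in `M`: how the actions `ρN`, `φN` of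
`N` on `M` interact with the product of `M`. The first part is identity (iii) and the second
identity (iv) of the theorem; exchanging `M` and `N` gives (i) and (ii). -/
def IsMatchedAction (mulM : M →ₗ[R] M →ₗ[R] M) (ρM φM : M →ₗ[R] Module.End R N)
    (ρN φN : N →ₗ[R] Module.End R M) : Prop :=
  (∀ a x y, ρN a (mulM x y) = -(ρN (ρM x a - φM x a) y) + mulM (ρN a x - φN a x) y
    + φN (φM y a) x + mulM x (ρN a y)) ∧
  (∀ a x y, φN a (mulM x y - mulM y x) = φN (ρM y a) x - φN (ρM x a) y + mulM x (φN a y)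
    - mulM y (φN a x))

/-- The bicrossed product on `M × N`, that is, the product `∘⋆` as a bilinear map over an arbitrary
commutative ring. -/
def bicrossedMul (mulM : M →ₗ[R] M →ₗ[R] M) (mulN : N →ₗ[R] N →ₗ[R] N)
    (ρM φM : M →ₗ[R] Module.End R N) (ρN φN : N →ₗ[R] Module.End R M) :
    M × N →ₗ[R] M × N →ₗ[R] M × N :=
  LinearMap.mk₂ R
    (fun p q ↦ (mulM p.1 q.1 + ρN p.2 q.1 + φN q.2 p.1, mulN p.2 q.2 + ρM p.1 q.2 + φM q.1 p.2))
    (fun _ _ _ ↦ by ext <;> simp <;> abel)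
    (fun _ _ _ ↦ by ext <;> simp)
    (fun _ _ _ ↦ by ext <;> simp <;> abel)
    (fun _ _ _ ↦ by ext <;> simp)

/-- The associator of `mul`, antisymmetrised in its first two arguments: the obstruction to `mul`
being pre-Lie. -/
def preLieDefect (mul : M →ₗ[R] M →ₗ[R] M) (x y z : M) : M :=
  (mul (mul x y) z - mul x (mul y z)) - (mul (mul y x) z - mul y (mul x z))

/-- The difference of the two sides of identity (iii), the first part of `IsMatchedAction`. -/
def leftActionDefect (mulM : M →ₗ[R] M →ₗ[R] M) (ρM φM : M →ₗ[R] Module.End R N)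
    (ρN φN : N →ₗ[R] Module.End R M) (a : N) (x y : M) : M :=
  ρN a (mulM x y) - (-(ρN (ρM x a - φM x a) y) + mulM (ρN a x - φN a x) y
    + φN (φM y a) x + mulM x (ρN a y))

/-- The difference of the two sides of identity (iv), the second part of `IsMatchedAction`. -/
def rightActionDefect (mulM : M →ₗ[R] M →ₗ[R] M) (ρM : M →ₗ[R] Module.End R N)
    (φN : N →ₗ[R] Module.End R M) (a : N) (x y : M) : M :=
  φN a (mulM x y - mulM y x) - (φN (ρM y a) x - φN (ρM x a) y + mulM x (φN a y)
    - mulM y (φN a x))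

variable {mulM : M →ₗ[R] M →ₗ[R] M} {mulN : N →ₗ[R] N →ₗ[R] N} {PM : M →ₗ[R] M} {PN : N →ₗ[R] N}
  {ρM φM : M →ₗ[R] Module.End R N} {ρN φN : N →ₗ[R] Module.End R M}

theorem isPreLie_iff_preLieDefect_eq_zero :
    IsPreLie mulM ↔ ∀ x y z, preLieDefect mulM x y z = 0 := by
  simp only [IsPreLie, preLieDefect, sub_eq_zero]

theorem isMatchedAction_iff_defects_eq_zero :
    IsMatchedAction mulM ρM φM ρN φN ↔
      (∀ a x y, leftActionDefect mulM ρM φM ρN φN a x y = 0) ∧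
        ∀ a x y, rightActionDefect mulM ρM φN a x y = 0 := by
  simp only [IsMatchedAction, leftActionDefect, rightActionDefect, sub_eq_zero]

theorem isAveraging_of_chain {P : M →ₗ[R] M} {α : N →ₗ[R] N} {f : M →ₗ[R] N →ₗ[R] N}
    (h : ∀ x v, f (P x) (α v) = α (f (P x) v) ∧ α (f (P x) v) = α (f x (α v))) :
    IsAveraging P α f :=
  fun x v ↦ ⟨(h x v).1, (h x v).1.trans (h x v).2⟩

theorem bicrossedMul_apply (p q : M × N) :
    bicrossedMul mulM mulN ρM φM ρN φN p q =
      (mulM p.1 q.1 + ρN p.2 q.1 + φN q.2 p.1, mulN p.2 q.2 + ρM p.1 q.2 + φM q.1 p.2) :=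
  rfl

theorem snd_preLieDefect_bicrossedMul (p q r : M × N) :
    (preLieDefect (bicrossedMul mulM mulN ρM φM ρN φN) p q r).2 =
      (preLieDefect (bicrossedMul mulN mulM ρN φN ρM φM) p.swap q.swap r.swap).1 :=
  rfl

theorem fst_preLieDefect_bicrossedMul (hM : IsPreLie mulM) (hN : IsRepresentation mulN ρN φN)
    (p q r : M × N) :
    (preLieDefect (bicrossedMul mulM mulN ρM φM ρN φN) p q r).1 =
      leftActionDefect mulM ρM φM ρN φN q.2 p.1 r.1
        - leftActionDefect mulM ρM φM ρN φN p.2 q.1 r.1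
        + rightActionDefect mulM ρM φN r.2 p.1 q.1 := by
  obtain ⟨x, a⟩ := p
  obtain ⟨y, b⟩ := q
  obtain ⟨z, c⟩ := r
  have left_action := hN.left_commutator a b z
  simp only [map_sub, LinearMap.sub_apply] at left_action
  simp only [preLieDefect, leftActionDefect, rightActionDefect, bicrossedMul_apply, Prod.fst_sub,
    map_add, map_sub, LinearMap.add_apply, LinearMap.sub_apply]
  linear_combination (norm := module)
    hM x y z + left_action - hN.right_mul b c x + hN.right_mul a c y

theorem fst_preLieDefect_bicrossedMul_eq_zero_iff (hM : IsPreLie mulM)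
    (hN : IsRepresentation mulN ρN φN) :
    (∀ p q r, (preLieDefect (bicrossedMul mulM mulN ρM φM ρN φN) p q r).1 = 0) ↔
      IsMatchedAction mulM ρM φM ρN φN := by
  simp only [fst_preLieDefect_bicrossedMul hM hN, isMatchedAction_iff_defects_eq_zero]
  constructor
  · intro h
    refine ⟨fun a x y ↦ ?_, fun a x y ↦ ?_⟩
    · simpa [leftActionDefect, rightActionDefect] using h (x, 0) (0, a) (y, 0)
    · simpa [leftActionDefect, rightActionDefect] using h (x, 0) (y, 0) (0, a)
  · rintro ⟨hleft, hright⟩ p q r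
    rw [hleft, hleft, hright, sub_zero, add_zero]

theorem isPreLie_bicrossedMul_iff (hM : IsPreLie mulM) (hN : IsPreLie mulN)
    (hrepM : IsRepresentation mulM ρM φM) (hrepN : IsRepresentation mulN ρN φN) :
    IsPreLie (bicrossedMul mulM mulN ρM φM ρN φN) ↔
      IsMatchedAction mulN ρN φN ρM φM ∧ IsMatchedAction mulM ρM φM ρN φN := by
  rw [isPreLie_iff_preLieDefect_eq_zero, ← fst_preLieDefect_bicrossedMul_eq_zero_iff hN hrepM,
    ← fst_preLieDefect_bicrossedMul_eq_zero_iff hM hrepN]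
  constructor
  · intro h
    exact ⟨fun p q r ↦ congrArg Prod.snd (h p.swap q.swap r.swap),
      fun p q r ↦ congrArg Prod.fst (h p q r)⟩
  · rintro ⟨hsnd, hfst⟩ p q r
    exact Prod.ext (hfst p q r)
      ((snd_preLieDefect_bicrossedMul p q r).trans (hsnd p.swap q.swap r.swap))

theorem IsAveraging.bicrossedMul (hM : IsAveraging PM PM mulM) (hN : IsAveraging PN PN mulN)
    (hρM : IsAveraging PM PN ρM) (hφM : IsAveraging PM PN φM)
    (hρN : IsAveraging PN PM ρN) (hφN : IsAveraging PN PM φN) :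
    IsAveraging (PM.prodMap PN) (PM.prodMap PN) (bicrossedMul mulM mulN ρM φM ρN φN) := by
  rintro ⟨x, a⟩ ⟨y, b⟩
  -- `φ` acts through the right factor, so it uses its two averaging identities the other way round.
  constructor <;> ext <;> simp only [bicrossedMul_apply, LinearMap.prodMap_apply, map_add]
  · rw [(hM x y).1, (hρN a y).1, (hφN b x).2]
  · rw [(hN a b).1, (hρM x b).1, (hφM y a).2]
  · rw [(hM x y).2, (hρN a y).2, (hφN b x).1]
  · rw [(hN a b).2, (hρM x b).2, (hφM y a).1]

theorem double_iff_matched_pair_general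
    (hM : IsPreLie mulM) (havgM : IsAveraging PM PM mulM)
    (hN : IsPreLie mulN) (havgN : IsAveraging PN PN mulN)
    (hrepM : IsRepresentation mulM ρM φM)
    (hρM : IsAveraging PM PN ρM) (hφM : IsAveraging PM PN φM)
    (hrepN : IsRepresentation mulN ρN φN)
    (hρN : IsAveraging PN PM ρN) (hφN : IsAveraging PN PM φN) :
    (IsPreLie (bicrossedMul mulM mulN ρM φM ρN φN) ∧
      IsAveraging (PM.prodMap PN) (PM.prodMap PN) (bicrossedMul mulM mulN ρM φM ρN φN)) ↔
      IsMatchedAction mulN ρN φN ρM φM ∧ IsMatchedAction mulM ρM φM ρN φN :=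
  (and_iff_left (havgM.bicrossedMul havgN hρM hφM hρN hφN)).trans
    (isPreLie_bicrossedMul_iff hM hN hrepM hrepN)

end General

/-- Let `((A,∘_A),P_A)` and `((b,∘_b),P_b)` be averaging pre-Lie algebras,
`((b,ρ_A,φ_A),P_b)` a representation of `((A,∘_A),P_A)` and `((A,ρ_b,φ_b),P_A)` a
representation of `((b,∘_b),P_b)`.  Then `(A ⊕ b, ∘⋆, P⋆)` is an averaging pre-Lie
algebra iff the four matched-pair identities hold. -/
theorem double_iff_matched_pair
    (mulA : A →ₗ[k] A →ₗ[k] A) (mulB : B →ₗ[k] B →ₗ[k] B)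
    (PA : A →ₗ[k] A) (PB : B →ₗ[k] B)
    (ρA φA : A →ₗ[k] Module.End k B) (ρB φB : B →ₗ[k] Module.End k A)
    -- `((A,∘_A),P_A)` is an averaging pre-Lie algebra
    (hpreA : ∀ x y z : A,
      mulA (mulA x y) z - mulA x (mulA y z) = mulA (mulA y x) z - mulA y (mulA x z))
    (havgA1 : ∀ x y : A, mulA (PA x) (PA y) = PA (mulA (PA x) y))
    (havgA2 : ∀ x y : A, mulA (PA x) (PA y) = PA (mulA x (PA y)))
    -- `((b,∘_b),P_b)` is an averaging pre-Lie algebra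
    (hpreB : ∀ a b c : B,
      mulB (mulB a b) c - mulB a (mulB b c) = mulB (mulB b a) c - mulB b (mulB a c))
    (havgB1 : ∀ a b : B, mulB (PB a) (PB b) = PB (mulB (PB a) b))
    (havgB2 : ∀ a b : B, mulB (PB a) (PB b) = PB (mulB a (PB b)))
    -- `((b,ρ_A,φ_A),P_b)` is a representation of `((A,∘_A),P_A)`
    (hrepA1 : ∀ (x y : A) (a : B),
      ρA (mulA x y - mulA y x) a = ρA x (ρA y a) - ρA y (ρA x a))
    (hrepA2 : ∀ (x y : A) (a : B),
      φA (mulA x y) a = ρA x (φA y a) - φA y (ρA x a) + φA y (φA x a))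
    (hrepA3 : ∀ (x : A) (a : B),
      ρA (PA x) (PB a) = PB (ρA (PA x) a) ∧ PB (ρA (PA x) a) = PB (ρA x (PB a)))
    (hrepA4 : ∀ (x : A) (a : B),
      φA (PA x) (PB a) = PB (φA (PA x) a) ∧ PB (φA (PA x) a) = PB (φA x (PB a)))
    -- `((A,ρ_b,φ_b),P_A)` is a representation of `((b,∘_b),P_b)`
    (hrepB1 : ∀ (a b : B) (x : A),
      ρB (mulB a b - mulB b a) x = ρB a (ρB b x) - ρB b (ρB a x))
    (hrepB2 : ∀ (a b : B) (x : A),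
      φB (mulB a b) x = ρB a (φB b x) - φB b (ρB a x) + φB b (φB a x))
    (hrepB3 : ∀ (a : B) (x : A),
      ρB (PB a) (PA x) = PA (ρB (PB a) x) ∧ PA (ρB (PB a) x) = PA (ρB a (PA x)))
    (hrepB4 : ∀ (a : B) (x : A),
      φB (PB a) (PA x) = PA (φB (PB a) x) ∧ PA (φB (PB a) x) = PA (φB a (PA x))) :
    -- `(A ⊕ b, ∘⋆, P⋆)` is an averaging pre-Lie algebra
    ((∀ p q r : A × B,
        circStar mulA mulB ρA φA ρB φB (circStar mulA mulB ρA φA ρB φB p q) r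
          - circStar mulA mulB ρA φA ρB φB p (circStar mulA mulB ρA φA ρB φB q r)
        = circStar mulA mulB ρA φA ρB φB (circStar mulA mulB ρA φA ρB φB q p) r
          - circStar mulA mulB ρA φA ρB φB q (circStar mulA mulB ρA φA ρB φB p r)) ∧
     (∀ p q : A × B,
        circStar mulA mulB ρA φA ρB φB (Pstar PA PB p) (Pstar PA PB q)
          = Pstar PA PB (circStar mulA mulB ρA φA ρB φB (Pstar PA PB p) q) ∧
        circStar mulA mulB ρA φA ρB φB (Pstar PA PB p) (Pstar PA PB q)
          = Pstar PA PB (circStar mulA mulB ρA φA ρB φB p (Pstar PA PB q))))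
      ↔
    -- the four matched-pair identities
    ((∀ (x : A) (a c : B),
        ρA x (mulB a c)
          = -(ρA (ρB a x - φB a x) c) + mulB (ρA x a - φA x a) c
            + φA (φB c x) a + mulB a (ρA x c)) ∧
     (∀ (x : A) (a c : B),
        φA x (mulB a c - mulB c a)
          = φA (ρB c x) a - φA (ρB a x) c + mulB a (φA x c) - mulB c (φA x a)) ∧
     (∀ (a : B) (x y : A),
        ρB a (mulA x y)
          = -(ρB (ρA x a - φA x a) y) + mulA (ρB a x - φB a x) y
            + φB (φA y a) x + mulA x (ρB a y)) ∧
     (∀ (a : B) (x y : A),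
        φB a (mulA x y - mulA y x)
          = φB (ρA y a) x - φB (ρA x a) y + mulA x (φB a y) - mulA y (φB a x))) := by
  exact (double_iff_matched_pair_general hpreA (fun x y ↦ ⟨havgA1 x y, havgA2 x y⟩)
    hpreB (fun a b ↦ ⟨havgB1 a b, havgB2 a b⟩)
    ⟨hrepA1, hrepA2⟩ (isAveraging_of_chain hrepA3) (isAveraging_of_chain hrepA4)
    ⟨hrepB1, hrepB2⟩ (isAveraging_of_chain hrepB3) (isAveraging_of_chain hrepB4)).trans and_assoc

end Stmt7
end

section
/- Let ((A,∘),P) be a finite-dimensional averaging pre-Lie algebra and ω a nondegenerate skew-symmetric bilinear form on A satisfying the invariance ω(x∘y, z) + ω(y, x∘z − z∘x) = 0 and the compatibility ω(P(x),y) = ω(x,P(y)) for all x,y,z ∈ A. Then the linear map ω♯ : A → A*, defined by ⟨ω♯(x), y⟩ = ω(x,y), is a linear isomorphism satisfying, for all x,y ∈ A: (L*−R*)(x)(ω♯(y)) = ω♯(x∘y), −R*(x)(ω♯(y)) = ω♯(y∘x), and P*(ω♯(x)) = ω♯(P(x)); i.e., ω♯ is an isomorphism from the regular representation ((A,L,R),P)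 to the coregular representation ((A*,L*−R*,−R*),P*). -/
namespace Stmt8

variable {k A : Type*} [Field k] [CharZero k] [AddCommGroup A] [Module k A]

/-- Transpose a family of endomorphisms of `A` to a family of endomorphisms of `A*`.
With `L = mul` and `R = mul.flip`, `L* − R* = dualTr (R − L)` and `−R* = dualTr R`. -/
noncomputable def dualTr (f : A →ₗ[k] Module.End k A) :
    A →ₗ[k] Module.End k (Module.Dual k A) :=
  (Module.Dual.transpose (R := k)).comp f

/-!
By invariance `L_x` has `ω`-adjoint `R_x - L_x`. Adjunction is symmetric for a form that is
symmetric up to a scalar, so `R_x - L_x` has adjoint `L_x`; adding the two, `R_x` is its own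
adjoint. That `f` has `ω`-adjoint `g` means precisely that `ω♯` intertwines `f` with the transpose
of `g`, so the pairs `(L_x, R_x - L_x)`, `(R_x, R_x)`, `(P, P)` give the three relations.
-/

section AdjointPair

theorem dualMap_apply_of_isAdjointPair {R M N : Type*} [CommSemiring R]
    [AddCommMonoid M] [Module R M] [AddCommMonoid N] [Module R N]
    {B : M →ₗ[R] Module.Dual R M} {C : N →ₗ[R] Module.Dual R N} {f : M → N} {g : N →ₗ[R] M}
    (h : LinearMap.IsAdjointPair B C f g) (x : M) : g.dualMap (B x) = C (f x) :=
  LinearMap.ext fun y ↦ (h x y).symm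

theorem isAdjointPair_swap {R M N : Type*} [CommSemiring R]
    [AddCommMonoid M] [Module R M] [AddCommMonoid N] [Module R N]
    {B : M →ₗ[R] M →ₗ[R] N} {f g : M → M} {ε : R} (hsymm : ∀ x y, B x y = ε • B y x)
    (h : LinearMap.IsAdjointPair B B f g) : LinearMap.IsAdjointPair B B g f := fun x y ↦
  calc
    B (g x) y = ε • B y (g x) := hsymm _ _
    _ = ε • B (f y) x := by rw [h y x]
    _ = B x (f y) := (hsymm _ _).symm

variable {R M N : Type*} [CommRing R] [AddCommGroup M] [Module R M] [AddCommGroup N] [Module R N]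
  {B : M →ₗ[R] M →ₗ[R] N}

theorem isSelfAdjoint_of_isAdjointPair_sub {f g : M → M} {ε : R}
    (hsymm : ∀ x y, B x y = ε • B y x) (h : LinearMap.IsAdjointPair B B f (g - f)) :
    B.IsSelfAdjoint g := by
  have hsum : LinearMap.IsAdjointPair B B (f + (g - f)) ((g - f) + f) :=
    h.add (isAdjointPair_swap hsymm h)
  rwa [add_sub_cancel, sub_add_cancel] at hsum

theorem isAdjointPair_mul_of_invariant {mul : M →ₗ[R] M →ₗ[R] M}
    (hinv : ∀ x y z, B (mul x y) z + B y (mul x z - mul z x) = 0) (x : M) :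
    LinearMap.IsAdjointPair B B (mul x) ((mul.flip - mul) x) := fun y z ↦
  calc
    B (mul x y) z = -B y (mul x z - mul z x) := eq_neg_of_add_eq_zero_left (hinv x y z)
    _ = B y (mul z x - mul x z) := by rw [← map_neg, neg_sub]

end AdjointPair

section Field

variable {K V : Type*} [Field K] [AddCommGroup V] [Module K V]

theorem dualTr_apply_of_isAdjointPair {T : V →ₗ[K] Module.End K V} {x : V}
    {ω : V →ₗ[K] Module.Dual K V} {f : V → V} (h : LinearMap.IsAdjointPair ω ω f (T x)) (y : V) :
    dualTr T x (ω y) = ω (f y) :=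
  dualMap_apply_of_isAdjointPair h y

variable [FiniteDimensional K V]

theorem bijective_of_separatingLeft {B : V →ₗ[K] Module.Dual K V} (hB : B.SeparatingLeft) :
    Function.Bijective B := by
  have hinj : Function.Injective B :=
    LinearMap.ker_eq_bot.mp (LinearMap.separatingLeft_iff_ker_eq_bot.mp hB)
  exact ⟨hinj, (LinearMap.injective_iff_surjective_of_finrank_eq_finrank
    Subspace.dual_finrank_eq.symm).mp hinj⟩

theorem omega_sharp_iso_general (mul : V →ₗ[K] V →ₗ[K] V) (P : V →ₗ[K] V)
    (ω : V →ₗ[K] Module.Dual K V) (ε : K) (hsymm : ∀ x y, ω x y = ε • ω y x)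
    (hnondeg : ω.SeparatingLeft)
    (hinv : ∀ x y z, ω (mul x y) z + ω y (mul x z - mul z x) = 0)
    (hcomp : ω.IsSelfAdjoint P) :
    Function.Bijective ω ∧
    (∀ x y, dualTr (mul.flip - mul) x (ω y) = ω (mul x y)) ∧
    (∀ x y, dualTr mul.flip x (ω y) = ω (mul y x)) ∧
    (∀ x, P.dualMap (ω x) = ω (P x)) := by
  have hleft := isAdjointPair_mul_of_invariant hinv
  have hright (x : V) : ω.IsSelfAdjoint (mul.flip x) :=
    isSelfAdjoint_of_isAdjointPair_sub hsymm (hleft x)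
  exact ⟨bijective_of_separatingLeft hnondeg,
    fun x ↦ dualTr_apply_of_isAdjointPair (hleft x),
    fun x ↦ dualTr_apply_of_isAdjointPair (hright x),
    dualMap_apply_of_isAdjointPair hcomp⟩

end Field

/-- Let `((A,∘),P)` be a finite-dimensional averaging pre-Lie algebra and `ω` a
nondegenerate skew-symmetric invariant bilinear form compatible with `P`.  Then
`ω♯ : A → A*`, `⟨ω♯(x),y⟩ = ω(x,y)`, is a linear isomorphism intertwining the regular
representation `((A,L,R),P)` with the coregular representation `((A*,L*−R*,−R*),P*)`. -/
theorem omega_sharp_iso [FiniteDimensional k A]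
    (mul : A →ₗ[k] A →ₗ[k] A) (P : A →ₗ[k] A) (ω : A →ₗ[k] Module.Dual k A)
    (hpre : ∀ x y z : A,
      mul (mul x y) z - mul x (mul y z) = mul (mul y x) z - mul y (mul x z))
    (havg1 : ∀ x y : A, mul (P x) (P y) = P (mul (P x) y))
    (havg2 : ∀ x y : A, mul (P x) (P y) = P (mul x (P y)))
    (hskew : ∀ x y : A, ω x y = -(ω y x))
    (hnondeg : ∀ x : A, (∀ y : A, ω x y = 0) → x = 0)
    (hinv : ∀ x y z : A, ω (mul x y) z + ω y (mul x z - mul z x) = 0)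
    (hcomp : ∀ x y : A, ω (P x) y = ω x (P y)) :
    Function.Bijective ω ∧
    (∀ x y : A, dualTr (mul.flip - mul) x (ω y) = ω (mul x y)) ∧
    (∀ x y : A, dualTr mul.flip x (ω y) = ω (mul y x)) ∧
    (∀ x : A, P.dualMap (ω x) = ω (P x)) := by
  have hsymm (x y : A) : ω x y = (-1 : k) • ω y x := by rw [neg_one_smul, hskew]
  exact omega_sharp_iso_general mul P ω (-1) hsymm hnondeg hinv hcomp

end Stmt8
end

section
/- Let A be a finite-dimensional vector space, Δ : A → A ⊗ A a linear map making (A,Δ) a pre-Lie coalgebra, and S : A → A a linear map satisfying (S⊗S)Δ(x) = (S⊗id)Δ(S(x)) = (id⊗S)Δ(S(x)) for all x ∈ A (an averaging pre-Lie coalgebra). Define the product ∘_{A*} on A* by ⟨ξ ∘_{A*} η, x⟩ = ⟨ξ⊗η, Δ(x)⟩ and let S* : A* → A* be the transpose of S. Then ((A*, ∘_{A*}), S*) is an averaging pre-Lie algebra. -/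
/-!
The associator of the product on `A*` is the transpose of `(Δ ⊗ id)Δ - (id ⊗ Δ)Δ`, and exchanging
its first two arguments is the transpose of `τ ⊗ id`, so the pre-Lie identity for `A*` is the
transpose of the one for `Δ`. In the same way the averaging identities for `S*` are the transposes
of those for `S`.
-/

open TensorProduct

namespace Stmt9

variable {k A : Type*} [Field k] [CharZero k] [AddCommGroup A] [Module k A]

/-- The flip `τ : A⊗A → A⊗A`, `τ(x⊗y) = y⊗x`. -/
noncomputable def τ (k A : Type*) [Field k] [AddCommGroup A] [Module k A] :
    A ⊗[k] A →ₗ[k] A ⊗[k] A :=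
  (TensorProduct.comm k A A).toLinearMap

/-- `τ ⊗ id` on `(A⊗A)⊗A`. -/
noncomputable def τ12 (k A : Type*) [Field k] [AddCommGroup A] [Module k A] :
    (A ⊗[k] A) ⊗[k] A →ₗ[k] (A ⊗[k] A) ⊗[k] A :=
  TensorProduct.map (τ k A) LinearMap.id

/-- `(Δ ⊗ id) ∘ Δ : A → (A⊗A)⊗A`. -/
noncomputable def coL (Δ : A →ₗ[k] A ⊗[k] A) : A →ₗ[k] (A ⊗[k] A) ⊗[k] A :=
  (TensorProduct.map Δ LinearMap.id).comp Δ

/-- `(id ⊗ Δ) ∘ Δ : A → (A⊗A)⊗A` (re-associated). -/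
noncomputable def coR (Δ : A →ₗ[k] A ⊗[k] A) : A →ₗ[k] (A ⊗[k] A) ⊗[k] A :=
  ((TensorProduct.assoc k A A A).symm.toLinearMap.comp
    (TensorProduct.map LinearMap.id Δ)).comp Δ

/-- The product on `A*` dual to `Δ`: `⟨ξ ∘_{A*} η, x⟩ = ⟨ξ⊗η, Δ(x)⟩`. -/
noncomputable def mulD (Δ : A →ₗ[k] A ⊗[k] A) (ξ η : Module.Dual k A) :
    Module.Dual k A :=
  (((TensorProduct.lid k k).toLinearMap.comp (TensorProduct.map ξ η)).comp Δ)

section Functionals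

variable {R M N P M' N' : Type*} [CommSemiring R]
  [AddCommMonoid M] [AddCommMonoid N] [AddCommMonoid P] [AddCommMonoid M'] [AddCommMonoid N']
  [Module R M] [Module R N] [Module R P] [Module R M'] [Module R N']

theorem dualDistrib_tmul_comp_map (ξ : Module.Dual R M) (η : Module.Dual R N)
    (f : M' →ₗ[R] M) (g : N' →ₗ[R] N) :
    dualDistrib R M N (ξ ⊗ₜ η) ∘ₗ map f g
      = dualDistrib R M' N' (f.dualMap ξ ⊗ₜ g.dualMap η) :=
  TensorProduct.ext' fun _ _ => rfl

/-- The functional `ξ ⊗ η ⊗ ζ` on a threefold tensor product, bracketed to the left like the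
codomain of `coL` and `coR`; it pairs threefold products of functionals with iterated
coproducts. -/
noncomputable def tripleDual (ξ : Module.Dual R M) (η : Module.Dual R N) (ζ : Module.Dual R P) :
    Module.Dual R ((M ⊗[R] N) ⊗[R] P) :=
  dualDistrib R (M ⊗[R] N) P (dualDistrib R M N (ξ ⊗ₜ η) ⊗ₜ ζ)

theorem tripleDual_comp_assoc_symm (ξ : Module.Dual R M) (η : Module.Dual R N)
    (ζ : Module.Dual R P) :
    tripleDual ξ η ζ ∘ₗ (TensorProduct.assoc R M N P).symm.toLinearMap
      = dualDistrib R M (N ⊗[R] P) (ξ ⊗ₜ dualDistrib R N P (η ⊗ₜ ζ)) := by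
  ext a b c
  simp [tripleDual, mul_assoc]

theorem tripleDual_comp_map_comm (ξ : Module.Dual R M) (η : Module.Dual R N)
    (ζ : Module.Dual R P) :
    tripleDual ξ η ζ ∘ₗ map (TensorProduct.comm R N M).toLinearMap LinearMap.id
      = tripleDual η ξ ζ := by
  ext a b c
  simp [tripleDual, mul_comm]

end Functionals

section DualProduct

omit [CharZero k]

theorem mulD_eq_dualDistrib_comp (Δ : A →ₗ[k] A ⊗[k] A) (ξ η : Module.Dual k A) :
    mulD Δ ξ η = dualDistrib k A A (ξ ⊗ₜ η) ∘ₗ Δ :=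
  rfl

theorem mulD_dualMap_dualMap (Δ : A →ₗ[k] A ⊗[k] A) (f g : A →ₗ[k] A) (ξ η : Module.Dual k A) :
    mulD Δ (f.dualMap ξ) (g.dualMap η) = dualDistrib k A A (ξ ⊗ₜ η) ∘ₗ map f g ∘ₗ Δ := by
  rw [mulD_eq_dualDistrib_comp, ← dualDistrib_tmul_comp_map, LinearMap.comp_assoc]

theorem tripleDual_comp_coL (Δ : A →ₗ[k] A ⊗[k] A) (ξ η ζ : Module.Dual k A) :
    tripleDual ξ η ζ ∘ₗ coL Δ = mulD Δ (mulD Δ ξ η) ζ := by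
  rw [coL, ← LinearMap.comp_assoc, tripleDual, dualDistrib_tmul_comp_map]
  rfl

theorem tripleDual_comp_coR (Δ : A →ₗ[k] A ⊗[k] A) (ξ η ζ : Module.Dual k A) :
    tripleDual ξ η ζ ∘ₗ coR Δ = mulD Δ ξ (mulD Δ η ζ) := by
  rw [coR, ← LinearMap.comp_assoc, ← LinearMap.comp_assoc, tripleDual_comp_assoc_symm,
    dualDistrib_tmul_comp_map]
  rfl

theorem tripleDual_comp_τ12 (ξ η ζ : Module.Dual k A) :
    tripleDual ξ η ζ ∘ₗ τ12 k A = tripleDual η ξ ζ :=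
  tripleDual_comp_map_comm ξ η ζ

theorem mulD_associator (Δ : A →ₗ[k] A ⊗[k] A) (ξ η ζ : Module.Dual k A) :
    mulD Δ (mulD Δ ξ η) ζ - mulD Δ ξ (mulD Δ η ζ) = tripleDual ξ η ζ ∘ₗ (coL Δ - coR Δ) := by
  rw [LinearMap.comp_sub, tripleDual_comp_coL, tripleDual_comp_coR]

theorem mulD_associator_left_symm {Δ : A →ₗ[k] A ⊗[k] A}
    (hco : coL Δ - coR Δ = τ12 k A ∘ₗ (coL Δ - coR Δ)) (ξ η ζ : Module.Dual k A) :
    mulD Δ (mulD Δ ξ η) ζ - mulD Δ ξ (mulD Δ η ζ)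
      = mulD Δ (mulD Δ η ξ) ζ - mulD Δ η (mulD Δ ξ ζ) :=
  calc mulD Δ (mulD Δ ξ η) ζ - mulD Δ ξ (mulD Δ η ζ)
    _ = tripleDual ξ η ζ ∘ₗ (coL Δ - coR Δ) := mulD_associator Δ ξ η ζ
    _ = (tripleDual ξ η ζ ∘ₗ τ12 k A) ∘ₗ (coL Δ - coR Δ) := by
      rw [LinearMap.comp_assoc, ← hco]
    _ = tripleDual η ξ ζ ∘ₗ (coL Δ - coR Δ) := by rw [tripleDual_comp_τ12]
    _ = mulD Δ (mulD Δ η ξ) ζ - mulD Δ η (mulD Δ ξ ζ) := (mulD_associator Δ η ξ ζ).symm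

theorem mulD_dualMap_eq_dualMap_mulD_left {Δ : A →ₗ[k] A ⊗[k] A} {S : A →ₗ[k] A}
    (hS : map S S ∘ₗ Δ = map S LinearMap.id ∘ₗ Δ ∘ₗ S) (ξ η : Module.Dual k A) :
    mulD Δ (S.dualMap ξ) (S.dualMap η) = S.dualMap (mulD Δ (S.dualMap ξ) η) := by
  rw [mulD_dualMap_dualMap, hS]
  exact congrArg S.dualMap (mulD_dualMap_dualMap Δ S LinearMap.id ξ η).symm

theorem mulD_dualMap_eq_dualMap_mulD_right {Δ : A →ₗ[k] A ⊗[k] A} {S : A →ₗ[k] A}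
    (hS : map S S ∘ₗ Δ = map LinearMap.id S ∘ₗ Δ ∘ₗ S) (ξ η : Module.Dual k A) :
    mulD Δ (S.dualMap ξ) (S.dualMap η) = S.dualMap (mulD Δ ξ (S.dualMap η)) := by
  rw [mulD_dualMap_dualMap, hS]
  exact congrArg S.dualMap (mulD_dualMap_dualMap Δ LinearMap.id S ξ η).symm

theorem dual_of_averaging_coalgebra_general
    (Δ : A →ₗ[k] A ⊗[k] A) (S : A →ₗ[k] A)
    (hco : ∀ x : A,
      coL Δ x - coR Δ x = τ12 k A (coL Δ x) - τ12 k A (coR Δ x))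
    (hS : ∀ x : A,
      TensorProduct.map S S (Δ x) = TensorProduct.map S LinearMap.id (Δ (S x)) ∧
      TensorProduct.map S LinearMap.id (Δ (S x))
        = TensorProduct.map LinearMap.id S (Δ (S x))) :
    (∀ ξ η ζ : Module.Dual k A,
      mulD Δ (mulD Δ ξ η) ζ - mulD Δ ξ (mulD Δ η ζ)
        = mulD Δ (mulD Δ η ξ) ζ - mulD Δ η (mulD Δ ξ ζ)) ∧
    (∀ ξ η : Module.Dual k A,
      mulD Δ (S.dualMap ξ) (S.dualMap η) = S.dualMap (mulD Δ (S.dualMap ξ) η) ∧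
      mulD Δ (S.dualMap ξ) (S.dualMap η) = S.dualMap (mulD Δ ξ (S.dualMap η))) := by
  have left_symm : coL Δ - coR Δ = τ12 k A ∘ₗ (coL Δ - coR Δ) :=
    LinearMap.ext fun x => (hco x).trans (map_sub _ _ _).symm
  have left_averaging : map S S ∘ₗ Δ = map S LinearMap.id ∘ₗ Δ ∘ₗ S :=
    LinearMap.ext fun x => (hS x).1
  have right_averaging : map S S ∘ₗ Δ = map LinearMap.id S ∘ₗ Δ ∘ₗ S :=
    LinearMap.ext fun x => (hS x).1.trans (hS x).2
  exact ⟨mulD_associator_left_symm left_symm, fun ξ η =>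
    ⟨mulD_dualMap_eq_dualMap_mulD_left left_averaging ξ η,
      mulD_dualMap_eq_dualMap_mulD_right right_averaging ξ η⟩⟩

end DualProduct

/-- Let `(A,Δ)` be a finite-dimensional pre-Lie coalgebra and `S : A → A` linear with
`(S⊗S)Δ(x) = (S⊗id)Δ(S(x)) = (id⊗S)Δ(S(x))`.  Then `((A*, ∘_{A*}), S*)` is an
averaging pre-Lie algebra. -/
theorem dual_of_averaging_coalgebra [FiniteDimensional k A]
    (Δ : A →ₗ[k] A ⊗[k] A) (S : A →ₗ[k] A)
    (hco : ∀ x : A,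
      coL Δ x - coR Δ x = τ12 k A (coL Δ x) - τ12 k A (coR Δ x))
    (hS : ∀ x : A,
      TensorProduct.map S S (Δ x) = TensorProduct.map S LinearMap.id (Δ (S x)) ∧
      TensorProduct.map S LinearMap.id (Δ (S x))
        = TensorProduct.map LinearMap.id S (Δ (S x))) :
    (∀ ξ η ζ : Module.Dual k A,
      mulD Δ (mulD Δ ξ η) ζ - mulD Δ ξ (mulD Δ η ζ)
        = mulD Δ (mulD Δ η ξ) ζ - mulD Δ η (mulD Δ ξ ζ)) ∧
    (∀ ξ η : Module.Dual k A,
      mulD Δ (S.dualMap ξ) (S.dualMap η) = S.dualMap (mulD Δ (S.dualMap ξ) η) ∧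
      mulD Δ (S.dualMap ξ) (S.dualMap η) = S.dualMap (mulD Δ ξ (S.dualMap η))) :=
  dual_of_averaging_coalgebra_general Δ S hco hS

end Stmt9
end

section
/- Let (A,∘) be a pre-Lie algebra, B : A → A a Rota-Baxter operator of weight λ, and P : A → A an averaging operator on (A,∘) with P∘B = B∘P. Then P is an averaging operator on the descendent pre-Lie algebra (A,∘_B), where x ∘_B y := B(x)∘y + x∘B(y) + λ x∘y; that is, P(x) ∘_B P(y) = P(P(x) ∘_B y) = P(x ∘_B P(y)) for all x,y ∈ A. -/
/-!
For a fixed linear map `P`, the averaging identities are linear in the product, so the products they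
hold for form a submodule. This submodule is stable under precomposing either argument with a map
commuting with `P`, and `∘_B` is a linear combination of such precompositions of `∘`.
-/

namespace Stmt10

variable {k A : Type*} [Field k] [CharZero k] [AddCommGroup A] [Module k A]

/-- The descendent product `x ∘_B y := B(x)∘y + x∘B(y) + λ x∘y`. -/
def mulB (mul : A →ₗ[k] A →ₗ[k] A) (B : A →ₗ[k] A) (lam : k) (x y : A) : A :=
  mul (B x) y + mul x (B y) + lam • mul x y

section AveragingProducts

variable {R V : Type*} [Semiring R] [AddCommMonoid V] [Module R V]
  {P : V →ₗ[R] V} {B : V → V} {mul : V → V → V}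

/-- The binary products on `V` for which `P` is an averaging operator. They are not required to be
bilinear: the averaging identities only involve the linearity of `P`. -/
def averagingProducts (P : V →ₗ[R] V) : Submodule R (V → V → V) where
  carrier := {mul | ∀ x y, mul (P x) (P y) = P (mul (P x) y) ∧ mul (P x) (P y) = P (mul x (P y))}
  zero_mem' x y := by simp
  add_mem' {mul₁ mul₂} h₁ h₂ x y := by
    simp only [Pi.add_apply, map_add]
    exact ⟨congrArg₂ (· + ·) (h₁ x y).1 (h₂ x y).1, congrArg₂ (· + ·) (h₁ x y).2 (h₂ x y).2⟩
  smul_mem' r mul h x y := by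
    simp only [Pi.smul_apply, map_smul]
    exact ⟨congrArg (r • ·) (h x y).1, congrArg (r • ·) (h x y).2⟩

theorem comp_left_mem_averagingProducts (hmul : mul ∈ averagingProducts P)
    (hcomm : Function.Commute P B) : (fun x y ↦ mul (B x) y) ∈ averagingProducts P :=
  fun x y ↦ by simpa only [hcomm.eq] using hmul (B x) y

theorem comp_right_mem_averagingProducts (hmul : mul ∈ averagingProducts P)
    (hcomm : Function.Commute P B) : (fun x y ↦ mul x (B y)) ∈ averagingProducts P :=
  fun x y ↦ by simpa only [hcomm.eq] using hmul x (B y)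

theorem averaging_on_descendent_general (hmul : mul ∈ averagingProducts P)
    (hcomm : Function.Commute P B) (r : R) :
    (fun x y ↦ mul (B x) y + mul x (B y) + r • mul x y) ∈ averagingProducts P :=
  add_mem
    (add_mem (comp_left_mem_averagingProducts hmul hcomm)
      (comp_right_mem_averagingProducts hmul hcomm))
    (Submodule.smul_mem _ r hmul)

end AveragingProducts

/-- Let `(A,∘)` be a pre-Lie algebra, `B` a Rota-Baxter operator of weight `λ` and `P`
an averaging operator on `(A,∘)` commuting with `B`.  Then `P` is an averaging operator
on the descendent pre-Lie algebra `(A,∘_B)`. -/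
theorem averaging_on_descendent
    (mul : A →ₗ[k] A →ₗ[k] A) (B P : A →ₗ[k] A) (lam : k)
    (hpre : ∀ x y z : A,
      mul (mul x y) z - mul x (mul y z) = mul (mul y x) z - mul y (mul x z))
    (hRB : ∀ x y : A,
      mul (B x) (B y) = B (mul (B x) y + mul x (B y) + lam • mul x y))
    (havg1 : ∀ x y : A, mul (P x) (P y) = P (mul (P x) y))
    (havg2 : ∀ x y : A, mul (P x) (P y) = P (mul x (P y)))
    (hcomm : ∀ x : A, P (B x) = B (P x)) :
    ∀ x y : A,
      mulB mul B lam (P x) (P y) = P (mulB mul B lam (P x) y) ∧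
      mulB mul B lam (P x) (P y) = P (mulB mul B lam x (P y)) :=
  averaging_on_descendent_general (mul := fun x y ↦ mul x y)
    (fun x y ↦ ⟨havg1 x y, havg2 x y⟩) hcomm lam

end Stmt10
end

section
/- Let T : V → A be a relative Rota-Baxter operator on an averaging pre-Lie algebra ((A,∘),P) with respect to a representation ((V,ρ,φ),α), i.e. T(u)∘T(v) = T(ρ(T(u))v + φ(T(v))u) for all u,v ∈ V and P∘T = T∘α. Define u ∘_T v := ρ(T(u))v + φ(T(v))u. Then ((V,∘_T),α) is an averaging pre-Lie algebra: ∘_T satisfies the pre-Lie identity and α(u) ∘_T α(v) = α(α(u) ∘_T v) = α(u ∘_T α(v)) for all u,v ∈ V. -/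
/-!
The averaging property of a bilinear map with respect to endomorphisms of its arguments and its
target passes to sums, to the flipped map, and to the composite with a map intertwining the
endomorphisms of the first argument. The descendent product is `ρ ∘ T + (φ ∘ T).flip`, so it
inherits averaging from `ρ` and `φ`.

For the pre-Lie identity, the Rota-Baxter equation says that `T` is multiplicative. Expanding the
associator of the descendent product of `u, v, w` with it leaves
`ρ (T u ∘ T v) w - ρ (T u) (ρ (T v) w)`, whose symmetry in `u` and `v` is the first representation
axiom, plus terms that are visibly symmetric.
-/

namespace Stmt12

variable {k A V : Type*} [Field k] [CharZero k]
  [AddCommGroup A] [Module k A] [AddCommGroup V] [Module k V]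

/-- The descendent product `u ∘_T v := ρ(T(u))v + φ(T(v))u` on `V`. -/
def circT (ρ φ : A →ₗ[k] Module.End k V) (T : V →ₗ[k] A) (u v : V) : V :=
  ρ (T u) v + φ (T v) u

section AveragingBilinear

variable {R M₁ M₁' M₂ M₃ : Type*} [CommSemiring R]
  [AddCommMonoid M₁] [AddCommMonoid M₁'] [AddCommMonoid M₂] [AddCommMonoid M₃]
  [Module R M₁] [Module R M₁'] [Module R M₂] [Module R M₃]

/-- The bilinear map `B` is averaging with respect to endomorphisms of its two arguments and of
its target. For a product `B` and `f₁ = f₂ = f₃ = P` this says that `P` is an averaging operator;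
for `B = ρ` or `B = φ`, `f₁ = P` and `f₂ = f₃ = α` it is the compatibility of an action with `P`
and `α` in a representation of an averaging algebra. -/
def IsAveraging (f₁ : Module.End R M₁) (f₂ : Module.End R M₂) (f₃ : Module.End R M₃)
    (B : M₁ →ₗ[R] M₂ →ₗ[R] M₃) : Prop :=
  ∀ x y, B (f₁ x) (f₂ y) = f₃ (B (f₁ x) y) ∧ B (f₁ x) (f₂ y) = f₃ (B x (f₂ y))

namespace IsAveraging

variable {f₁ : Module.End R M₁} {f₁' : Module.End R M₁'} {f₂ : Module.End R M₂}
  {f₃ : Module.End R M₃} {B C : M₁ →ₗ[R] M₂ →ₗ[R] M₃}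

theorem add (hB : IsAveraging f₁ f₂ f₃ B) (hC : IsAveraging f₁ f₂ f₃ C) :
    IsAveraging f₁ f₂ f₃ (B + C) := fun x y => by
  simp only [LinearMap.add_apply, map_add]
  exact ⟨congrArg₂ (· + ·) (hB x y).1 (hC x y).1, congrArg₂ (· + ·) (hB x y).2 (hC x y).2⟩

theorem flip (hB : IsAveraging f₁ f₂ f₃ B) : IsAveraging f₂ f₁ f₃ B.flip :=
  fun y x => (hB x y).symm

theorem comp (hB : IsAveraging f₁ f₂ f₃ B) {T : M₁' →ₗ[R] M₁} (hT : Function.Semiconj T f₁' f₁) :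
    IsAveraging f₁' f₂ f₃ (B ∘ₗ T) := fun x y => by
  simpa only [LinearMap.comp_apply, hT x] using hB (T x) y

end IsAveraging

end AveragingBilinear

section DescendentProduct

variable {R L M : Type*} [CommRing R] [AddCommGroup L] [Module R L] [AddCommGroup M] [Module R M]

/-- The (left) pre-Lie identity for a bilinear product: its associator is symmetric in the first
two arguments. The product is a variable, not a `Mul` instance as in `LeftPreLieRing`, because one
module carries a descendent product for each relative Rota-Baxter operator. -/
def IsPreLie (mul : L →ₗ[R] L →ₗ[R] L) : Prop :=
  ∀ x y z, mul (mul x y) z - mul x (mul y z) = mul (mul y x) z - mul y (mul x z)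

/-- The axioms for `ρ` (left action) and `φ` (right action) to be a representation on `M` of the
product `mul`. -/
structure IsRepresentation (mul : L →ₗ[R] L →ₗ[R] L) (ρ φ : L →ₗ[R] Module.End R M) : Prop where
  left_commutator : ∀ x y v, ρ (mul x y - mul y x) v = ρ x (ρ y v) - ρ y (ρ x v)
  right_mul : ∀ x y v, φ (mul x y) v = ρ x (φ y v) - φ y (ρ x v) + φ y (φ x v)

theorem IsRepresentation.left_mul_sub_symm {mul : L →ₗ[R] L →ₗ[R] L}
    {ρ φ : L →ₗ[R] Module.End R M} (hrep : IsRepresentation mul ρ φ) (x y : L) (v : M) :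
    ρ (mul x y) v - ρ x (ρ y v) = ρ (mul y x) v - ρ y (ρ x v) := by
  have hcomm := hrep.left_commutator x y v
  rw [map_sub, LinearMap.sub_apply] at hcomm
  rwa [sub_eq_sub_iff_sub_eq_sub]

/-- The descendent product `u ∘_T v = ρ (T u) v + φ (T v) u` as a bilinear map; it is `circT`
over an arbitrary commutative ring. -/
def descendentMul (ρ φ : L →ₗ[R] Module.End R M) (T : M →ₗ[R] L) : M →ₗ[R] M →ₗ[R] M :=
  ρ ∘ₗ T + (φ ∘ₗ T).flip

theorem descendentMul_apply (ρ φ : L →ₗ[R] Module.End R M) (T : M →ₗ[R] L) (u v : M) :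
    descendentMul ρ φ T u v = ρ (T u) v + φ (T v) u :=
  rfl

/-- The equation of a relative Rota-Baxter operator `T` on the product `mul` with respect to
`ρ` and `φ`. Compatibility of `T` with averaging operators is not part of it. -/
def IsRelativeRotaBaxter (mul : L →ₗ[R] L →ₗ[R] L) (ρ φ : L →ₗ[R] Module.End R M)
    (T : M →ₗ[R] L) : Prop :=
  ∀ u v, mul (T u) (T v) = T (descendentMul ρ φ T u v)

variable {mul : L →ₗ[R] L →ₗ[R] L} {ρ φ : L →ₗ[R] Module.End R M} {T : M →ₗ[R] L}

theorem IsRelativeRotaBaxter.associator_descendentMul (hT : IsRelativeRotaBaxter mul ρ φ T)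
    (hrep : IsRepresentation mul ρ φ) (u v w : M) :
    descendentMul ρ φ T (descendentMul ρ φ T u v) w
        - descendentMul ρ φ T u (descendentMul ρ φ T v w)
      = (ρ (mul (T u) (T v)) w - ρ (T u) (ρ (T v) w))
        + (φ (T w) (ρ (T u) v) + φ (T w) (ρ (T v) u))
        - (ρ (T u) (φ (T w) v) + ρ (T v) (φ (T w) u)) := by
  have hleft : descendentMul ρ φ T (descendentMul ρ φ T u v) w
      = ρ (mul (T u) (T v)) w + (φ (T w) (ρ (T u) v) + φ (T w) (φ (T v) u)) := by
    rw [descendentMul_apply, ← hT, descendentMul_apply, map_add]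
  have hright : descendentMul ρ φ T u (descendentMul ρ φ T v w)
      = ρ (T u) (ρ (T v) w) + ρ (T u) (φ (T w) v)
        + (ρ (T v) (φ (T w) u) - φ (T w) (ρ (T v) u) + φ (T w) (φ (T v) u)) := by
    rw [descendentMul_apply, ← hT, descendentMul_apply, map_add, hrep.right_mul]
  rw [hleft, hright]
  abel

theorem IsRelativeRotaBaxter.isPreLie_descendentMul (hT : IsRelativeRotaBaxter mul ρ φ T)
    (hrep : IsRepresentation mul ρ φ) : IsPreLie (descendentMul ρ φ T) := fun u v w => by
  rw [hT.associator_descendentMul hrep, hT.associator_descendentMul hrep,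
    hrep.left_mul_sub_symm, add_comm (φ (T w) (ρ (T u) v)), add_comm (ρ (T u) (φ (T w) v))]

theorem IsAveraging.descendentMul {P : Module.End R L} {α : Module.End R M}
    (hρ : IsAveraging P α α ρ) (hφ : IsAveraging P α α φ) (hPT : Function.Semiconj T α P) :
    IsAveraging α α α (descendentMul ρ φ T) :=
  (hρ.comp hPT).add (hφ.comp hPT).flip

theorem descendent_averaging_preLie_general {P : Module.End R L} {α : Module.End R M}
    (hrep : IsRepresentation mul ρ φ) (hρ : IsAveraging P α α ρ) (hφ : IsAveraging P α α φ)
    (hT : IsRelativeRotaBaxter mul ρ φ T) (hPT : Function.Semiconj T α P) :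
    IsPreLie (descendentMul ρ φ T) ∧ IsAveraging α α α (descendentMul ρ φ T) :=
  ⟨hT.isPreLie_descendentMul hrep, hρ.descendentMul hφ hPT⟩

end DescendentProduct

/-- Let `T : V → A` be a relative Rota-Baxter operator on an averaging pre-Lie algebra
`((A,∘),P)` with respect to a representation `((V,ρ,φ),α)`.  Then `((V,∘_T),α)` is an
averaging pre-Lie algebra. -/
theorem descendent_averaging_preLie
    (mul : A →ₗ[k] A →ₗ[k] A) (P : A →ₗ[k] A)
    (ρ φ : A →ₗ[k] Module.End k V) (α : V →ₗ[k] V) (T : V →ₗ[k] A)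
    (hpre : ∀ x y z : A,
      mul (mul x y) z - mul x (mul y z) = mul (mul y x) z - mul y (mul x z))
    (havg1 : ∀ x y : A, mul (P x) (P y) = P (mul (P x) y))
    (havg2 : ∀ x y : A, mul (P x) (P y) = P (mul x (P y)))
    (hrep1 : ∀ (x y : A) (v : V), ρ (mul x y - mul y x) v = ρ x (ρ y v) - ρ y (ρ x v))
    (hrep2 : ∀ (x y : A) (v : V),
      φ (mul x y) v = ρ x (φ y v) - φ y (ρ x v) + φ y (φ x v))
    (halpha1 : ∀ (x : A) (v : V),
      ρ (P x) (α v) = α (ρ (P x) v) ∧ α (ρ (P x) v) = α (ρ x (α v)))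
    (halpha2 : ∀ (x : A) (v : V),
      φ (P x) (α v) = α (φ (P x) v) ∧ α (φ (P x) v) = α (φ x (α v)))
    (hT : ∀ u v : V, mul (T u) (T v) = T (ρ (T u) v + φ (T v) u))
    (hPT : ∀ v : V, P (T v) = T (α v)) :
    (∀ u v w : V,
      circT ρ φ T (circT ρ φ T u v) w - circT ρ φ T u (circT ρ φ T v w)
        = circT ρ φ T (circT ρ φ T v u) w - circT ρ φ T v (circT ρ φ T u w)) ∧
    (∀ u v : V,
      circT ρ φ T (α u) (α v) = α (circT ρ φ T (α u) v) ∧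
      circT ρ φ T (α u) (α v) = α (circT ρ φ T u (α v))) := by
  exact descendent_averaging_preLie_general ⟨hrep1, hrep2⟩
    (fun x v => ⟨(halpha1 x v).1, (halpha1 x v).1.trans (halpha1 x v).2⟩)
    (fun x v => ⟨(halpha2 x v).1, (halpha2 x v).1.trans (halpha2 x v).2⟩)
    hT (fun v => (hPT v).symm)

end Stmt12
end

section
/- Let T : V → A be a relative Rota-Baxter operator on an averaging pre-Lie algebra ((A,∘),P) with respect to a representation ((V,ρ,φ),α), i.e. T(u)∘T(v) = T(ρ(T(u))v + φ(T(v))u) and P∘T = T∘α. Let ((V,∘_T),α) be the descendent averaging pre-Lie algebra with u ∘_T v := ρ(T(u))v + φ(T(v))u, and define ρ',φ' : V → End(A) by ρ'(u)x := −T(φ(x)u) + T(u)∘x and φ'(u)x := −T(ρ(x)u) + x∘T(u). Then ((A,ρ',φ'),P) is a representation of the averaging pre-Lie algebra ((V,∘_T),α). -/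
namespace Stmt13

variable {k A V : Type*} [Field k] [CharZero k]
  [AddCommGroup A] [Module k A] [AddCommGroup V] [Module k V]

/-- The descendent product `u ∘_T v := ρ(T(u))v + φ(T(v))u` on `V`. -/
def circT (ρ φ : A →ₗ[k] Module.End k V) (T : V →ₗ[k] A) (u v : V) : V :=
  ρ (T u) v + φ (T v) u

/-- `ρ'(u)x := −T(φ(x)u) + T(u)∘x`. -/
def rho' (mul : A →ₗ[k] A →ₗ[k] A) (ρ φ : A →ₗ[k] Module.End k V)
    (T : V →ₗ[k] A) (u : V) (x : A) : A :=
  -(T (φ x u)) + mul (T u) x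

/-- `φ'(u)x := −T(ρ(x)u) + x∘T(u)`. -/
def phi' (mul : A →ₗ[k] A →ₗ[k] A) (ρ φ : A →ₗ[k] Module.End k V)
    (T : V →ₗ[k] A) (u : V) (x : A) : A :=
  -(T (ρ x u)) + mul x (T u)

/-!
On the semidirect product `A ⋉ V` the map `N (x, v) = (T v, 0)` is a Nijenhuis operator exactly
because `T` is a relative Rota-Baxter operator. Deforming the product of `A ⋉ V` by `N` gives
`V_T ⋉ A`, with `V_T` acting on `A` by `ρ'` and `φ'`. A Nijenhuis deformation of a pre-Lie product
is pre-Lie, and it keeps the averaging operators that commute with `N`, such as `P × α`. Conversely,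
a semidirect product is an averaging pre-Lie algebra only if its actions form a representation.
-/

section Deformation

variable {R L L' M : Type*} [CommRing R] [AddCommGroup L] [Module R L]
  [AddCommGroup L'] [Module R L'] [AddCommGroup M] [Module R M]

/-- The associator `(x ∘ y) ∘ z - x ∘ (y ∘ z)` of a bilinear product. Products are bilinear maps
rather than instances because several of them live on the same module. -/
def bilinAssociator (mul : L →ₗ[R] L →ₗ[R] L) (x y z : L) : L :=
  mul (mul x y) z - mul x (mul y z)

/-- Left pre-Lie products: the associator is symmetric in its first two arguments. -/
def IsPreLie (mul : L →ₗ[R] L →ₗ[R] L) : Prop :=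
  ∀ x y z, bilinAssociator mul x y z = bilinAssociator mul y x z

/-- Compatibility of an action `B` of `L` on `M` with operators `P` on `L` and `α` on `M`. For a
product acting on `L` itself and `α = P`, this says that `P` is an averaging operator. -/
def IsAveraging (B : L →ₗ[R] Module.End R M) (P : Module.End R L) (α : Module.End R M) : Prop :=
  ∀ x v, B (P x) (α v) = α (B (P x) v) ∧ α (B (P x) v) = α (B x (α v))

/-- The deformation `x ∘_N y = N x ∘ y + x ∘ N y - N (x ∘ y)` of a product by an operator. -/
def deformedMul (mul : L →ₗ[R] L →ₗ[R] L) (N : Module.End R L) : L →ₗ[R] L →ₗ[R] L :=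
  mul ∘ₗ N + mul.compl₂ N - mul.compr₂ N

/-- Nijenhuis operators: `N` is multiplicative from the deformed product to the original one. -/
def IsNijenhuis (mul : L →ₗ[R] L →ₗ[R] L) (N : Module.End R L) : Prop :=
  ∀ x y, mul (N x) (N y) = N (deformedMul mul N x y)

theorem IsPreLie.of_injective {mul : L →ₗ[R] L →ₗ[R] L} {mul' : L' →ₗ[R] L' →ₗ[R] L'}
    (h : IsPreLie mul') (f : L →ₗ[R] L') (hf : Function.Injective f)
    (hmul : ∀ x y, f (mul x y) = mul' (f x) (f y)) : IsPreLie mul := by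
  intro x y z
  apply hf
  simpa only [bilinAssociator, map_sub, hmul] using h (f x) (f y) (f z)

theorem IsAveraging.of_injective {mul : L →ₗ[R] L →ₗ[R] L} {mul' : L' →ₗ[R] L' →ₗ[R] L'}
    {P : Module.End R L} {P' : Module.End R L'} (h : IsAveraging mul' P' P')
    (f : L →ₗ[R] L') (hf : Function.Injective f)
    (hmul : ∀ x y, f (mul x y) = mul' (f x) (f y)) (hP : ∀ x, f (P x) = P' (f x)) :
    IsAveraging mul P P := by
  intro x y
  simpa only [← hf.eq_iff, hmul, hP] using h (f x) (f y)

theorem deformedMul_apply (mul : L →ₗ[R] L →ₗ[R] L) (N : Module.End R L) (x y : L) :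
    deformedMul mul N x y = mul (N x) y + mul x (N y) - N (mul x y) :=
  rfl

theorem IsNijenhuis.bilinAssociator_deformedMul {mul : L →ₗ[R] L →ₗ[R] L} {N : Module.End R L}
    (hN : IsNijenhuis mul N) (x y z : L) :
    bilinAssociator (deformedMul mul N) x y z =
      bilinAssociator mul (N x) (N y) z + bilinAssociator mul (N x) y (N z)
        + bilinAssociator mul x (N y) (N z)
        - N (bilinAssociator mul (N x) y z + bilinAssociator mul x (N y) z
          + bilinAssociator mul x y (N z))
        + N (N (bilinAssociator mul x y z)) := by
  have left : deformedMul mul N (deformedMul mul N x y) z =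
      mul (mul (N x) (N y)) z + mul (mul (N x) y) (N z) + mul (mul x (N y)) (N z)
        - N (mul (mul (N x) y) z + mul (mul x (N y)) z + mul (mul x y) (N z))
        + N (N (mul (mul x y) z)) := by
    have hxy := hN (mul x y) z
    rw [deformedMul_apply mul N (deformedMul mul N x y), ← hN x y]
    simp only [deformedMul_apply, map_add, map_sub, LinearMap.add_apply,
      LinearMap.sub_apply] at hxy ⊢
    rw [hxy]
    abel
  have right : deformedMul mul N x (deformedMul mul N y z) =
      mul (N x) (mul (N y) z) + mul (N x) (mul y (N z)) + mul x (mul (N y) (N z))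
        - N (mul (N x) (mul y z) + mul x (mul (N y) z) + mul x (mul y (N z)))
        + N (N (mul x (mul y z))) := by
    have hyz := hN x (mul y z)
    rw [deformedMul_apply mul N x, ← hN y z]
    simp only [deformedMul_apply, map_add, map_sub] at hyz ⊢
    rw [hyz]
    abel
  simp only [bilinAssociator, left, right, map_add, map_sub]
  abel

theorem IsPreLie.deformedMul {mul : L →ₗ[R] L →ₗ[R] L} {N : Module.End R L}
    (hmul : IsPreLie mul) (hN : IsNijenhuis mul N) : IsPreLie (deformedMul mul N) := by
  intro x y z
  rw [hN.bilinAssociator_deformedMul, hN.bilinAssociator_deformedMul, hmul (N x) (N y) z,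
    hmul (N x) y, hmul x (N y) (N z), hmul (N x) y, hmul x (N y) z, hmul x y (N z), hmul x y z]
  simp only [map_add]
  abel

theorem IsAveraging.deformedMul {mul : L →ₗ[R] L →ₗ[R] L} {P N : Module.End R L}
    (hP : IsAveraging mul P P) (hPN : ∀ x, P (N x) = N (P x)) :
    IsAveraging (deformedMul mul N) P P := by
  intro x y
  simp only [deformedMul_apply, map_add, map_sub, ← hPN, (hP _ _).1, (hP _ _).2]
  -- For `N (x ∘ y)`, the operator `P` has to be moved inside `N` to reach the product.
  simp only [hPN, (hP _ _).2, and_self]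

end Deformation

section Semidirect

variable {R L M : Type*} [CommRing R] [AddCommGroup L] [Module R L] [AddCommGroup M] [Module R M]

/-- Representations of a pre-Lie product by a left action `ρ` and a right action `φ`. -/
structure IsRep (mul : L →ₗ[R] L →ₗ[R] L) (ρ φ : L →ₗ[R] Module.End R M) : Prop where
  left_commutator : ∀ x y v, ρ (mul x y - mul y x) v = ρ x (ρ y v) - ρ y (ρ x v)
  right_mul : ∀ x y v, φ (mul x y) v = ρ x (φ y v) - φ y (ρ x v) + φ y (φ x v)

/-- The semidirect product `(x, u) ∘ (y, v) = (x ∘ y, ρ x v + φ y u)`. -/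
def semidirectMul (mul : L →ₗ[R] L →ₗ[R] L) (ρ φ : L →ₗ[R] Module.End R M) :
    L × M →ₗ[R] L × M →ₗ[R] L × M :=
  LinearMap.mk₂ R (fun X Y ↦ (mul X.1 Y.1, ρ X.1 Y.2 + φ Y.1 X.2))
    (fun X X' Y ↦ by ext <;> simp [add_add_add_comm]) (fun c X Y ↦ by ext <;> simp)
    (fun X Y Y' ↦ by ext <;> simp [add_add_add_comm]) (fun c X Y ↦ by ext <;> simp)

theorem semidirectMul_apply (mul : L →ₗ[R] L →ₗ[R] L) (ρ φ : L →ₗ[R] Module.End R M)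
    (X Y : L × M) :
    semidirectMul mul ρ φ X Y = (mul X.1 Y.1, ρ X.1 Y.2 + φ Y.1 X.2) :=
  rfl

theorem isPreLie_semidirectMul_iff {mul : L →ₗ[R] L →ₗ[R] L} {ρ φ : L →ₗ[R] Module.End R M} :
    IsPreLie (semidirectMul mul ρ φ) ↔ IsPreLie mul ∧ IsRep mul ρ φ := by
  constructor
  · intro h
    refine ⟨fun x y z ↦ congrArg Prod.fst (h (x, 0) (y, 0) (z, 0)), fun x y v ↦ ?_,
      fun x y v ↦ ?_⟩
    · have hv := congrArg Prod.snd (h (x, 0) (y, 0) (0, v))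
      simp only [bilinAssociator, semidirectMul_apply, Prod.snd_sub, map_zero,
        add_zero] at hv
      rw [map_sub, LinearMap.sub_apply]
      linear_combination (norm := abel) hv
    · have hv := congrArg Prod.snd (h (x, 0) (0, v) (y, 0))
      simp only [bilinAssociator, semidirectMul_apply, Prod.snd_sub, map_zero, add_zero, zero_add,
        LinearMap.zero_apply] at hv
      linear_combination (norm := abel) hv
  · rintro ⟨hmul, hrep⟩ ⟨x, u⟩ ⟨y, v⟩ ⟨z, w⟩
    refine Prod.ext (hmul x y z) ?_
    have hw := hrep.left_commutator x y w
    rw [map_sub, LinearMap.sub_apply] at hw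
    simp only [bilinAssociator, semidirectMul_apply, Prod.snd_sub, map_add,
      hrep.right_mul]
    linear_combination (norm := abel) hw

theorem isAveraging_semidirectMul_iff {mul : L →ₗ[R] L →ₗ[R] L} {ρ φ : L →ₗ[R] Module.End R M}
    {P : Module.End R L} {α : Module.End R M} :
    IsAveraging (semidirectMul mul ρ φ) (P.prodMap α) (P.prodMap α) ↔
      IsAveraging mul P P ∧ IsAveraging ρ P α ∧ IsAveraging φ P α := by
  constructor
  · intro h
    refine ⟨fun x y ↦ ?_, fun x v ↦ ?_, fun x v ↦ ?_⟩
    · simpa [semidirectMul_apply] using h (x, 0) (y, 0)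
    · simpa [semidirectMul_apply] using h (x, 0) (0, v)
    · obtain ⟨hinner, houter⟩ :
          φ (P x) (α v) = α (φ x (α v)) ∧ α (φ x (α v)) = α (φ (P x) v) := by
        simpa [semidirectMul_apply] using h (0, v) (x, 0)
      exact ⟨hinner.trans houter, houter.symm⟩
  · rintro ⟨hmul, hρ, hφ⟩ ⟨x, u⟩ ⟨y, v⟩
    simp only [semidirectMul_apply, LinearMap.prodMap_apply, map_add, (hmul _ _).1, (hmul _ _).2,
      (hρ _ _).1, (hρ _ _).2, (hφ _ _).1, (hφ _ _).2, and_self]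

end Semidirect

section RelativeRotaBaxter

variable {R L M : Type*} [CommRing R] [AddCommGroup L] [Module R L] [AddCommGroup M] [Module R M]

/-- The descendent product `circT` as a bilinear map, over any commutative ring. -/
def descendentMul (ρ φ : L →ₗ[R] Module.End R M) (T : M →ₗ[R] L) : M →ₗ[R] M →ₗ[R] M :=
  ρ ∘ₗ T + (φ ∘ₗ T).flip

/-- The left action `rho'` of the descendent product, over any commutative ring. -/
def descendentLeft (mul : L →ₗ[R] L →ₗ[R] L) (φ : L →ₗ[R] Module.End R M) (T : M →ₗ[R] L) :
    M →ₗ[R] Module.End R L :=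
  -φ.flip.compr₂ T + mul ∘ₗ T

/-- The right action `phi'` of the descendent product, over any commutative ring. -/
def descendentRight (mul : L →ₗ[R] L →ₗ[R] L) (ρ : L →ₗ[R] Module.End R M) (T : M →ₗ[R] L) :
    M →ₗ[R] Module.End R L :=
  -ρ.flip.compr₂ T + mul.flip ∘ₗ T

/-- Relative Rota-Baxter operators: `T` is multiplicative from the descendent product. -/
def IsRelativeRotaBaxter (mul : L →ₗ[R] L →ₗ[R] L) (ρ φ : L →ₗ[R] Module.End R M)
    (T : M →ₗ[R] L) : Prop :=
  ∀ u v, mul (T u) (T v) = T (descendentMul ρ φ T u v)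

/-- The operator `(x, v) ↦ (T v, 0)` on `L × M`, by which the semidirect product is deformed. -/
def squareZeroLift (T : M →ₗ[R] L) : Module.End R (L × M) :=
  LinearMap.inl R L M ∘ₗ T ∘ₗ LinearMap.snd R L M

theorem squareZeroLift_apply (T : M →ₗ[R] L) (X : L × M) : squareZeroLift T X = (T X.2, 0) :=
  rfl

variable {mul : L →ₗ[R] L →ₗ[R] L} {ρ φ : L →ₗ[R] Module.End R M} {T : M →ₗ[R] L}

theorem deformedMul_semidirectMul_squareZeroLift (X Y : L × M) :
    deformedMul (semidirectMul mul ρ φ) (squareZeroLift T) X Y =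
      (semidirectMul (descendentMul ρ φ T) (descendentLeft mul φ T) (descendentRight mul ρ T)
        X.swap Y.swap).swap := by
  refine Prod.ext ?_ ?_
  · change mul (T X.2) Y.1 + mul X.1 (T Y.2) - T (ρ X.1 Y.2 + φ Y.1 X.2) =
      -T (φ Y.1 X.2) + mul (T X.2) Y.1 + (-T (ρ X.1 Y.2) + mul X.1 (T Y.2))
    rw [map_add]
    abel
  · simp [deformedMul_apply, semidirectMul_apply, squareZeroLift_apply, descendentMul]

theorem IsRelativeRotaBaxter.isNijenhuis_squareZeroLift (hT : IsRelativeRotaBaxter mul ρ φ T) :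
    IsNijenhuis (semidirectMul mul ρ φ) (squareZeroLift T) := by
  intro X Y
  simp [deformedMul_semidirectMul_squareZeroLift, semidirectMul_apply, squareZeroLift_apply,
    hT X.2 Y.2]

theorem IsRelativeRotaBaxter.isPreLie_isRep_descendent (hT : IsRelativeRotaBaxter mul ρ φ T)
    (hmul : IsPreLie mul) (hrep : IsRep mul ρ φ) :
    IsPreLie (descendentMul ρ φ T) ∧
      IsRep (descendentMul ρ φ T) (descendentLeft mul φ T) (descendentRight mul ρ T) := by
  have hdeformed := (isPreLie_semidirectMul_iff.2 ⟨hmul, hrep⟩).deformedMul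
    hT.isNijenhuis_squareZeroLift
  exact isPreLie_semidirectMul_iff.1 <| hdeformed.of_injective
    (LinearEquiv.prodComm R M L).toLinearMap (LinearEquiv.prodComm R M L).injective
    fun X Y ↦ (deformedMul_semidirectMul_squareZeroLift X.swap Y.swap).symm

theorem isAveraging_descendent {P : Module.End R L} {α : Module.End R M}
    (hmul : IsAveraging mul P P) (hρ : IsAveraging ρ P α) (hφ : IsAveraging φ P α)
    (hPT : ∀ v, P (T v) = T (α v)) :
    IsAveraging (descendentMul ρ φ T) α α ∧ IsAveraging (descendentLeft mul φ T) α P ∧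
      IsAveraging (descendentRight mul ρ T) α P := by
  have hcomm (X : L × M) :
      P.prodMap α (squareZeroLift T X) = squareZeroLift T (P.prodMap α X) := by
    simp [squareZeroLift_apply, hPT]
  have hdeformed := (isAveraging_semidirectMul_iff.2 ⟨hmul, hρ, hφ⟩).deformedMul hcomm
  exact isAveraging_semidirectMul_iff.1 <| hdeformed.of_injective
    (LinearEquiv.prodComm R M L).toLinearMap (LinearEquiv.prodComm R M L).injective
    (fun X Y ↦ (deformedMul_semidirectMul_squareZeroLift X.swap Y.swap).symm) fun _ ↦ rfl

theorem rep_on_A_of_relative_RB_general {P : Module.End R L} {α : Module.End R M}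
    (hmul : IsPreLie mul) (hP : IsAveraging mul P P) (hrep : IsRep mul ρ φ)
    (hρ : IsAveraging ρ P α) (hφ : IsAveraging φ P α) (hT : IsRelativeRotaBaxter mul ρ φ T)
    (hPT : ∀ v, P (T v) = T (α v)) :
    IsRep (descendentMul ρ φ T) (descendentLeft mul φ T) (descendentRight mul ρ T) ∧
      IsAveraging (descendentLeft mul φ T) α P ∧ IsAveraging (descendentRight mul ρ T) α P :=
  ⟨(hT.isPreLie_isRep_descendent hmul hrep).2, (isAveraging_descendent hP hρ hφ hPT).2⟩

end RelativeRotaBaxter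

/-- Let `T : V → A` be a relative Rota-Baxter operator on an averaging pre-Lie algebra
`((A,∘),P)` with respect to a representation `((V,ρ,φ),α)`.  Then `((A,ρ',φ'),P)` is a
representation of the descendent averaging pre-Lie algebra `((V,∘_T),α)`. -/
theorem rep_on_A_of_relative_RB
    (mul : A →ₗ[k] A →ₗ[k] A) (P : A →ₗ[k] A)
    (ρ φ : A →ₗ[k] Module.End k V) (α : V →ₗ[k] V) (T : V →ₗ[k] A)
    (hpre : ∀ x y z : A,
      mul (mul x y) z - mul x (mul y z) = mul (mul y x) z - mul y (mul x z))
    (havg1 : ∀ x y : A, mul (P x) (P y) = P (mul (P x) y))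
    (havg2 : ∀ x y : A, mul (P x) (P y) = P (mul x (P y)))
    (hrep1 : ∀ (x y : A) (v : V), ρ (mul x y - mul y x) v = ρ x (ρ y v) - ρ y (ρ x v))
    (hrep2 : ∀ (x y : A) (v : V),
      φ (mul x y) v = ρ x (φ y v) - φ y (ρ x v) + φ y (φ x v))
    (halpha1 : ∀ (x : A) (v : V),
      ρ (P x) (α v) = α (ρ (P x) v) ∧ α (ρ (P x) v) = α (ρ x (α v)))
    (halpha2 : ∀ (x : A) (v : V),
      φ (P x) (α v) = α (φ (P x) v) ∧ α (φ (P x) v) = α (φ x (α v)))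
    (hT : ∀ u v : V, mul (T u) (T v) = T (ρ (T u) v + φ (T v) u))
    (hPT : ∀ v : V, P (T v) = T (α v)) :
    -- `(A,ρ',φ')` is a representation of the pre-Lie algebra `(V,∘_T)`
    (∀ (u v : V) (x : A),
      rho' mul ρ φ T (circT ρ φ T u v - circT ρ φ T v u) x
        = rho' mul ρ φ T u (rho' mul ρ φ T v x) - rho' mul ρ φ T v (rho' mul ρ φ T u x)) ∧
    (∀ (u v : V) (x : A),
      phi' mul ρ φ T (circT ρ φ T u v) x
        = rho' mul ρ φ T u (phi' mul ρ φ T v x) - phi' mul ρ φ T v (rho' mul ρ φ T u x)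
          + phi' mul ρ φ T v (phi' mul ρ φ T u x)) ∧
    -- compatibility of `P` with `α` through `ρ'` and `φ'`
    (∀ (u : V) (x : A),
      rho' mul ρ φ T (α u) (P x) = P (rho' mul ρ φ T (α u) x) ∧
      P (rho' mul ρ φ T (α u) x) = P (rho' mul ρ φ T u (P x))) ∧
    (∀ (u : V) (x : A),
      phi' mul ρ φ T (α u) (P x) = P (phi' mul ρ φ T (α u) x) ∧
      P (phi' mul ρ φ T (α u) x) = P (phi' mul ρ φ T u (P x))) := by
  obtain ⟨⟨hleft, hright⟩, havg⟩ := rep_on_A_of_relative_RB_general hpre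
    (fun x y ↦ ⟨havg1 x y, (havg1 x y).symm.trans (havg2 x y)⟩) ⟨hrep1, hrep2⟩
    halpha1 halpha2 hT hPT
  exact ⟨hleft, hright, havg⟩

end Stmt13
end

section
/- Let ((A,∘),P,ω) be a finite-dimensional quadratic averaging pre-Lie algebra (ω nondegenerate, skew-symmetric, satisfying ω(x∘y,z) + ω(y, x∘z − z∘x) = 0 and ω(P(x),y) = ω(x,P(y))), and let T : A* → A be a linear map. Then T is a relative Rota-Baxter operator on ((A,∘),P) with respect to the coregular representation ((A*, L*−R*, −R*), P*) — i.e. T(ξ)∘T(η) = T((L*−R*)(T(ξ))η − R*(T(η))ξ) for all ξ,η ∈ A* and P∘T = T∘P* — if and only if T∘ω♯ is a Rota-Baxter operator of weight 0 on the averaging pre-Lie algebra ((A,∘),P), i.e. (T∘ω♯)(x)∘(T∘ω♯)(y) = (T∘ω♯)((T∘ω♯)(x)∘y + x∘(T∘ω♯)(y)) for all x,y ∈ A and P∘(T∘ω♯) = (T∘ω♯)∘P, where ω♯ : A → A* is defined by ⟨ω♯(x),y⟩ = ω(x,y). -/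
/-!
If `φ` is a surjective intertwining map of representations, then `T` is a relative Rota-Baxter
operator if and only if `T ∘ φ` is.
Invariance and skew-symmetry of `ω` make `R_b` self-adjoint for `ω` and `R_a - L_a` the adjoint of
`L_a`, which says that `ω♯` intertwines the regular representation of `(A,∘)` with the coregular
one; self-adjointness of `P` makes it intertwine `P` with `P*`. Nondegeneracy makes `ω♯` bijective,
and a relative Rota-Baxter operator for the regular representation is a Rota-Baxter operator.
-/

namespace Stmt14

variable {k A : Type*} [Field k] [CharZero k] [AddCommGroup A] [Module k A]

/-- Transpose a family of endomorphisms of `A` to a family of endomorphisms of `A*`.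
With `L = mul` and `R = mul.flip`, `L* − R* = dualTr (R − L)` and `−R* = dualTr R`. -/
noncomputable def dualTr (f : A →ₗ[k] Module.End k A) :
    A →ₗ[k] Module.End k (Module.Dual k A) :=
  (Module.Dual.transpose (R := k)).comp f

section RotaBaxter

variable {R M V W : Type*} [CommSemiring R] [AddCommMonoid M] [Module R M]
  [AddCommMonoid V] [Module R V] [AddCommMonoid W] [Module R W]
  {mul : M →ₗ[R] M →ₗ[R] M} {P : M →ₗ[R] M}

/-- `T : V → M` is a relative Rota-Baxter operator of weight `0` on the algebra `M` with
operator `P`, with respect to the space `V` on which `M` acts from the left by `l` and from the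
right by `r`, and which carries the operator `Q`. The identities defining an averaging
representation are not part of the notion. -/
def IsRelativeRotaBaxter (mul : M →ₗ[R] M →ₗ[R] M) (P : M →ₗ[R] M)
    (l r : M →ₗ[R] Module.End R V) (Q : Module.End R V) (T : V →ₗ[R] M) : Prop :=
  (∀ u v, mul (T u) (T v) = T (l (T u) v + r (T v) u)) ∧ ∀ v, P (T v) = T (Q v)

/-- `K : M → M` is a Rota-Baxter operator of weight `0` on the algebra `M` with operator `P`:
a relative one with respect to the regular representation, so that the right action of `b` on `x`
is `x ∘ b` and the identity reads `K x ∘ K y = K (K x ∘ y + x ∘ K y)`. -/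
def IsRotaBaxter (mul : M →ₗ[R] M →ₗ[R] M) (P K : M →ₗ[R] M) : Prop :=
  IsRelativeRotaBaxter mul P mul mul.flip P K

theorem isRelativeRotaBaxter_iff_comp {l r : M →ₗ[R] Module.End R V} {Q : Module.End R V}
    {l' r' : M →ₗ[R] Module.End R W} {Q' : Module.End R W} {φ : W →ₗ[R] V}
    (hφ : Function.Surjective φ) (hl : ∀ a w, φ (l' a w) = l a (φ w))
    (hr : ∀ a w, φ (r' a w) = r a (φ w)) (hQ : ∀ w, φ (Q' w) = Q (φ w)) (T : V →ₗ[R] M) :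
    IsRelativeRotaBaxter mul P l r Q T ↔ IsRelativeRotaBaxter mul P l' r' Q' (T ∘ₗ φ) := by
  simp only [IsRelativeRotaBaxter, hφ.forall, LinearMap.comp_apply, map_add, hl, hr, hQ]

end RotaBaxter

section Coregular

variable {R M : Type*} [CommRing R] [AddCommGroup M] [Module R M]
  {mul : M →ₗ[R] M →ₗ[R] M} {P : M →ₗ[R] M} {ω : M →ₗ[R] Module.Dual R M}

/-- The left action `L* - R*` of the coregular representation on the dual module. With the
convention `⟨L*_x ξ, y⟩ = -⟨ξ, x ∘ y⟩`, it is the transpose of `R - L`. -/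
def coregularLeft (mul : M →ₗ[R] M →ₗ[R] M) : M →ₗ[R] Module.End R (Module.Dual R M) :=
  Module.Dual.transpose (R := R) ∘ₗ (mul.flip - mul)

/-- The right action `-R*` of the coregular representation on the dual module. With the
convention `⟨R*_x ξ, y⟩ = -⟨ξ, y ∘ x⟩`, it is the transpose of `R`. -/
def coregularRight (mul : M →ₗ[R] M →ₗ[R] M) : M →ₗ[R] Module.End R (Module.Dual R M) :=
  Module.Dual.transpose (R := R) ∘ₗ mul.flip

theorem apply_eq_dualMap_of_isAdjointPair {f g : Module.End R M}
    (h : LinearMap.IsAdjointPair ω ω f g) (x : M) : ω (f x) = g.dualMap (ω x) :=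
  LinearMap.ext (h x)

theorem isAdjointPair_mul_of_invariant
    (hinv : ∀ x y z, ω (mul x y) z + ω y (mul x z - mul z x) = 0) (a : M) :
    LinearMap.IsAdjointPair ω ω (mul a) ((mul.flip - mul) a) := fun y z =>
  calc ω (mul a y) z = -ω y (mul a z - mul z a) := eq_neg_of_add_eq_zero_left (hinv a y z)
    _ = ω y (mul z a - mul a z) := by rw [← map_neg, neg_sub]

theorem isSelfAdjoint_mul_flip_of_invariant (hskew : ∀ x y, ω x y = -ω y x)
    (hinv : ∀ x y z, ω (mul x y) z + ω y (mul x z - mul z x) = 0) (b : M) :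
    LinearMap.IsSelfAdjoint ω (mul.flip b) := fun x z =>
  calc ω (mul x b) z = ω b (mul z x - mul x z) := isAdjointPair_mul_of_invariant hinv x b z
    _ = -ω b (mul x z - mul z x) := by rw [← map_neg, neg_sub]
    _ = -ω (mul z b) x := congrArg Neg.neg (isAdjointPair_mul_of_invariant hinv z b x).symm
    _ = ω x (mul z b) := (hskew x (mul z b)).symm

theorem relative_RB_iff_RB_general {T : Module.Dual R M →ₗ[R] M}
    (hskew : ∀ x y, ω x y = -ω y x)
    (hinv : ∀ x y z, ω (mul x y) z + ω y (mul x z - mul z x) = 0)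
    (hcomp : LinearMap.IsSelfAdjoint ω P) (hsurj : Function.Surjective ω) :
    IsRelativeRotaBaxter mul P (coregularLeft mul) (coregularRight mul) P.dualMap T ↔
      IsRotaBaxter mul P (T ∘ₗ ω) := by
  have hleft (a x : M) : ω (mul a x) = coregularLeft mul a (ω x) :=
    apply_eq_dualMap_of_isAdjointPair (isAdjointPair_mul_of_invariant hinv a) x
  have hright (b x : M) : ω (mul.flip b x) = coregularRight mul b (ω x) :=
    apply_eq_dualMap_of_isAdjointPair (isSelfAdjoint_mul_flip_of_invariant hskew hinv b) x
  have hdual (x : M) : ω (P x) = P.dualMap (ω x) := apply_eq_dualMap_of_isAdjointPair hcomp x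
  exact isRelativeRotaBaxter_iff_comp hsurj hleft hright hdual T

end Coregular

theorem surjective_of_separatingLeft {K V : Type*} [Field K] [AddCommGroup V] [Module K V]
    [FiniteDimensional K V] {B : V →ₗ[K] Module.Dual K V} (hB : B.SeparatingLeft) :
    Function.Surjective B :=
  (LinearMap.injective_iff_surjective_of_finrank_eq_finrank Subspace.dual_finrank_eq.symm).1
    (LinearMap.ker_eq_bot.1 (LinearMap.separatingLeft_iff_ker_eq_bot.1 hB))

/-- Let `((A,∘),P,ω)` be a finite-dimensional quadratic averaging pre-Lie algebra and
`T : A* → A` linear.  Then `T` is a relative Rota-Baxter operator on `((A,∘),P)` with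
respect to the coregular representation `((A*,L*−R*,−R*),P*)` if and only if `T∘ω♯` is
a Rota-Baxter operator of weight `0` on the averaging pre-Lie algebra `((A,∘),P)`. -/
theorem relative_RB_iff_RB [FiniteDimensional k A]
    (mul : A →ₗ[k] A →ₗ[k] A) (P : A →ₗ[k] A) (ω : A →ₗ[k] Module.Dual k A)
    (T : Module.Dual k A →ₗ[k] A)
    (hpre : ∀ x y z : A,
      mul (mul x y) z - mul x (mul y z) = mul (mul y x) z - mul y (mul x z))
    (havg1 : ∀ x y : A, mul (P x) (P y) = P (mul (P x) y))
    (havg2 : ∀ x y : A, mul (P x) (P y) = P (mul x (P y)))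
    (hskew : ∀ x y : A, ω x y = -(ω y x))
    (hnondeg : ∀ x : A, (∀ y : A, ω x y = 0) → x = 0)
    (hinv : ∀ x y z : A, ω (mul x y) z + ω y (mul x z - mul z x) = 0)
    (hcomp : ∀ x y : A, ω (P x) y = ω x (P y)) :
    ((∀ ξ η : Module.Dual k A,
        mul (T ξ) (T η)
          = T (dualTr (mul.flip - mul) (T ξ) η + dualTr mul.flip (T η) ξ)) ∧
      (∀ ξ : Module.Dual k A, P (T ξ) = T (P.dualMap ξ)))
      ↔
    ((∀ x y : A,
        mul (T (ω x)) (T (ω y))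
          = T (ω (mul (T (ω x)) y + mul x (T (ω y))))) ∧
      (∀ x : A, P (T (ω x)) = T (ω (P x)))) :=
  relative_RB_iff_RB_general hskew hinv hcomp (surjective_of_separatingLeft hnondeg)

end Stmt14
end

section
/- Let A be a finite-dimensional vector space, Δ : A → A⊗A a linear map making (A,Δ) a pre-Lie coalgebra, and S : A → A a linear map with (S⊗S)Δ(x) = (S⊗id)Δ(S(x)) = (id⊗S)Δ(S(x)) for all x ∈ A. Define δ := Δ − τ∘Δ, where τ(a⊗b) = b⊗a. Then ((A,δ),S) is an averaging Lie coalgebra: δ is antisymmetric (δ = −τ∘δ), δ satisfies the co-Jacobi identity (id + σ + σ²)(id⊗δ)δ = 0 where σ(x⊗y⊗z) = z⊗x⊗y, and (S⊗S)δ(x) = (S⊗id)δ(S(x)) = (id⊗S)δ(S(x)) for all x ∈ A. -/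
/-!
The co-Jacobi identity is the dual of the fact that every pre-Lie algebra is Lie-admissible.
Expanding `(id ⊗ δ)δ` with `δ = Δ - τΔ` gives the terms `(id ⊗ Δ)Δ` and `τ((Δ ⊗ id)Δ)`, each
minus its image under `id ⊗ τ`. Up to the cyclic rotation `σ`, the flip `id ⊗ τ` acts as `τ ⊗ id`,
so after summing over rotations only `(τ ⊗ id)a - a` survives, where `a = (Δ ⊗ id)Δ - (id ⊗ Δ)Δ`
is the coassociator; this vanishes exactly when `Δ` is a pre-Lie comultiplication. The averaging
identities pass from `Δ` to `δ` because `τ` exchanges `S ⊗ id` with `id ⊗ S`.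
-/

open TensorProduct

namespace Stmt15

variable {k A : Type*} [Field k] [CharZero k] [AddCommGroup A] [Module k A]

/-- The flip `τ : A⊗A → A⊗A`, `τ(a⊗b) = b⊗a`. -/
noncomputable def τ (k A : Type*) [Field k] [AddCommGroup A] [Module k A] :
    A ⊗[k] A →ₗ[k] A ⊗[k] A :=
  (TensorProduct.comm k A A).toLinearMap

/-- `τ ⊗ id` on `(A⊗A)⊗A`. -/
noncomputable def τ12 (k A : Type*) [Field k] [AddCommGroup A] [Module k A] :
    (A ⊗[k] A) ⊗[k] A →ₗ[k] (A ⊗[k] A) ⊗[k] A :=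
  TensorProduct.map (τ k A) LinearMap.id

/-- `(Δ ⊗ id) ∘ Δ : A → (A⊗A)⊗A`. -/
noncomputable def coL (Δ : A →ₗ[k] A ⊗[k] A) : A →ₗ[k] (A ⊗[k] A) ⊗[k] A :=
  (TensorProduct.map Δ LinearMap.id).comp Δ

/-- `(id ⊗ Δ) ∘ Δ : A → (A⊗A)⊗A` (re-associated). -/
noncomputable def coR (Δ : A →ₗ[k] A ⊗[k] A) : A →ₗ[k] (A ⊗[k] A) ⊗[k] A :=
  ((TensorProduct.assoc k A A A).symm.toLinearMap.comp
    (TensorProduct.map LinearMap.id Δ)).comp Δ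

/-- The cyclic permutation `σ : A⊗(A⊗A) → A⊗(A⊗A)`, `σ(x⊗(y⊗z)) = z⊗(x⊗y)`. -/
noncomputable def σ (k A : Type*) [Field k] [AddCommGroup A] [Module k A] :
    A ⊗[k] (A ⊗[k] A) →ₗ[k] A ⊗[k] (A ⊗[k] A) :=
  (TensorProduct.comm k (A ⊗[k] A) A).toLinearMap.comp
    (TensorProduct.assoc k A A A).symm.toLinearMap

/-- `δ := Δ − τ∘Δ`. -/
noncomputable def δof (Δ : A →ₗ[k] A ⊗[k] A) : A →ₗ[k] A ⊗[k] A :=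
  Δ - (τ k A).comp Δ

section General

variable {R M : Type*} [CommRing R] [AddCommGroup M] [Module R M]

/-- The dual of the associator `(xy)z - x(yz)`: the map `(Δ ⊗ id)Δ - (id ⊗ Δ)Δ`, bracketed to the
left. -/
noncomputable def coassociator (Δ : M →ₗ[R] M ⊗[R] M) : M →ₗ[R] (M ⊗[R] M) ⊗[R] M :=
  Δ.rTensor M ∘ₗ Δ - (TensorProduct.assoc R M M M).symm.toLinearMap ∘ₗ Δ.lTensor M ∘ₗ Δ

/-- The pre-Lie coalgebra axiom: the coassociator is symmetric in its first two tensor factors. -/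
def IsPreLieCoalgebra (Δ : M →ₗ[R] M ⊗[R] M) : Prop :=
  ∀ x, coassociator Δ x =
    (TensorProduct.comm R M M).toLinearMap.rTensor M (coassociator Δ x)

/-- The cyclic rotation `σ(x ⊗ (y ⊗ z)) = z ⊗ (x ⊗ y)`. -/
noncomputable def cyclicPerm (R M : Type*) [CommRing R] [AddCommGroup M] [Module R M] :
    M ⊗[R] (M ⊗[R] M) →ₗ[R] M ⊗[R] (M ⊗[R] M) :=
  (TensorProduct.comm R (M ⊗[R] M) M).toLinearMap ∘ₗ
    (TensorProduct.assoc R M M M).symm.toLinearMap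

/-- The sum `id + σ + σ²` over the rotations of three tensor factors, used to state the co-Jacobi
identity. -/
noncomputable def cyclicSum (R M : Type*) [CommRing R] [AddCommGroup M] [Module R M] :
    M ⊗[R] (M ⊗[R] M) →ₗ[R] M ⊗[R] (M ⊗[R] M) :=
  LinearMap.id + cyclicPerm R M + cyclicPerm R M ∘ₗ cyclicPerm R M

/-- The Lie coalgebra axioms for a cobracket `δ`. Antisymmetry is `δ = -τδ`, which in
characteristic `2` is weaker than requiring `δ` to take values in the image of `id - τ`. -/
structure IsLieCoalgebra (δ : M →ₗ[R] M ⊗[R] M) : Prop where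
  antisymm : ∀ x, δ x = -TensorProduct.comm R M M (δ x)
  coJacobi : ∀ x, cyclicSum R M (δ.lTensor M (δ x)) = 0

/-- `S` is an averaging operator for the comultiplication `Δ`. No axiom is imposed on `Δ`, so that
the notion serves pre-Lie and Lie coalgebras alike. -/
def IsAveraging (Δ : M →ₗ[R] M ⊗[R] M) (S : M →ₗ[R] M) : Prop :=
  ∀ x, TensorProduct.map S S (Δ x) = S.rTensor M (Δ (S x)) ∧
    S.rTensor M (Δ (S x)) = S.lTensor M (Δ (S x))

/-- The cocommutator `δ = Δ - τΔ` of a comultiplication `Δ`, dual to the commutator bracket. -/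
noncomputable def cocommutator (Δ : M →ₗ[R] M ⊗[R] M) : M →ₗ[R] M ⊗[R] M :=
  Δ - (TensorProduct.comm R M M).toLinearMap ∘ₗ Δ

lemma cocommutator_apply (Δ : M →ₗ[R] M ⊗[R] M) (x : M) :
    cocommutator Δ x = Δ x - TensorProduct.comm R M M (Δ x) :=
  rfl

lemma cocommutator_antisymm (Δ : M →ₗ[R] M ⊗[R] M) (x : M) :
    cocommutator Δ x = -TensorProduct.comm R M M (cocommutator Δ x) := by
  simp [cocommutator_apply]

lemma IsAveraging.cocommutator {Δ : M →ₗ[R] M ⊗[R] M} {S : M →ₗ[R] M}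
    (hS : IsAveraging Δ S) : IsAveraging (cocommutator Δ) S := by
  intro x
  obtain ⟨hmap, hrl⟩ := hS x
  simp only [cocommutator_apply, map_sub, TensorProduct.map_comm, LinearMap.rTensor_comm,
    LinearMap.lTensor_comm, hmap, hrl, and_self]

lemma lTensor_cocommutator (Δ : M →ₗ[R] M ⊗[R] M) (t : M ⊗[R] M) :
    (cocommutator Δ).lTensor M t =
      Δ.lTensor M t - (TensorProduct.comm R M M).toLinearMap.lTensor M (Δ.lTensor M t) := by
  simp [cocommutator, LinearMap.lTensor_sub, LinearMap.lTensor_comp_apply]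

lemma cyclicPerm_assoc (z : (M ⊗[R] M) ⊗[R] M) :
    cyclicPerm R M (TensorProduct.assoc R M M M z) = TensorProduct.comm R (M ⊗[R] M) M z := by
  simp [cyclicPerm]

lemma cyclicPerm_cyclicPerm_cyclicPerm (z : M ⊗[R] (M ⊗[R] M)) :
    cyclicPerm R M (cyclicPerm R M (cyclicPerm R M z)) = z := by
  have h : cyclicPerm R M ∘ₗ cyclicPerm R M ∘ₗ cyclicPerm R M = LinearMap.id := by
    ext a b c
    simp [cyclicPerm]
  exact LinearMap.congr_fun h z

lemma cyclicSum_apply (z : M ⊗[R] (M ⊗[R] M)) :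
    cyclicSum R M z = z + cyclicPerm R M z + cyclicPerm R M (cyclicPerm R M z) :=
  rfl

lemma cyclicSum_cyclicPerm (z : M ⊗[R] (M ⊗[R] M)) :
    cyclicSum R M (cyclicPerm R M z) = cyclicSum R M z := by
  simp only [cyclicSum_apply, cyclicPerm_cyclicPerm_cyclicPerm]
  abel

lemma cyclicSum_comm (z : (M ⊗[R] M) ⊗[R] M) :
    cyclicSum R M (TensorProduct.comm R (M ⊗[R] M) M z) =
      cyclicSum R M (TensorProduct.assoc R M M M z) := by
  rw [← cyclicPerm_assoc, cyclicSum_cyclicPerm]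

lemma lTensor_comm_assoc (z : (M ⊗[R] M) ⊗[R] M) :
    (TensorProduct.comm R M M).toLinearMap.lTensor M (TensorProduct.assoc R M M M z) =
      cyclicPerm R M (cyclicPerm R M (TensorProduct.assoc R M M M
        ((TensorProduct.comm R M M).toLinearMap.rTensor M z))) := by
  have h : (TensorProduct.comm R M M).toLinearMap.lTensor M ∘ₗ
        (TensorProduct.assoc R M M M).toLinearMap =
      cyclicPerm R M ∘ₗ cyclicPerm R M ∘ₗ (TensorProduct.assoc R M M M).toLinearMap ∘ₗ
        (TensorProduct.comm R M M).toLinearMap.rTensor M := by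
    ext a b c
    simp [cyclicPerm]
  exact LinearMap.congr_fun h z

lemma cyclicSum_lTensor_comm_assoc (z : (M ⊗[R] M) ⊗[R] M) :
    cyclicSum R M ((TensorProduct.comm R M M).toLinearMap.lTensor M
        (TensorProduct.assoc R M M M z)) =
      cyclicSum R M (TensorProduct.assoc R M M M
        ((TensorProduct.comm R M M).toLinearMap.rTensor M z)) := by
  rw [lTensor_comm_assoc, cyclicSum_cyclicPerm, cyclicSum_cyclicPerm]

lemma cyclicSum_lTensor_cocommutator (Δ : M →ₗ[R] M ⊗[R] M) (x : M) :
    cyclicSum R M ((cocommutator Δ).lTensor M (cocommutator Δ x)) =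
      cyclicSum R M (TensorProduct.assoc R M M M
        ((TensorProduct.comm R M M).toLinearMap.rTensor M (coassociator Δ x) -
          coassociator Δ x)) := by
  set L := Δ.rTensor M (Δ x)
  set N := (TensorProduct.assoc R M M M).symm (Δ.lTensor M (Δ x)) with hN
  have hcoassociator : coassociator Δ x = L - N := rfl
  have hexpand : Δ.lTensor M (cocommutator Δ x) =
      TensorProduct.assoc R M M M N - TensorProduct.comm R (M ⊗[R] M) M L := by
    rw [cocommutator_apply, map_sub, LinearMap.lTensor_comm, hN, LinearEquiv.apply_symm_apply]
  rw [lTensor_cocommutator, hexpand, hcoassociator]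
  simp only [map_sub, LinearMap.lTensor_comm, cyclicSum_comm, cyclicSum_lTensor_comm_assoc]
  abel

lemma IsPreLieCoalgebra.isLieCoalgebra_cocommutator {Δ : M →ₗ[R] M ⊗[R] M}
    (hΔ : IsPreLieCoalgebra Δ) : IsLieCoalgebra (cocommutator Δ) where
  antisymm := cocommutator_antisymm Δ
  coJacobi x := by
    rw [cyclicSum_lTensor_cocommutator, ← hΔ x, sub_self, map_zero, map_zero]

theorem averaging_Lie_coalgebra_of_preLie_general (Δ : M →ₗ[R] M ⊗[R] M) (S : M →ₗ[R] M)
    (hΔ : IsPreLieCoalgebra Δ) (hS : IsAveraging Δ S) :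
    IsLieCoalgebra (cocommutator Δ) ∧ IsAveraging (cocommutator Δ) S :=
  ⟨hΔ.isLieCoalgebra_cocommutator, hS.cocommutator⟩

end General

/-- Let `(A,Δ)` be a finite-dimensional pre-Lie coalgebra and `S : A → A` linear with
`(S⊗S)Δ(x) = (S⊗id)Δ(S(x)) = (id⊗S)Δ(S(x))`.  Then `((A, δ := Δ − τΔ), S)` is an
averaging Lie coalgebra: `δ` is antisymmetric, satisfies the co-Jacobi identity, and
`(S⊗S)δ(x) = (S⊗id)δ(S(x)) = (id⊗S)δ(S(x))`. -/
theorem averaging_Lie_coalgebra_of_preLie [FiniteDimensional k A]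
    (Δ : A →ₗ[k] A ⊗[k] A) (S : A →ₗ[k] A)
    (hco : ∀ x : A,
      coL Δ x - coR Δ x = τ12 k A (coL Δ x) - τ12 k A (coR Δ x))
    (hS : ∀ x : A,
      TensorProduct.map S S (Δ x) = TensorProduct.map S LinearMap.id (Δ (S x)) ∧
      TensorProduct.map S LinearMap.id (Δ (S x))
        = TensorProduct.map LinearMap.id S (Δ (S x))) :
    (∀ x : A, δof Δ x = -(τ k A (δof Δ x))) ∧
    (∀ x : A,
      TensorProduct.map LinearMap.id (δof Δ) (δof Δ x)
        + σ k A (TensorProduct.map LinearMap.id (δof Δ) (δof Δ x))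
        + σ k A (σ k A (TensorProduct.map LinearMap.id (δof Δ) (δof Δ x))) = 0) ∧
    (∀ x : A,
      TensorProduct.map S S (δof Δ x)
        = TensorProduct.map S LinearMap.id (δof Δ (S x)) ∧
      TensorProduct.map S LinearMap.id (δof Δ (S x))
        = TensorProduct.map LinearMap.id S (δof Δ (S x))) := by
  obtain ⟨⟨hantisymm, hcoJacobi⟩, haveraging⟩ :=
    averaging_Lie_coalgebra_of_preLie_general Δ S (fun x => (hco x).trans (map_sub _ _ _).symm) hS
  exact ⟨hantisymm, hcoJacobi, haveraging⟩

end Stmt15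
end

section
/- Let (A,∘,Δ,P,S) be a finite-dimensional averaging pre-Lie bialgebra. Define [x,y] := x∘y − y∘x and δ(x) := Δ(x) − τ(Δ(x)), where τ(a⊗b) = b⊗a. Then (A,[·,·],δ,P,S) is an averaging Lie bialgebra if and only if (A,∘,Δ) is balanced, i.e., writing Δ(x) = Σ x₍₁₎⊗x₍₂₎, one has Σ x₍₁₎∘y ⊗ x₍₂₎ + Σ y₍₂₎ ⊗ y₍₁₎∘x = Σ y₍₁₎∘x ⊗ y₍₂₎ + Σ x₍₂₎ ⊗ x₍₁₎∘y for all x,y ∈ A. -/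
open TensorProduct

namespace Stmt16

variable {k A : Type*} [Field k] [CharZero k] [AddCommGroup A] [Module k A]

/-- The flip `τ : A⊗A → A⊗A`, `τ(a⊗b) = b⊗a`. -/
noncomputable def τ (k A : Type*) [Field k] [AddCommGroup A] [Module k A] :
    A ⊗[k] A →ₗ[k] A ⊗[k] A :=
  (TensorProduct.comm k A A).toLinearMap

/-- `τ ⊗ id` on `(A⊗A)⊗A`. -/
noncomputable def τ12 (k A : Type*) [Field k] [AddCommGroup A] [Module k A] :
    (A ⊗[k] A) ⊗[k] A →ₗ[k] (A ⊗[k] A) ⊗[k] A :=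
  TensorProduct.map (τ k A) LinearMap.id

/-- `(Δ ⊗ id) ∘ Δ : A → (A⊗A)⊗A`. -/
noncomputable def coL (Δ : A →ₗ[k] A ⊗[k] A) : A →ₗ[k] (A ⊗[k] A) ⊗[k] A :=
  (TensorProduct.map Δ LinearMap.id).comp Δ

/-- `(id ⊗ Δ) ∘ Δ : A → (A⊗A)⊗A` (re-associated). -/
noncomputable def coR (Δ : A →ₗ[k] A ⊗[k] A) : A →ₗ[k] (A ⊗[k] A) ⊗[k] A :=
  ((TensorProduct.assoc k A A A).symm.toLinearMap.comp
    (TensorProduct.map LinearMap.id Δ)).comp Δ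

/-- The cyclic permutation `σ : A⊗(A⊗A) → A⊗(A⊗A)`, `σ(x⊗(y⊗z)) = z⊗(x⊗y)`. -/
noncomputable def σ (k A : Type*) [Field k] [AddCommGroup A] [Module k A] :
    A ⊗[k] (A ⊗[k] A) →ₗ[k] A ⊗[k] (A ⊗[k] A) :=
  (TensorProduct.comm k (A ⊗[k] A) A).toLinearMap.comp
    (TensorProduct.assoc k A A A).symm.toLinearMap

/-- `δ := Δ − τ∘Δ`. -/
noncomputable def δof (Δ : A →ₗ[k] A ⊗[k] A) : A →ₗ[k] A ⊗[k] A :=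
  Δ - (τ k A).comp Δ

/-- The commutator bracket `[x,y] := x∘y − y∘x`. -/
def brk (mul : A →ₗ[k] A →ₗ[k] A) (x y : A) : A := mul x y - mul y x

/-- `ad_x = L_x − R_x` as an endomorphism. -/
def ad (mul : A →ₗ[k] A →ₗ[k] A) (x : A) : A →ₗ[k] A := mul x - mul.flip x

/-!
Every compatibility condition between an operation and the maps `P`, `S` is additive in the
operation, so the conditions for `[·,·]` and `δ` follow from those for `∘`, `Δ` and their opposites.
The Jacobi and co-Jacobi identities hold because antisymmetrizing a (co)associator that is symmetric
in two slots gives zero. What is left is the cocycle condition. Write `ad_x = L_x - R_x` and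
apply `1 - τ` to the cocycle condition for `Δ`, with `L_x = ad_x + R_x`: the part involving only
`ad` yields the cocycle condition for `δ`, and the remaining term is
`(1 - τ)((R_x ⊗ 1)Δ(y) - (R_y ⊗ 1)Δ(x))`, which vanishes exactly when the bialgebra is balanced.
-/

section General

variable {R M : Type*} [CommRing R] [AddCommGroup M] [Module R M]

/-- The commutator `[x,y] = x∘y - y∘x` of a bilinear product, as a bilinear map; its partial
application at `x` is `ad_x = L_x - R_x`. -/
def commutator (mul : M →ₗ[R] M →ₗ[R] M) : M →ₗ[R] M →ₗ[R] M := mul - mul.flip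

/-- The cocommutator `δ = Δ - τ∘Δ` of a coproduct. -/
noncomputable def cocommutator (Δ : M →ₗ[R] M ⊗[R] M) : M →ₗ[R] M ⊗[R] M :=
  Δ - (TensorProduct.comm R M M).toLinearMap ∘ₗ Δ

lemma cocommutator_apply (Δ : M →ₗ[R] M ⊗[R] M) (x : M) :
    cocommutator Δ x = Δ x - TensorProduct.comm R M M (Δ x) := rfl

/-- The left pre-Lie identity: the associator is symmetric in its first two arguments. -/
def IsPreLie (mul : M →ₗ[R] M →ₗ[R] M) : Prop :=
  ∀ x y z : M, mul (mul x y) z - mul x (mul y z) = mul (mul y x) z - mul y (mul x z)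

/-- A Lie bracket: alternating and satisfying the Jacobi identity. -/
def IsLieBracket (b : M →ₗ[R] M →ₗ[R] M) : Prop :=
  (∀ x : M, b x x = 0) ∧ ∀ x y z : M, b (b x y) z + b (b y z) x + b (b z x) y = 0

lemma IsPreLie.isLieBracket_commutator {mul : M →ₗ[R] M →ₗ[R] M} (h : IsPreLie mul) :
    IsLieBracket (commutator mul) := by
  refine ⟨fun x => sub_self _, fun x y z => ?_⟩
  simp only [commutator, LinearMap.sub_apply, LinearMap.flip_apply, map_sub]
  linear_combination (norm := abel) h x y z + h y z x + h z x y

/-- The coassociator `(Δ ⊗ id)Δ - (id ⊗ Δ)Δ`, with values in `(M ⊗ M) ⊗ M`. -/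
noncomputable def coassociator (Δ : M →ₗ[R] M ⊗[R] M) : M →ₗ[R] (M ⊗[R] M) ⊗[R] M :=
  Δ.rTensor M ∘ₗ Δ -
    ((TensorProduct.assoc R M M M).symm.toLinearMap ∘ₗ Δ.lTensor M) ∘ₗ Δ

/-- The pre-Lie coalgebra identity: the coassociator is symmetric in its first two factors. -/
def IsPreLieCoalgebra (Δ : M →ₗ[R] M ⊗[R] M) : Prop :=
  ∀ x : M, coassociator Δ x =
    (TensorProduct.comm R M M).toLinearMap.rTensor M (coassociator Δ x)

variable (R M) in
/-- The cyclic permutation `x ⊗ (y ⊗ z) ↦ z ⊗ (x ⊗ y)`. -/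
noncomputable def rotate : M ⊗[R] (M ⊗[R] M) →ₗ[R] M ⊗[R] (M ⊗[R] M) :=
  (TensorProduct.comm R (M ⊗[R] M) M).toLinearMap ∘ₗ
    (TensorProduct.assoc R M M M).symm.toLinearMap

variable (R M) in
/-- The sum of the three cyclic permutations of `M ⊗ (M ⊗ M)`, used to state co-Jacobi. -/
noncomputable def cyclicSum : M ⊗[R] (M ⊗[R] M) →ₗ[R] M ⊗[R] (M ⊗[R] M) :=
  LinearMap.id + rotate R M + rotate R M ∘ₗ rotate R M

/-- A Lie cobracket: skew-symmetric and satisfying the co-Jacobi identity. Skew-symmetry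
`δ = -τδ` is weaker than being co-alternating when `2` is not invertible. -/
def IsLieCobracket (δ : M →ₗ[R] M ⊗[R] M) : Prop :=
  (∀ x : M, δ x = -TensorProduct.comm R M M (δ x)) ∧
    ∀ x : M, cyclicSum R M (δ.lTensor M (δ x)) = 0

lemma cyclicSum_tmul (a b c : M) :
    cyclicSum R M (a ⊗ₜ (b ⊗ₜ c)) = a ⊗ₜ (b ⊗ₜ c) + c ⊗ₜ (a ⊗ₜ b) + b ⊗ₜ (c ⊗ₜ a) := rfl

lemma cyclicSum_comm (t : (M ⊗[R] M) ⊗[R] M) :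
    cyclicSum R M (TensorProduct.comm R (M ⊗[R] M) M t) =
      cyclicSum R M (TensorProduct.assoc R M M M t) := by
  suffices h : cyclicSum R M ∘ₗ (TensorProduct.comm R (M ⊗[R] M) M).toLinearMap =
      cyclicSum R M ∘ₗ (TensorProduct.assoc R M M M).toLinearMap from LinearMap.congr_fun h t
  refine TensorProduct.ext_threefold fun a b c => ?_
  simp only [LinearMap.comp_apply, LinearEquiv.coe_coe, TensorProduct.comm_tmul,
    TensorProduct.assoc_tmul, cyclicSum_tmul]
  abel

-- The two transpositions involved differ by a cyclic permutation.
lemma cyclicSum_lTensor_comm_assoc (t : (M ⊗[R] M) ⊗[R] M) :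
    cyclicSum R M ((TensorProduct.comm R M M).toLinearMap.lTensor M
        (TensorProduct.assoc R M M M t)) =
      cyclicSum R M (TensorProduct.assoc R M M M
        ((TensorProduct.comm R M M).toLinearMap.rTensor M t)) := by
  suffices h : cyclicSum R M ∘ₗ (TensorProduct.comm R M M).toLinearMap.lTensor M ∘ₗ
        (TensorProduct.assoc R M M M).toLinearMap =
      cyclicSum R M ∘ₗ (TensorProduct.assoc R M M M).toLinearMap ∘ₗ
        (TensorProduct.comm R M M).toLinearMap.rTensor M from LinearMap.congr_fun h t
  refine TensorProduct.ext_threefold fun a b c => ?_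
  simp only [LinearMap.comp_apply, LinearEquiv.coe_coe, TensorProduct.comm_tmul,
    TensorProduct.assoc_tmul, LinearMap.lTensor_tmul, LinearMap.rTensor_tmul, cyclicSum_tmul]
  abel

lemma lTensor_cocommutator (Δ : M →ₗ[R] M ⊗[R] M) (t : M ⊗[R] M) :
    (cocommutator Δ).lTensor M t = Δ.lTensor M t -
      (TensorProduct.comm R M M).toLinearMap.lTensor M (Δ.lTensor M t) := by
  rw [cocommutator, LinearMap.lTensor_sub, LinearMap.lTensor_comp]
  rfl

-- The right-hand side is minus the antisymmetrization of the coassociator over all of `S₃`.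
lemma cyclicSum_lTensor_cocommutator (Δ : M →ₗ[R] M ⊗[R] M) (x : M) :
    cyclicSum R M ((cocommutator Δ).lTensor M (cocommutator Δ x)) =
      cyclicSum R M (TensorProduct.assoc R M M M
        ((TensorProduct.comm R M M).toLinearMap.rTensor M (coassociator Δ x) -
          coassociator Δ x)) := by
  obtain ⟨t, ht⟩ := (TensorProduct.assoc R M M M).surjective (Δ.lTensor M (Δ x))
  have hcoassoc : coassociator Δ x = Δ.rTensor M (Δ x) - t := by
    simp only [coassociator, LinearMap.sub_apply, LinearMap.comp_apply, LinearEquiv.coe_coe, ← ht,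
      LinearEquiv.symm_apply_apply]
  simp only [lTensor_cocommutator, cocommutator_apply, map_sub]
  simp only [LinearMap.lTensor_comm, ← ht, cyclicSum_comm, cyclicSum_lTensor_comm_assoc, hcoassoc,
    map_sub]
  abel

lemma IsPreLieCoalgebra.isLieCobracket_cocommutator {Δ : M →ₗ[R] M ⊗[R] M}
    (h : IsPreLieCoalgebra Δ) : IsLieCobracket (cocommutator Δ) := by
  refine ⟨fun x => ?_, fun x => ?_⟩
  · simp only [cocommutator_apply, map_sub, TensorProduct.comm_comm, neg_sub]
  · rw [cyclicSum_lTensor_cocommutator, ← h x, sub_self, map_zero, map_zero]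

/-- The compatibility `b(P x, Q y) = Q(b(P x, y)) = Q(b(x, Q y))`. For `Q = P` it says that `P` is
an averaging operator for `b`; for `Q = S` it is one of the `S`-admissibility conditions. -/
def IsAdmissible (b : M →ₗ[R] M →ₗ[R] M) (P Q : M →ₗ[R] M) : Prop :=
  ∀ x y : M, b (P x) (Q y) = Q (b (P x) y) ∧ Q (b (P x) y) = Q (b x (Q y))

lemma IsAdmissible.sub {b b' : M →ₗ[R] M →ₗ[R] M} {P Q : M →ₗ[R] M}
    (h : IsAdmissible b P Q) (h' : IsAdmissible b' P Q) : IsAdmissible (b - b') P Q := by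
  intro x y
  simp only [LinearMap.sub_apply, map_sub]
  exact ⟨congrArg₂ _ (h x y).1 (h' x y).1, congrArg₂ _ (h x y).2 (h' x y).2⟩

lemma IsAdmissible.flip {b : M →ₗ[R] M →ₗ[R] M} {P : M →ₗ[R] M} (h : IsAdmissible b P P) :
    IsAdmissible b.flip P P :=
  fun x y => ⟨(h y x).1.trans (h y x).2, (h y x).2.symm⟩

/-- The compatibility `(S ⊗ Q)Δ(x) = (S ⊗ id)Δ(Q x) = (id ⊗ Q)Δ(Q x)`, dual to `IsAdmissible`. For
`Q = S` it says that `S` is an averaging operator for the coproduct `Δ`. -/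
def IsCoadmissible (Δ : M →ₗ[R] M ⊗[R] M) (S Q : M →ₗ[R] M) : Prop :=
  ∀ x : M, TensorProduct.map S Q (Δ x) = S.rTensor M (Δ (Q x)) ∧
    S.rTensor M (Δ (Q x)) = Q.lTensor M (Δ (Q x))

lemma IsCoadmissible.sub {Δ Δ' : M →ₗ[R] M ⊗[R] M} {S Q : M →ₗ[R] M}
    (h : IsCoadmissible Δ S Q) (h' : IsCoadmissible Δ' S Q) : IsCoadmissible (Δ - Δ') S Q := by
  intro x
  simp only [LinearMap.sub_apply, map_sub]
  exact ⟨congrArg₂ _ (h x).1 (h' x).1, congrArg₂ _ (h x).2 (h' x).2⟩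

lemma isCoadmissible_comm_comp_iff {Δ : M →ₗ[R] M ⊗[R] M} {S Q : M →ₗ[R] M} :
    IsCoadmissible ((TensorProduct.comm R M M).toLinearMap ∘ₗ Δ) S Q ↔
      ∀ x : M, TensorProduct.map Q S (Δ x) = S.lTensor M (Δ (Q x)) ∧
        S.lTensor M (Δ (Q x)) = Q.rTensor M (Δ (Q x)) := by
  simp only [IsCoadmissible, LinearMap.comp_apply, LinearEquiv.coe_coe, TensorProduct.map_comm,
    LinearMap.rTensor_comm, LinearMap.lTensor_comm, EmbeddingLike.apply_eq_iff_eq]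

lemma IsCoadmissible.comm_comp {Δ : M →ₗ[R] M ⊗[R] M} {S : M →ₗ[R] M}
    (h : IsCoadmissible Δ S S) :
    IsCoadmissible ((TensorProduct.comm R M M).toLinearMap ∘ₗ Δ) S S :=
  isCoadmissible_comm_comp_iff.2 fun x => ⟨(h x).1.trans (h x).2, (h x).2.symm⟩

/-- The operator `l x ⊗ id + id ⊗ r x` on `M ⊗ M`: the action of `x` on the tensor product of two
representations `l` and `r` on `M`. -/
noncomputable def tensorAction (l r : M →ₗ[R] M →ₗ[R] M) (x : M) : M ⊗[R] M →ₗ[R] M ⊗[R] M :=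
  (l x).rTensor M + (r x).lTensor M

/-- The 1-cocycle condition for `Δ` over the bracket `b`, where `x` acts on `M ⊗ M` by
`l x ⊗ id + id ⊗ r x`. A Lie bialgebra has `l = r = b`; for a pre-Lie bialgebra `l` is left
multiplication and `r = b` is the commutator. -/
def IsCocycle (b l r : M →ₗ[R] M →ₗ[R] M) (Δ : M →ₗ[R] M ⊗[R] M) : Prop :=
  ∀ x y : M, Δ (b x y) = tensorAction l r x (Δ y) - tensorAction l r y (Δ x)

/-- The balance condition on a product and a coproduct, which makes the cocommutator a cocycle for
the commutator. -/
def IsBalanced (mul : M →ₗ[R] M →ₗ[R] M) (Δ : M →ₗ[R] M ⊗[R] M) : Prop :=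
  ∀ x y : M, (mul.flip y).rTensor M (Δ x) +
      TensorProduct.comm R M M ((mul.flip x).rTensor M (Δ y)) =
    (mul.flip x).rTensor M (Δ y) + TensorProduct.comm R M M ((mul.flip y).rTensor M (Δ x))

lemma tensorAction_comm (l r : M →ₗ[R] M →ₗ[R] M) (x : M) (t : M ⊗[R] M) :
    tensorAction l r x (TensorProduct.comm R M M t) =
      TensorProduct.comm R M M (tensorAction r l x t) := by
  simp only [tensorAction, LinearMap.add_apply, LinearMap.rTensor_comm, LinearMap.lTensor_comm,
    map_add, add_comm]

lemma tensorAction_mul_commutator (mul : M →ₗ[R] M →ₗ[R] M) (x : M) (t : M ⊗[R] M) :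
    tensorAction mul (commutator mul) x t =
      tensorAction (commutator mul) (commutator mul) x t + (mul.flip x).rTensor M t := by
  simp only [tensorAction, commutator, LinearMap.add_apply, LinearMap.sub_apply,
    LinearMap.rTensor_sub]
  abel

lemma IsCocycle.cocommutator_commutator {mul : M →ₗ[R] M →ₗ[R] M} {Δ : M →ₗ[R] M ⊗[R] M}
    (h : IsCocycle (commutator mul) mul (commutator mul) Δ) (x y : M) :
    cocommutator Δ (commutator mul x y) =
      (tensorAction (commutator mul) (commutator mul) x (cocommutator Δ y) -
        tensorAction (commutator mul) (commutator mul) y (cocommutator Δ x)) +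
      (((mul.flip x).rTensor M (Δ y) +
          TensorProduct.comm R M M ((mul.flip y).rTensor M (Δ x))) -
        ((mul.flip y).rTensor M (Δ x) +
          TensorProduct.comm R M M ((mul.flip x).rTensor M (Δ y)))) := by
  simp only [cocommutator_apply, h x y, tensorAction_mul_commutator, tensorAction_comm, map_sub,
    map_add]
  abel

lemma IsCocycle.cocommutator_iff_isBalanced {mul : M →ₗ[R] M →ₗ[R] M} {Δ : M →ₗ[R] M ⊗[R] M}
    (h : IsCocycle (commutator mul) mul (commutator mul) Δ) :
    IsCocycle (commutator mul) (commutator mul) (commutator mul) (cocommutator Δ) ↔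
      IsBalanced mul Δ := by
  refine forall₂_congr fun x y => ?_
  rw [h.cocommutator_commutator, add_eq_left, sub_eq_zero, eq_comm]

/-- An averaging Lie bialgebra `(M, b, δ, P, S)`: a Lie bialgebra in which `P` is averaging for `b`,
`S` is averaging for `δ`, and both pairs are compatible. -/
def IsAveragingLieBialgebra (b : M →ₗ[R] M →ₗ[R] M) (δ : M →ₗ[R] M ⊗[R] M)
    (P S : M →ₗ[R] M) : Prop :=
  IsLieBracket b ∧ IsLieCobracket δ ∧ IsCocycle b b b δ ∧
    IsAdmissible b P P ∧ IsCoadmissible δ S S ∧ IsAdmissible b P S ∧ IsCoadmissible δ S P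

theorem averaging_Lie_bialgebra_iff_balanced_general
    {mul : M →ₗ[R] M →ₗ[R] M} {Δ : M →ₗ[R] M ⊗[R] M} {P S : M →ₗ[R] M}
    (hmul : IsPreLie mul) (hP : IsAdmissible mul P P)
    (hΔ : IsPreLieCoalgebra Δ) (hS : IsCoadmissible Δ S S)
    (hcocycle : IsCocycle (commutator mul) mul (commutator mul) Δ)
    (hPS : IsAdmissible mul P S) (hPS_flip : IsAdmissible mul.flip P S)
    (hSP : IsCoadmissible Δ S P)
    (hSP_comm : IsCoadmissible ((TensorProduct.comm R M M).toLinearMap ∘ₗ Δ) S P) :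
    IsAveragingLieBialgebra (commutator mul) (cocommutator Δ) P S ↔ IsBalanced mul Δ := by
  rw [← hcocycle.cocommutator_iff_isBalanced]
  exact ⟨fun h => h.2.2.1, fun h => ⟨hmul.isLieBracket_commutator,
    hΔ.isLieCobracket_cocommutator, h, hP.sub hP.flip, hS.sub hS.comm_comp,
    hPS.sub hPS_flip, hSP.sub hSP_comm⟩⟩

end General

/-- Let `(A,∘,Δ,P,S)` be a finite-dimensional averaging pre-Lie bialgebra.  With
`[x,y] := x∘y − y∘x` and `δ := Δ − τΔ`, the quintuple `(A,[·,·],δ,P,S)` is an averaging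
Lie bialgebra if and only if `(A,∘,Δ)` is balanced. -/
theorem averaging_Lie_bialgebra_iff_balanced [FiniteDimensional k A]
    (mul : A →ₗ[k] A →ₗ[k] A) (Δ : A →ₗ[k] A ⊗[k] A) (P S : A →ₗ[k] A)
    -- `((A,∘),P)` is an averaging pre-Lie algebra
    (hpre : ∀ x y z : A,
      mul (mul x y) z - mul x (mul y z) = mul (mul y x) z - mul y (mul x z))
    (havg1 : ∀ x y : A, mul (P x) (P y) = P (mul (P x) y))
    (havg2 : ∀ x y : A, mul (P x) (P y) = P (mul x (P y)))
    -- `((A,Δ),S)` is an averaging pre-Lie coalgebra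
    (hco : ∀ x : A,
      coL Δ x - coR Δ x = τ12 k A (coL Δ x) - τ12 k A (coR Δ x))
    (hcoavg : ∀ x : A,
      TensorProduct.map S S (Δ x) = TensorProduct.map S LinearMap.id (Δ (S x)) ∧
      TensorProduct.map S LinearMap.id (Δ (S x))
        = TensorProduct.map LinearMap.id S (Δ (S x)))
    -- `(A,∘,Δ)` is a pre-Lie bialgebra
    (hbi1 : ∀ x y : A,
      Δ (mul x y - mul y x)
        = (TensorProduct.map (mul x) LinearMap.id (Δ y)
            + TensorProduct.map LinearMap.id (ad mul x) (Δ y))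
          - (TensorProduct.map (mul y) LinearMap.id (Δ x)
            + TensorProduct.map LinearMap.id (ad mul y) (Δ x)))
    (hbi2 : ∀ x y : A,
      Δ (mul x y) - τ k A (Δ (mul x y))
        = TensorProduct.map LinearMap.id (mul.flip y) (Δ x)
          - τ k A (TensorProduct.map LinearMap.id (mul.flip y) (Δ x))
          + (TensorProduct.map (mul x) LinearMap.id (Δ y)
              + TensorProduct.map LinearMap.id (mul x) (Δ y))
          - τ k A (TensorProduct.map (mul x) LinearMap.id (Δ y)
              + TensorProduct.map LinearMap.id (mul x) (Δ y)))
    -- `((A,∘),P)` is `S`-admissible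
    (hadm1 : ∀ x y : A,
      mul (P x) (S y) = S (mul (P x) y) ∧ S (mul (P x) y) = S (mul x (S y)))
    (hadm2 : ∀ x y : A,
      mul (S x) (P y) = S (mul x (P y)) ∧ S (mul x (P y)) = S (mul (S x) y))
    -- `((A*,Δ*),S*)` is `P*`-admissible
    (hPS1 : ∀ x : A,
      TensorProduct.map P S (Δ x) = TensorProduct.map LinearMap.id S (Δ (P x)) ∧
      TensorProduct.map LinearMap.id S (Δ (P x))
        = TensorProduct.map P LinearMap.id (Δ (P x)))
    (hPS2 : ∀ x : A,
      TensorProduct.map S P (Δ x) = TensorProduct.map S LinearMap.id (Δ (P x)) ∧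
      TensorProduct.map S LinearMap.id (Δ (P x))
        = TensorProduct.map LinearMap.id P (Δ (P x))) :
    -- `(A,[·,·],δ,P,S)` is an averaging Lie bialgebra iff `(A,∘,Δ)` is balanced
    (((∀ x : A, brk mul x x = 0) ∧
      (∀ x y z : A,
        brk mul (brk mul x y) z + brk mul (brk mul y z) x + brk mul (brk mul z x) y = 0)) ∧
     ((∀ x : A, δof Δ x = -(τ k A (δof Δ x))) ∧
      (∀ x : A,
        TensorProduct.map LinearMap.id (δof Δ) (δof Δ x)
          + σ k A (TensorProduct.map LinearMap.id (δof Δ) (δof Δ x))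
          + σ k A (σ k A (TensorProduct.map LinearMap.id (δof Δ) (δof Δ x))) = 0)) ∧
     (∀ x y : A,
        δof Δ (brk mul x y)
          = (TensorProduct.map (ad mul x) LinearMap.id (δof Δ y)
              + TensorProduct.map LinearMap.id (ad mul x) (δof Δ y))
            - (TensorProduct.map (ad mul y) LinearMap.id (δof Δ x)
              + TensorProduct.map LinearMap.id (ad mul y) (δof Δ x))) ∧
     (∀ x y : A,
        brk mul (P x) (P y) = P (brk mul (P x) y) ∧
        P (brk mul (P x) y) = P (brk mul x (P y))) ∧
     (∀ x : A,
        TensorProduct.map S S (δof Δ x)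
          = TensorProduct.map S LinearMap.id (δof Δ (S x)) ∧
        TensorProduct.map S LinearMap.id (δof Δ (S x))
          = TensorProduct.map LinearMap.id S (δof Δ (S x))) ∧
     (∀ x y : A,
        brk mul (P x) (S y) = S (brk mul (P x) y) ∧
        S (brk mul (P x) y) = S (brk mul x (S y))) ∧
     (∀ x : A,
        TensorProduct.map S P (δof Δ x)
          = TensorProduct.map S LinearMap.id (δof Δ (P x)) ∧
        TensorProduct.map S LinearMap.id (δof Δ (P x))
          = TensorProduct.map LinearMap.id P (δof Δ (P x))))
      ↔
    (∀ x y : A,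
      TensorProduct.map (mul.flip y) LinearMap.id (Δ x)
          + τ k A (TensorProduct.map (mul.flip x) LinearMap.id (Δ y))
        = TensorProduct.map (mul.flip x) LinearMap.id (Δ y)
          + τ k A (TensorProduct.map (mul.flip y) LinearMap.id (Δ x))) :=
  averaging_Lie_bialgebra_iff_balanced_general hpre
    (fun x y => ⟨havg1 x y, (havg1 x y).symm.trans (havg2 x y)⟩)
    (fun x => (hco x).trans (map_sub _ _ _).symm) hcoavg hbi1 hadm1 (fun x y => hadm2 y x) hPS2
    (isCoadmissible_comm_comp_iff.2 hPS1)

end Stmt16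
end
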